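/- Let G be a group that is not virtually cyclic. Then G is acylindrically hyperbolic if and only if there exist a completely Hausdorff topological space M with at least 3 points, an action of G on M by homeomorphisms satisfying condition (C), and an element g ∈ G having north–south dynamics on M. -/

import Mathlib

/-! From an acylindrical action on a hyperbolic space `S` to dynamics: `M` is the Gromov boundary of
`S`, topologized by the uniformity of large Gromov products (`exists_boundary`). If `g` carries two
distinct boundary points close to `u` and two others close to `v`, then the inverse of `g` carries
points far out on the way to `u` and to `v` near one fixed geodesic. By acylindricity there are
finitely many such `g`, which is condition (C) (`condC_core`). A non-elementary action contains a
loxodromic element (`exists_lox`), and such an element has north–south dynamics on the boundary.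

From dynamics to an acylindrical action: let `g` have north–south dynamics with fixed points `x`
and `y`. Condition (C) provides a neighbourhood `P` of `x` and a power `t` of `g` such that the
translates of the wall with sides `P` and `M \ tP` satisfy two combinatorial properties
(`WallData`): of the four intersections of sides of two walls at least one is empty, and two pairs
of distinct points are separated, in this sense, by finitely many walls. The pair `{x, y}` plays the
role of the axis of `t`, and the axes are its translates. The number of walls along an axis `Y` that
separate the axis `X` from the axis `Z`, up to an additive constant, is a projection distance
`d Y X Z` in the sense of Bestvina, Bromberg and Fujiwara (`WallData.wproj`): it satisfies the
triangle inequality, the Behrstock inequality and a finiteness condition. The key estimate behind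
this is that an axis following another one for a long time coincides with it (`follow_long`).

Such projection data are replaced by data for which the Behrstock inequality holds in an exact form
(`WProj.strong`): `d Y X Z` is the supremum of its values over classes of vertices that are
indistinguishable from `Y`. For these, the graph joining `X` to `Z` when no axis sees a large
distance between them has the bottleneck property that a geodesic passes near every vertex seen
between its endpoints; hence it is hyperbolic and the action on it is acylindrical (`SProj.hyp`,
`SProj.acyl`), the common stabilizer of two distinct axes being boundedly finite. As `G` is not
virtually cyclic, there are two distinct axes, and high powers of `t` and of a conjugate of `t`
rotate about them; their product translates along a chain of axes, so that the limit set has at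
least three points (`SProj.nonelem`). -/

/-- A geodesic segment from `u` to `v`: the image of an isometric embedding of
`[0, dist u v]` sending the endpoints to `u` and `v`. -/
def IsGeodesicSegment {S : Type*} [MetricSpace S] (Γ : Set S) (u v : S) : Prop :=
  ∃ γ : ℝ → S, γ 0 = u ∧ γ (dist u v) = v ∧
    (∀ s ∈ Set.Icc (0 : ℝ) (dist u v), ∀ t ∈ Set.Icc (0 : ℝ) (dist u v),
      dist (γ s) (γ t) = |s - t|) ∧
    Γ = γ '' Set.Icc (0 : ℝ) (dist u v)

/-- A geodesic metric space: every pair of points is joined by a geodesic segment. -/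
def GeodesicSpace (S : Type*) [MetricSpace S] : Prop :=
  ∀ u v : S, ∃ Γ : Set S, IsGeodesicSegment Γ u v

/-- `δ`-hyperbolicity: every geodesic triangle is `δ`-slim. -/
def DeltaHyperbolic (S : Type*) [MetricSpace S] (δ : ℝ) : Prop :=
  ∀ x y z : S, ∀ Γ₁ Γ₂ Γ₃ : Set S,
    IsGeodesicSegment Γ₁ x y → IsGeodesicSegment Γ₂ y z → IsGeodesicSegment Γ₃ z x →
    ∀ p ∈ Γ₁, Metric.infDist p (Γ₂ ∪ Γ₃) ≤ δ

/-- A (left) action of a group `G` on a set `M`, given as a plain function. -/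
def IsAction {G M : Type*} [Group G] (act : G → M → M) : Prop :=
  (∀ x : M, act 1 x = x) ∧ ∀ (g h : G) (x : M), act (g * h) x = act g (act h x)

/-- An action by homeomorphisms on a topological space. -/
def IsActionByHomeos {G M : Type*} [Group G] [TopologicalSpace M] (act : G → M → M) : Prop :=
  IsAction act ∧ ∀ g : G, Continuous (act g)

/-- An action by isometries on a metric space. -/
def IsIsometricAction {G S : Type*} [Group G] [MetricSpace S] (act : G → S → S) : Prop :=
  IsAction act ∧ ∀ g : G, Isometry (act g)

theorem IsAction.injective {G M : Type*} [Group G] {act : G → M → M}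
    (h : IsAction act) (g : G) : Function.Injective (act g) := by
  intro a b hab
  have h2 := congrArg (act g⁻¹) hab
  rw [← h.2 g⁻¹ g a, ← h.2 g⁻¹ g b, inv_mul_cancel, h.1, h.1] at h2
  exact h2

/-- The Gromov product of `x` and `y` with respect to the basepoint `e`. -/
noncomputable def gprod {S : Type*} [MetricSpace S] (e x y : S) : ℝ :=
  (dist x e + dist y e - dist x y) / 2

/-- A sequence converges to infinity if its pairwise Gromov products tend to infinity. -/
def ConvToInfty {S : Type*} [MetricSpace S] (e : S) (s : ℕ → S) : Prop :=
  Filter.Tendsto (fun p : ℕ × ℕ => gprod e (s p.1) (s p.2)) Filter.atTop Filter.atTop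

/-- The type of sequences in `S` converging to infinity. -/
def BSeq (S : Type*) [MetricSpace S] (e : S) := {s : ℕ → S // ConvToInfty e s}

/-- Two sequences converging to infinity are equivalent if their mutual Gromov
products tend to infinity. -/
def bequiv {S : Type*} [MetricSpace S] (e : S) (s t : BSeq S e) : Prop :=
  Filter.Tendsto (fun n => gprod e (s.1 n) (t.1 n)) Filter.atTop Filter.atTop

/-- The Gromov boundary of `S` with respect to the basepoint `e`. -/
def GBoundary (S : Type*) [MetricSpace S] (e : S) := Quot (bequiv (S := S) e)

/-- A sequence in `S` tends to the boundary point `x`. -/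
def TendstoBd {S : Type*} [MetricSpace S] (e : S) (s : ℕ → S) (x : GBoundary S e) : Prop :=
  ∃ h : ConvToInfty e s, Quot.mk _ (⟨s, h⟩ : BSeq S e) = x

/-- The induced map on pairs. -/
def pairMap {M : Type*} (f : M → M) (p : M × M) : M × M := (f p.1, f p.2)

/-- Condition (C) for an action on a topological space. -/
def ConditionC {G M : Type*} [TopologicalSpace M] (act : G → M → M) : Prop :=
  ∀ u v : M × M, u.1 = u.2 → v.1 = v.2 → u ≠ v →
    ∃ U V : Set (M × M), IsOpen U ∧ IsOpen V ∧ u ∈ U ∧ v ∈ V ∧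
      ∀ a b : M × M, a.1 ≠ a.2 → b.1 ≠ b.2 → a ≠ b →
        ∃ A B : Set (M × M), IsOpen A ∧ IsOpen B ∧ a ∈ A ∧ b ∈ B ∧
          {g : G | (pairMap (act g) '' A ∩ U).Nonempty ∧
            (pairMap (act g) '' B ∩ V).Nonempty}.Finite

/-- Condition (C₁) for a pair of open sets `U, V`. -/
def CondC1 {G M : Type*} [TopologicalSpace M] (act : G → M → M) (U V : Set M) : Prop :=
  ∀ p q : M, p ≠ q →
    ∃ A B : Set M, IsOpen A ∧ IsOpen B ∧ p ∈ A ∧ q ∈ B ∧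
      {g : G | (act g '' A ∩ U).Nonempty ∧ (act g '' A ∩ V).Nonempty ∧
        (act g '' B ∩ U).Nonempty ∧ (act g '' B ∩ V).Nonempty}.Finite

/-- Condition (C₂) for a pair of open sets `U, V`. -/
def CondC2 {G M : Type*} [TopologicalSpace M] (act : G → M → M) (U V : Set M) : Prop :=
  ∀ p q r : M, p ≠ q → q ≠ r → p ≠ r →
    ∃ A B C : Set M, IsOpen A ∧ IsOpen B ∧ IsOpen C ∧ p ∈ A ∧ q ∈ B ∧ r ∈ C ∧
      {g : G | (act g '' A ∩ U).Nonempty ∧ (act g '' B ∩ V).Nonempty ∧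
        (act g '' C ∩ U).Nonempty ∧ (act g '' C ∩ V).Nonempty}.Finite

/-- Condition (C₃) for a pair of open sets `U, V`. -/
def CondC3 {G M : Type*} [TopologicalSpace M] (act : G → M → M) (U V : Set M) : Prop :=
  ∀ p q r s : M, p ≠ q → p ≠ r → p ≠ s → q ≠ r → q ≠ s → r ≠ s →
    ∃ A B C D : Set M, IsOpen A ∧ IsOpen B ∧ IsOpen C ∧ IsOpen D ∧
      p ∈ A ∧ q ∈ B ∧ r ∈ C ∧ s ∈ D ∧
      {g : G | (act g '' A ∩ U).Nonempty ∧ (act g '' B ∩ U).Nonempty ∧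
        (act g '' C ∩ V).Nonempty ∧ (act g '' D ∩ V).Nonempty}.Finite

/-- Two points `x, y` satisfy (C₁): some open sets `U ∋ x`, `V ∋ y` satisfy (C₁). -/
def PairC1 {G M : Type*} [TopologicalSpace M] (act : G → M → M) (x y : M) : Prop :=
  ∃ U V : Set M, IsOpen U ∧ IsOpen V ∧ x ∈ U ∧ y ∈ V ∧ CondC1 (G := G) act U V

/-- Two points `x, y` satisfy (C₂). -/
def PairC2 {G M : Type*} [TopologicalSpace M] (act : G → M → M) (x y : M) : Prop :=
  ∃ U V : Set M, IsOpen U ∧ IsOpen V ∧ x ∈ U ∧ y ∈ V ∧ CondC2 (G := G) act U V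

/-- Two points `x, y` satisfy (C₃). -/
def PairC3 {G M : Type*} [TopologicalSpace M] (act : G → M → M) (x y : M) : Prop :=
  ∃ U V : Set M, IsOpen U ∧ IsOpen V ∧ x ∈ U ∧ y ∈ V ∧ CondC3 (G := G) act U V

/-- `g` has north–south dynamics on `M` with fixed points `x ≠ y`. -/
def NorthSouthAt {G M : Type*} [Group G] [TopologicalSpace M] (act : G → M → M)
    (g : G) (x y : M) : Prop :=
  x ≠ y ∧ (∀ z : M, act g z = z ↔ z = x ∨ z = y) ∧
  ∀ U V : Set M, IsOpen U → IsOpen V → x ∈ U → y ∈ V →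
    ∃ N : ℕ, ∀ n : ℕ, N < n → act (g ^ n) '' Uᶜ ⊆ V

/-- `g` has north–south dynamics on `M`. -/
def NorthSouth {G M : Type*} [Group G] [TopologicalSpace M] (act : G → M → M) (g : G) : Prop :=
  ∃ x y : M, NorthSouthAt act g x y

/-- A completely Hausdorff space: distinct points are separated by open sets with
disjoint closures. -/
def CompletelyHausdorff (M : Type*) [TopologicalSpace M] : Prop :=
  ∀ u v : M, u ≠ v → ∃ U V : Set M, IsOpen U ∧ IsOpen V ∧ u ∈ U ∧ v ∈ V ∧
    closure U ∩ closure V = ∅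

/-- An acylindrical action on a metric space. -/
def AcylindricalAction {G S : Type*} [Group G] [MetricSpace S] (act : G → S → S) : Prop :=
  ∀ ε : ℝ, 0 < ε → ∃ (R : ℝ) (N : ℕ), 0 < R ∧ 0 < N ∧
    ∀ x y : S, R ≤ dist x y →
      {g : G | dist x (act g x) ≤ ε ∧ dist y (act g y) ≤ ε}.Finite ∧
      {g : G | dist x (act g x) ≤ ε ∧ dist y (act g y) ≤ ε}.ncard ≤ N

/-- The limit set of the action of `G` on the boundary of `S`. -/
def limitSet {G S : Type*} [Group G] [MetricSpace S] (act : G → S → S) (e : S) :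
    Set (GBoundary S e) :=
  {x | ∃ (s : S) (gs : ℕ → G), TendstoBd e (fun n => act (gs n) s) x}

/-- The action is non-elementary: the limit set has at least 3 points. -/
def NonelemAction {G S : Type*} [Group G] [MetricSpace S] (act : G → S → S) (e : S) : Prop :=
  ∃ x y z : GBoundary S e, x ∈ limitSet act e ∧ y ∈ limitSet act e ∧ z ∈ limitSet act e ∧
    x ≠ y ∧ y ≠ z ∧ x ≠ z

/-- A group is acylindrically hyperbolic if it admits a non-elementary acylindrical
isometric action on a geodesic Gromov hyperbolic space. -/
def AcylindricallyHyperbolic (G : Type*) [Group G] : Prop :=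
  ∃ (S : Type) (_i : MetricSpace S) (act : G → S → S) (δ : ℝ),
    0 ≤ δ ∧ GeodesicSpace S ∧ DeltaHyperbolic S δ ∧ IsIsometricAction act ∧
    AcylindricalAction act ∧ ∃ e : S, NonelemAction act e

/-- A group is virtually cyclic if it has a cyclic subgroup of finite index. -/
def VirtuallyCyclic (G : Type*) [Group G] : Prop :=
  ∃ H : Subgroup G, IsCyclic H ∧ H.index ≠ 0

namespace AHProof

/-! ### Gromov products and the four-point condition -/

section Hyperbolic

variable {S : Type*} [MetricSpace S]

/-- The four-point form of hyperbolicity, with constant `D`. -/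
def Hyp4 (S : Type*) [MetricSpace S] (D : ℝ) : Prop :=
  ∀ w x y z : S, min (gprod w x y) (gprod w y z) - D ≤ gprod w x z

theorem gprod_comm (e x y : S) : gprod e x y = gprod e y x := by
  unfold gprod; rw [dist_comm x y]; ring

theorem gprod_nonneg (e x y : S) : 0 ≤ gprod e x y := by
  unfold gprod
  have := dist_triangle_right x y e
  linarith

theorem gprod_le_left (e x y : S) : gprod e x y ≤ dist x e := by
  unfold gprod
  have := dist_triangle_left y e x
  linarith

theorem gprod_le_right (e x y : S) : gprod e x y ≤ dist y e := by
  rw [gprod_comm]; exact gprod_le_left e y x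

theorem gprod_self (e x : S) : gprod e x x = dist x e := by
  unfold gprod; simp

/-- Moving the second argument changes the product by at most the displacement. -/
theorem gprod_move_right (e x y y' : S) : gprod e x y - dist y y' ≤ gprod e x y' := by
  unfold gprod
  have h1 := dist_triangle y y' e
  have h2 := dist_triangle x y y'
  linarith

theorem gprod_move_base (e e' x y : S) : gprod e x y - dist e e' ≤ gprod e' x y := by
  unfold gprod
  have h1 := dist_triangle_right x e e'
  have h2 := dist_triangle_right y e e'
  linarith

theorem gprod_isometry {f : S → S} (hf : Isometry f) (e x y : S) :
    gprod (f e) (f x) (f y) = gprod e x y := by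
  unfold gprod; simp [hf.dist_eq]

theorem Hyp4.three {D : ℝ} (h : Hyp4 S D) {w x y z : S} {r : ℝ} (h1 : r ≤ gprod w x y)
    (h2 : r ≤ gprod w y z) : r - D ≤ gprod w x z := by
  have h3 := h w x y z
  have : r ≤ min (gprod w x y) (gprod w y z) := le_min h1 h2
  linarith

/-- If `(x·z)` is small then one of `(x·y)`, `(y·z)` is small. -/
theorem Hyp4.small {D : ℝ} (h : Hyp4 S D) {w x z : S} {r : ℝ} (h1 : gprod w x z ≤ r) (y : S) :
    gprod w x y ≤ r + D ∨ gprod w y z ≤ r + D := by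
  have h3 := h w x y z
  rcases min_choice (gprod w x y) (gprod w y z) with h4 | h4
  · left; linarith
  · right; linarith

theorem Hyp4.nonneg {D : ℝ} (h : Hyp4 S D) (e : S) : 0 ≤ D := by
  have h3 := h e e e e
  simp [gprod_self] at h3
  exact h3

theorem seg_dist {Γ : Set S} {u v p : S} (h : IsGeodesicSegment Γ u v) (hp : p ∈ Γ) :
    dist u p + dist p v = dist u v := by
  obtain ⟨γ, h0, h1, h2, rfl⟩ := h
  obtain ⟨t, ht, rfl⟩ := hp
  have hz : (0 : ℝ) ∈ Set.Icc (0 : ℝ) (dist u v) := ⟨le_refl _, dist_nonneg⟩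
  have ho : dist u v ∈ Set.Icc (0 : ℝ) (dist u v) := ⟨dist_nonneg, le_refl _⟩
  have h3 := h2 0 hz t ht
  have h4 := h2 t ht _ ho
  rw [h0] at h3
  rw [h1] at h4
  rw [h3, h4, abs_of_nonpos (by linarith [ht.1]), abs_of_nonpos (by linarith [ht.2])]
  ring

theorem seg_point {Γ : Set S} {u v : S} (h : IsGeodesicSegment Γ u v) {t : ℝ} (h0 : 0 ≤ t)
    (h1 : t ≤ dist u v) : ∃ p ∈ Γ, dist u p = t ∧ dist p v = dist u v - t := by
  have hh := h
  obtain ⟨γ, g0, g1, g2, rfl⟩ := h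
  have hz : (0 : ℝ) ∈ Set.Icc (0 : ℝ) (dist u v) := ⟨le_refl _, dist_nonneg⟩
  have hp : γ t ∈ γ '' Set.Icc (0 : ℝ) (dist u v) := ⟨t, ⟨h0, h1⟩, rfl⟩
  have h3 := g2 0 hz t ⟨h0, h1⟩
  rw [g0, abs_of_nonpos (by linarith)] at h3
  have h4 := seg_dist hh hp
  exact ⟨γ t, hp, by linarith, by linarith⟩

theorem seg_symm {Γ : Set S} {u v : S} (h : IsGeodesicSegment Γ u v) :
    IsGeodesicSegment Γ v u := by
  obtain ⟨γ, g0, g1, g2, rfl⟩ := h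
  refine ⟨fun t => γ (dist u v - t), ?_, ?_, ?_, ?_⟩
  · simpa using g1
  · simpa [dist_comm v u] using g0
  · intro s hs t ht
    rw [dist_comm v u] at hs ht
    have := g2 (dist u v - s) ⟨by linarith [hs.2], by linarith [hs.1]⟩ (dist u v - t)
      ⟨by linarith [ht.2], by linarith [ht.1]⟩
    rw [this, abs_sub_comm]
    congr 1; ring
  · ext p
    simp only [Set.mem_image, Set.mem_Icc, dist_comm v u]
    constructor
    · rintro ⟨t, ht, rfl⟩
      exact ⟨dist u v - t, ⟨by linarith [ht.2], by linarith [ht.1]⟩, by congr 1; ring⟩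
    · rintro ⟨t, ht, rfl⟩
      exact ⟨dist u v - t, ⟨by linarith [ht.2], by linarith [ht.1]⟩, rfl⟩

theorem seg_left {Γ : Set S} {u v : S} (h : IsGeodesicSegment Γ u v) : u ∈ Γ := by
  obtain ⟨γ, g0, g1, g2, rfl⟩ := h
  exact ⟨0, ⟨le_refl _, dist_nonneg⟩, g0⟩

theorem seg_right {Γ : Set S} {u v : S} (h : IsGeodesicSegment Γ u v) : v ∈ Γ :=
  seg_left (seg_symm h)

theorem seg_cont {γ : ℝ → S} {I : Set ℝ}
    (h : ∀ s ∈ I, ∀ t ∈ I, dist (γ s) (γ t) = |s - t|) : ContinuousOn γ I := by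
  rw [Metric.continuousOn_iff]
  intro s hs ε hε
  refine ⟨ε, hε, fun t ht hts => ?_⟩
  rw [h t ht s hs]
  exact hts

theorem seg_compact {Γ : Set S} {u v : S} (h : IsGeodesicSegment Γ u v) : IsCompact Γ := by
  obtain ⟨γ, g0, g1, g2, rfl⟩ := h
  exact isCompact_Icc.image_of_continuousOn (seg_cont g2)

theorem seg_conn {Γ : Set S} {u v : S} (h : IsGeodesicSegment Γ u v) : IsPreconnected Γ := by
  obtain ⟨γ, g0, g1, g2, rfl⟩ := h
  exact isPreconnected_Icc.image _ (seg_cont g2)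

theorem slim {δ : ℝ} (h : DeltaHyperbolic S δ) {x y z : S} {Γ₁ Γ₂ Γ₃ : Set S}
    (h1 : IsGeodesicSegment Γ₁ x y) (h2 : IsGeodesicSegment Γ₂ y z)
    (h3 : IsGeodesicSegment Γ₃ z x) {p : S} (hp : p ∈ Γ₁) :
    (∃ q ∈ Γ₂, dist p q ≤ δ) ∨ ∃ q ∈ Γ₃, dist p q ≤ δ := by
  have h4 := h x y z Γ₁ Γ₂ Γ₃ h1 h2 h3 p hp
  have hc : IsCompact (Γ₂ ∪ Γ₃) := (seg_compact h2).union (seg_compact h3)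
  obtain ⟨q, hq, hd⟩ := hc.exists_infDist_eq_dist ⟨y, Or.inl (seg_left h2)⟩ p
  rw [hd] at h4
  rcases hq with hq | hq
  · exact Or.inl ⟨q, hq, h4⟩
  · exact Or.inr ⟨q, hq, h4⟩

theorem gprod_le_of_mem {Γ : Set S} {y z p : S} (h : IsGeodesicSegment Γ y z) (hp : p ∈ Γ)
    (w : S) : gprod w y z ≤ dist w p := by
  have h1 := seg_dist h hp
  unfold gprod
  have h2 := dist_triangle_right y w p
  have h3 := dist_triangle_right z w p
  rw [dist_comm z p] at h3
  linarith

/-- A geodesic `[y,z]` comes within `(y·z)_w + 2δ` of `w`: by connectedness some point of it is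
`δ`-close to both of the other two sides of a triangle `w, y, z`. -/
theorem exists_mem_dist_le {δ : ℝ} (h0 : 0 ≤ δ) (hg : GeodesicSpace S) (h : DeltaHyperbolic S δ)
    {Γ : Set S} {y z : S} (hs : IsGeodesicSegment Γ y z) (w : S) :
    ∃ p ∈ Γ, dist w p ≤ gprod w y z + 2 * δ := by
  obtain ⟨A, hA⟩ := hg z w
  obtain ⟨B, hB⟩ := hg w y
  have key : (Γ ∩ ({p | Metric.infDist p A ≤ δ} ∩ {p | Metric.infDist p B ≤ δ})).Nonempty := by
    refine (isPreconnected_closed_iff.1 (seg_conn hs)) _ _ ?_ ?_ ?_ ?_ ?_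
    · exact isClosed_le (Metric.continuous_infDist_pt A) continuous_const
    · exact isClosed_le (Metric.continuous_infDist_pt B) continuous_const
    · intro p hp
      rcases slim h hs hA hB hp with ⟨q, hq, hd⟩ | ⟨q, hq, hd⟩
      · exact Or.inl ((Metric.infDist_le_dist_of_mem hq).trans hd)
      · exact Or.inr ((Metric.infDist_le_dist_of_mem hq).trans hd)
    · refine ⟨z, seg_right hs, ?_⟩
      have := Metric.infDist_zero_of_mem (seg_left hA)
      simp only [Set.mem_ofPred_eq, this, h0]
    · refine ⟨y, seg_left hs, ?_⟩
      have := Metric.infDist_zero_of_mem (seg_right hB)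
      simp only [Set.mem_ofPred_eq, this, h0]
  obtain ⟨p, hp, hpA, hpB⟩ := key
  refine ⟨p, hp, ?_⟩
  obtain ⟨a, ha, hda⟩ := (seg_compact hA).exists_infDist_eq_dist ⟨_, seg_left hA⟩ p
  obtain ⟨b, hb, hdb⟩ := (seg_compact hB).exists_infDist_eq_dist ⟨_, seg_left hB⟩ p
  simp only [Set.mem_ofPred_eq] at hpA hpB
  rw [hda] at hpA
  rw [hdb] at hpB
  have e1 := seg_dist hA ha
  have e2 := seg_dist hB hb
  have e3 := seg_dist hs hp
  have t1 := dist_triangle_right z p a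
  have t2 := dist_triangle w a p
  have t3 := dist_triangle w b p
  have t4 := dist_triangle_right y p b
  unfold gprod
  rw [dist_comm z p] at t1
  rw [dist_comm w a, dist_comm a p] at t2
  rw [dist_comm b p] at t3
  rw [dist_comm b y, dist_comm w y] at e2
  linarith

theorem hyp4_of_slim {δ : ℝ} (h0 : 0 ≤ δ) (hg : GeodesicSpace S) (h : DeltaHyperbolic S δ) :
    Hyp4 S (3 * δ) := by
  intro w x y z
  obtain ⟨A, hA⟩ := hg x z
  obtain ⟨B, hB⟩ := hg z y
  obtain ⟨C, hC⟩ := hg y x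
  obtain ⟨p, hp, hd⟩ := exists_mem_dist_le h0 hg h hA w
  rcases slim h hA hB hC hp with ⟨q, hq, hdq⟩ | ⟨q, hq, hdq⟩
  · have h1 := gprod_le_of_mem hB hq w
    have h2 := dist_triangle w p q
    have h3 := min_le_right (gprod w x y) (gprod w y z)
    rw [gprod_comm w z y] at h1
    linarith
  · have h1 := gprod_le_of_mem hC hq w
    have h2 := dist_triangle w p q
    have h3 := min_le_left (gprod w x y) (gprod w y z)
    rw [gprod_comm w y x] at h1
    linarith

/-- In a geodesic space there are points at every intermediate distance. -/
theorem exists_between (hg : GeodesicSpace S) {u v : S} {t : ℝ} (h0 : 0 ≤ t)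
    (h1 : t ≤ dist u v) : ∃ p, dist u p = t ∧ dist p v = dist u v - t := by
  obtain ⟨Γ, hΓ⟩ := hg u v
  obtain ⟨p, -, hp⟩ := seg_point hΓ h0 h1
  exact ⟨p, hp⟩

end Hyperbolic

end AHProof

namespace AHProof

/-! ### The topology of the Gromov boundary -/

section Boundary

universe u

variable {S : Type u} [MetricSpace S]

/-- Two sequences are `R`-close if their mutual Gromov products are eventually at least `R`. -/
def close (e : S) (R : ℝ) (a b : ℕ → S) : Prop :=
  ∃ N, ∀ i, N ≤ i → ∀ j, N ≤ j → R ≤ gprod e (a i) (b j)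

theorem close_mono {e : S} {R R' : ℝ} {a b : ℕ → S} (h : close e R a b) (hR : R' ≤ R) :
    close e R' a b := by
  obtain ⟨N, hN⟩ := h
  exact ⟨N, fun i hi j hj => hR.trans (hN i hi j hj)⟩

theorem close_symm {e : S} {R : ℝ} {a b : ℕ → S} (h : close e R a b) : close e R b a := by
  obtain ⟨N, hN⟩ := h
  exact ⟨N, fun i hi j hj => by rw [gprod_comm]; exact hN j hj i hi⟩

theorem close_trans {D : ℝ} (hD : Hyp4 S D) {e : S} {R : ℝ} {a b c : ℕ → S}
    (h : close e R a b) (h' : close e R b c) : close e (R - D) a c := by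
  obtain ⟨N, hN⟩ := h
  obtain ⟨N', hN'⟩ := h'
  refine ⟨max N N', fun i hi j hj => ?_⟩
  exact hD.three (hN i (le_of_max_le_left hi) (max N N') (le_max_left _ _))
    (hN' (max N N') (le_max_right _ _) j (le_of_max_le_right hj))

theorem convToInfty_iff {e : S} {s : ℕ → S} : ConvToInfty e s ↔ ∀ R, close e R s s := by
  unfold ConvToInfty close
  rw [Filter.tendsto_atTop]
  refine forall_congr' fun R => ?_
  rw [Filter.eventually_atTop]
  constructor
  · rintro ⟨⟨n, m⟩, h⟩
    exact ⟨max n m, fun i hi j hj =>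
      h (i, j) ⟨le_of_max_le_left hi, le_of_max_le_right hj⟩⟩
  · rintro ⟨N, h⟩
    exact ⟨(N, N), fun p hp => h p.1 hp.1 p.2 hp.2⟩

theorem close_self {e : S} (a : BSeq S e) (R : ℝ) : close e R a.1 a.1 :=
  convToInfty_iff.1 a.2 R

theorem bequiv_iff {D : ℝ} (hD : Hyp4 S D) {e : S} {a b : BSeq S e} :
    bequiv e a b ↔ ∀ R, close e R a.1 b.1 := by
  constructor
  · intro h R
    obtain ⟨N, hN⟩ := Filter.eventually_atTop.1 (Filter.tendsto_atTop.1 h (R + 2 * D))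
    obtain ⟨N1, hN1⟩ := close_self a (R + 2 * D)
    obtain ⟨N2, hN2⟩ := close_self b (R + D)
    refine ⟨max N (max N1 N2), fun i hi j hj => ?_⟩
    have hk1 : N ≤ max N (max N1 N2) := le_max_left _ _
    have hk2 : N1 ≤ max N (max N1 N2) := (le_max_left _ _).trans (le_max_right _ _)
    have hk3 : N2 ≤ max N (max N1 N2) := (le_max_right _ _).trans (le_max_right _ _)
    have h1 := hD.three (hN1 i (hk2.trans hi) _ hk2) (hN _ hk1)
    have h2 := hN2 _ hk3 j (hk3.trans hj)
    have h3 := hD.three (r := R + D) (by linarith) h2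
    linarith
  · intro h
    refine Filter.tendsto_atTop.2 fun R => ?_
    obtain ⟨N, hN⟩ := h R
    exact Filter.eventually_atTop.2 ⟨N, fun i hi => hN i hi i hi⟩

theorem close_all_trans {D : ℝ} (hD : Hyp4 S D) {e : S} {a b c : ℕ → S}
    (h : ∀ R, close e R a b) (h' : ∀ R, close e R b c) (R : ℝ) : close e R a c := by
  have := close_trans hD (h (R + D)) (h' (R + D))
  simpa using this

theorem quot_eq_iff {D : ℝ} (hD : Hyp4 S D) {e : S} {a b : BSeq S e} :
    (Quot.mk _ a : GBoundary S e) = Quot.mk _ b ↔ ∀ R, close e R a.1 b.1 := by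
  constructor
  · intro h
    have h1 := Quot.eqvGen_exact h
    induction h1 with
    | rel x y hxy => exact (bequiv_iff hD).1 hxy
    | refl x => exact close_self x
    | symm x y _ ih => exact fun R => close_symm (ih (Quot.eqvGen_sound (by assumption)) R)
    | trans x y z h1 h2 ih1 ih2 =>
      exact close_all_trans hD (ih1 (Quot.eqvGen_sound h1)) (ih2 (Quot.eqvGen_sound h2))
  · intro h
    exact Quot.sound ((bequiv_iff hD).2 h)

/-- The filter basis of entourages `{(a, b) | a` and `b` are `R`-close`}`. -/
def entBasis (e : S) : FilterBasis (BSeq S e × BSeq S e) where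
  sets := Set.range fun R : ℝ => {p | close e R p.1.1 p.2.1}
  nonempty := ⟨_, 0, rfl⟩
  inter_sets := by
    rintro _ _ ⟨R, rfl⟩ ⟨R', rfl⟩
    refine ⟨_, ⟨max R R', rfl⟩, fun p hp => ⟨?_, ?_⟩⟩
    · exact close_mono hp (le_max_left _ _)
    · exact close_mono hp (le_max_right _ _)

/-- The uniformity on sequences converging to infinity; its separation quotient is the
boundary. -/
@[reducible] def bUnif {D : ℝ} (hD : Hyp4 S D) (e : S) : UniformSpace (BSeq S e) :=
  UniformSpace.ofCore (UniformSpace.Core.mkOfBasis (entBasis e)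
    (by rintro _ ⟨R, rfl⟩ a; exact close_self a R)
    (by
      rintro _ ⟨R, rfl⟩
      exact ⟨_, ⟨R, rfl⟩, fun p hp => close_symm hp⟩)
    (by
      rintro _ ⟨R, rfl⟩
      refine ⟨_, ⟨R + D, rfl⟩, ?_⟩
      rintro ⟨a, c⟩ ⟨b, hab, hbc⟩
      have := close_trans hD hab hbc
      simpa using this))

/-- The topological boundary, characterised by its basic neighbourhoods. -/
theorem exists_boundary {D : ℝ} (hD : Hyp4 S D) (e : S) :
    ∃ (M : Type u) (_ : TopologicalSpace M) (mk : BSeq S e → M), Function.Surjective mk ∧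
      (∀ a b, mk a = mk b ↔ ∀ R, close e R a.1 b.1) ∧ CompletelyHausdorff M ∧
      (∀ U : Set M, IsOpen U → ∀ a, mk a ∈ U → ∃ R, ∀ b, close e R a.1 b.1 → mk b ∈ U) ∧
      (∀ a R, ∃ O : Set M, IsOpen O ∧ mk a ∈ O ∧ ∀ b, mk b ∈ O → close e R a.1 b.1) := by
  let _ : UniformSpace (BSeq S e) := bUnif hD e
  have hbas : (uniformity (BSeq S e)).HasBasis (fun _ : ℝ => True)
      (fun R => {p | close e R p.1.1 p.2.1}) := by
    constructor
    intro t
    constructor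
    · rintro ⟨_, ⟨R, rfl⟩, h⟩
      exact ⟨R, trivial, h⟩
    · rintro ⟨R, -, h⟩
      exact ⟨_, ⟨R, rfl⟩, h⟩
  have hnhds : ∀ a : BSeq S e, (nhds a).HasBasis (fun _ : ℝ => True)
      (fun R => {b | close e R a.1 b.1}) := fun a =>
    nhds_basis_uniformity' hbas
  refine ⟨SeparationQuotient (BSeq S e), inferInstance, SeparationQuotient.mk,
    SeparationQuotient.surjective_mk, ?_, ?_, ?_, ?_⟩
  · intro a b
    rw [SeparationQuotient.mk_eq_mk, hbas.inseparable_iff_uniformity]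
    simp
  · intro u v huv
    obtain ⟨U, hu, hU, V, hv, hV, h⟩ := exists_open_nhds_disjoint_closure huv
    exact ⟨U, V, hU, hV, hu, hv, Set.disjoint_iff_inter_eq_empty.1 h⟩
  · intro U hU a ha
    have h1 : SeparationQuotient.mk ⁻¹' U ∈ nhds a :=
      (hU.preimage SeparationQuotient.continuous_mk).mem_nhds ha
    obtain ⟨R, -, hR⟩ := (hnhds a).mem_iff.1 h1
    exact ⟨R, fun b hb => hR hb⟩
  · intro a R
    refine ⟨SeparationQuotient.mk '' interior {b | close e R a.1 b.1},
      SeparationQuotient.isOpenMap_mk _ isOpen_interior, ⟨a, ?_, rfl⟩, ?_⟩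
    · exact mem_interior_iff_mem_nhds.2 ((hnhds a).mem_of_mem trivial)
    · intro b hb
      have : b ∈ SeparationQuotient.mk ⁻¹'
          (SeparationQuotient.mk '' interior {b | close e R a.1 b.1}) := hb
      rw [SeparationQuotient.preimage_image_mk_open isOpen_interior] at this
      exact (interior_subset this : b ∈ {b : BSeq S e | close e R a.1 b.1})

end Boundary

end AHProof

namespace AHProof

/-! ### Condition (C) on the boundary -/

section CondC

theorem act_inv_act {G T : Type*} [Group G] {act : G → T → T} (h : IsAction act) (g : G) (x : T) : act g⁻¹ (act g x) = x := by
  rw [← h.2, inv_mul_cancel, h.1]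

theorem act_act_inv {G T : Type*} [Group G] {act : G → T → T} (h : IsAction act) (g : G) (x : T) : act g (act g⁻¹ x) = x := by
  rw [← h.2, mul_inv_cancel, h.1]

variable {S : Type*} [MetricSpace S]

/-- Points with the same distance from `P` up to `1`, both near the geodesic `PW`, are close. -/
theorem dist_le_of_near {D c : ℝ} (hD : Hyp4 S D) {P W w w' : S} (h1 : gprod w P W ≤ c)
    (h2 : gprod w' P W ≤ c) (h3 : |dist w P - dist w' P| ≤ 1) :
    dist w w' ≤ 2 * c + 2 * D + 1 := by
  have a1 : dist w P - c ≤ gprod P w W := by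
    unfold gprod at h1 ⊢
    rw [dist_comm P w, dist_comm W w, dist_comm P W] at h1
    linarith
  have a2 : dist w' P - c ≤ gprod P W w' := by
    unfold gprod at h2 ⊢
    rw [dist_comm P w', dist_comm P W] at h2
    linarith
  obtain ⟨b1, b2⟩ := abs_le.1 h3
  have h4 : max (dist w P) (dist w' P) - 1 - c - D ≤ gprod P w w' := by
    apply hD.three (y := W)
    · rcases max_choice (dist w P) (dist w' P) with h | h <;> linarith
    · rcases max_choice (dist w P) (dist w' P) with h | h <;> linarith
  have h5 := le_max_left (dist w P) (dist w' P)
  have h6 := le_max_right (dist w P) (dist w' P)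
  have h7 : min (dist w P) (dist w' P) - c - D ≤ gprod P w w' := by
    apply hD.three (y := W)
    · rcases min_choice (dist w P) (dist w' P) with h | h <;>
        linarith [min_le_left (dist w P) (dist w' P)]
    · rcases min_choice (dist w P) (dist w' P) with h | h <;>
        linarith [min_le_right (dist w P) (dist w' P)]
  have h8 : max (dist w P) (dist w' P) + min (dist w P) (dist w' P) = dist w P + dist w' P :=
    max_add_min _ _
  have h9 : max (dist w P) (dist w' P) - min (dist w P) (dist w' P) ≤ 1 := by
    rw [max_sub_min_eq_abs]; rwa [abs_sub_comm]
  unfold gprod at h7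
  linarith

/-- Replacing `x`, `z` by points in much the same direction from `w` preserves smallness of the
product. -/
theorem gprod_le_replace {D c r : ℝ} (hD : Hyp4 S D) {w x x' z z' : S} (h : gprod w x z ≤ c)
    (hx : r ≤ gprod w x x') (hz : r ≤ gprod w z z') (hr : c + 2 * D < r) :
    gprod w x' z' ≤ c + 2 * D := by
  have hnn := hD.nonneg w
  by_contra hcon
  push Not at hcon
  have h1 : min r (gprod w x' z') - D ≤ gprod w x z' :=
    hD.three ((min_le_left _ _).trans hx) (min_le_right _ _)
  have h2 : min r (gprod w x' z') - D - D ≤ gprod w x z := by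
    apply hD.three h1
    rw [gprod_comm w z' z]
    linarith [min_le_left r (gprod w x' z')]
  rcases min_choice r (gprod w x' z') with h3 | h3 <;> rw [h3] at h2 <;> linarith

theorem far_of_not_close {D : ℝ} (hD : Hyp4 S D) {e : S} {u v : BSeq S e}
    (h : ¬ ∀ R, close e R u.1 v.1) :
    ∃ R0, 0 ≤ R0 ∧ ∃ N, ∀ i, N ≤ i → ∀ j, N ≤ j → gprod e (u.1 i) (v.1 j) ≤ R0 := by
  have hnn := hD.nonneg e
  push Not at h
  obtain ⟨R0, h⟩ := h
  obtain ⟨N1, h1⟩ := close_self u (|R0| + 2 * D + 1)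
  obtain ⟨N2, h2⟩ := close_self v (|R0| + 2 * D + 1)
  refine ⟨|R0| + 2 * D, by positivity, max N1 N2, fun i hi j hj => ?_⟩
  unfold close at h
  push Not at h
  obtain ⟨i', hi', j', hj', hlt⟩ := h (max N1 N2)
  refine gprod_le_replace hD (hlt.le.trans (le_abs_self _))
    (h1 i' (le_of_max_le_left hi') i (le_of_max_le_left hi))
    (h2 j' (le_of_max_le_right hj') j (le_of_max_le_right hj)) (by linarith)

theorem not_close_all_of_eventually {e : S} {a b : ℕ → S} {C : ℝ} {N : ℕ}
    (h : ∀ i, N ≤ i → ∀ j, N ≤ j → gprod e (a i) (b j) ≤ C) : ¬ ∀ R, close e R a b := by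
  intro hc
  obtain ⟨N', hN⟩ := hc (C + 1)
  have h1 := h (max N N') (le_max_left _ _) (max N N') (le_max_left _ _)
  have h2 := hN (max N N') (le_max_right _ _) (max N N') (le_max_right _ _)
  linarith

variable {G : Type*} [Group G] {act : G → S → S}

/-- The translates `g⁻¹ U*` and `g⁻¹ V*` stay near the fixed segment `PW` when `g` sends
points in the directions of `P, Q` towards `U*` and points in the directions of `W, Z` towards
`V*`.  First `d(e, g⁻¹ e)` is bounded, and then the products can be compared at `g⁻¹ U*`. -/
theorem near_of_moves {D : ℝ} (hD : Hyp4 S D) (hact : IsIsometricAction act) {e U V us : S}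
    {P Q W Z p q r s : S} {R0 R1 L ρ : ℝ} {g : G}
    (hUV : gprod e U V ≤ R0) (hPQ : gprod e P Q ≤ R1) (hWZ : gprod e W Z ≤ R1)
    (hp : L ≤ gprod e P p) (hq : L ≤ gprod e Q q) (hr : L ≤ gprod e W r) (hs : L ≤ gprod e Z s)
    (gp : ρ ≤ gprod e U (act g p)) (gq : ρ ≤ gprod e U (act g q))
    (gr : ρ ≤ gprod e V (act g r)) (gs : ρ ≤ gprod e V (act g s))
    (hρ : R0 + 2 * D < ρ) (hL1 : R1 + 2 * D < L)
    (hL : 2 * R0 + 2 * R1 + 13 * D + ρ < L) (hus : dist us e = ρ)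
    (hus' : (ρ - D ≤ gprod e us (act g p)) ∨ (ρ - D ≤ gprod e us (act g r))) :
    gprod (act g⁻¹ us) P W ≤ R0 + 5 * D := by
  have hnn := hD.nonneg e
  have cross : ∀ x y, ρ ≤ gprod e U (act g x) → ρ ≤ gprod e V (act g y) →
      gprod e (act g x) (act g y) ≤ R0 + 2 * D := fun x y hx hy =>
    gprod_le_replace hD hUV hx hy hρ
  have hpq : gprod e p q ≤ R1 + 2 * D := gprod_le_replace hD hPQ hp hq hL1
  have hrs : gprod e r s ≤ R1 + 2 * D := gprod_le_replace hD hWZ hr hs hL1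
  set e' := act g⁻¹ e with he'
  have key : ∀ x z, gprod e x e' ≤ R1 + 3 * D → gprod e z e' ≤ R1 + 3 * D →
      gprod e (act g x) (act g z) ≤ R0 + 2 * D → dist e e' ≤ R0 + 2 * R1 + 8 * D := by
    intro x z hx hz hxz
    have h1 : gprod e' x z ≤ R0 + 2 * D := by
      rw [← gprod_isometry (hact.2 g), he', act_act_inv hact.1]; exact hxz
    have h2 := dist_triangle_right x z e
    unfold gprod at h1 hx hz
    rw [dist_comm e' e] at hx hz
    linarith
  have hee : dist e e' ≤ R0 + 2 * R1 + 8 * D := by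
    rcases hD.small hpq e' with h1 | h1
    · rcases hD.small hrs e' with h2 | h2
      · exact key p r (by linarith) (by linarith) (cross p r gp gr)
      · exact key p s (by linarith) (by rw [gprod_comm]; linarith) (cross p s gp gs)
    · rcases hD.small hrs e' with h2 | h2
      · exact key q r (by rw [gprod_comm]; linarith) (by linarith) (cross q r gq gr)
      · exact key q s (by rw [gprod_comm]; linarith) (by rw [gprod_comm]; linarith)
          (cross q s gq gs)
  have hew : dist e (act g⁻¹ us) ≤ R0 + 2 * R1 + 8 * D + ρ := by
    have h1 := dist_triangle e e' (act g⁻¹ us)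
    rw [he', (hact.2 g⁻¹).dist_eq, dist_comm e us, hus] at h1
    linarith
  have h1 : gprod us (act g p) (act g r) ≤ R0 + 3 * D := by
    have h2 := cross p r gp gr
    have h3 := dist_triangle_right (act g p) us e
    have h4 := dist_triangle_right (act g r) us e
    rcases hus' with h5 | h5
    · unfold gprod at h2 h5 ⊢
      rw [dist_comm us (act g p)] at h5
      linarith
    · unfold gprod at h2 h5 ⊢
      rw [dist_comm us (act g r)] at h5
      linarith
  have h2 : gprod (act g⁻¹ us) p r ≤ R0 + 3 * D := by
    rw [← gprod_isometry (hact.2 g), act_act_inv hact.1]; exact h1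
  have h3 := gprod_le_replace (r := L - (R0 + 2 * R1 + 8 * D + ρ)) hD h2 (x' := P) (z' := W)
    (by have := gprod_move_base e (act g⁻¹ us) P p; rw [gprod_comm]; linarith)
    (by have := gprod_move_base e (act g⁻¹ us) W r; rw [gprod_comm]; linarith)
    (by linarith)
  linarith

/-- Finiteness from acylindricity: the elements `g` for which `g⁻¹ us`, `g⁻¹ vs` both lie near
the segment `PW` fall into finitely many bins, each of which is finite. -/
theorem finite_of_near {D c : ℝ} (hD : Hyp4 S D) (hact : IsIsometricAction act) {us vs P W : S}
    (hfin : {g : G | dist us (act g us) ≤ 2 * c + 2 * D + 1 ∧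
      dist vs (act g vs) ≤ 2 * c + 2 * D + 1}.Finite) :
    {g : G | gprod (act g⁻¹ us) P W ≤ c ∧ gprod (act g⁻¹ vs) P W ≤ c}.Finite := by
  set A := {g : G | gprod (act g⁻¹ us) P W ≤ c ∧ gprod (act g⁻¹ vs) P W ≤ c} with hA
  have bound : ∀ w, gprod w P W ≤ c → dist w P ≤ dist P W + 2 * c := by
    intro w hw
    unfold gprod at hw
    have := dist_nonneg (x := W) (y := w)
    rw [dist_comm P w] at hw
    linarith
  have hfl : ∀ x y : ℝ, 0 ≤ x → 0 ≤ y → ⌊x⌋₊ = ⌊y⌋₊ → |x - y| ≤ 1 := by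
    intro x y hx hy h
    have h1 := Nat.floor_le hx
    have h2 := Nat.floor_le hy
    have h3 := Nat.lt_floor_add_one x
    have h4 := Nat.lt_floor_add_one y
    rw [h] at h1 h3
    exact abs_le.2 ⟨by linarith, by linarith⟩
  refine Set.Finite.of_finite_fibers
    (fun g => (⌊dist (act g⁻¹ us) P⌋₊, ⌊dist (act g⁻¹ vs) P⌋₊)) ?_ ?_
  · refine ((Set.finite_Iic ⌊dist P W + 2 * c⌋₊).prod
      (Set.finite_Iic ⌊dist P W + 2 * c⌋₊)).subset ?_
    rintro _ ⟨g, hg, rfl⟩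
    exact ⟨Nat.floor_mono (bound _ hg.1), Nat.floor_mono (bound _ hg.2)⟩
  · rintro _ ⟨g0, hg0, rfl⟩
    refine (hfin.image (fun h => h * g0)).subset ?_
    rintro g ⟨hg, hgeq⟩
    simp only [Set.mem_preimage, Set.mem_singleton_iff, Prod.mk.injEq] at hgeq
    refine ⟨g * g0⁻¹, ⟨?_, ?_⟩, by simp⟩
    · have h1 := dist_le_of_near hD hg.1 hg0.1 (hfl _ _ dist_nonneg dist_nonneg hgeq.1)
      rw [← (hact.2 g).dist_eq, act_act_inv hact.1, ← hact.1.2] at h1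
      exact h1
    · have h1 := dist_le_of_near hD hg.2 hg0.2 (hfl _ _ dist_nonneg dist_nonneg hgeq.2)
      rw [← (hact.2 g).dist_eq, act_act_inv hact.1, ← hact.1.2] at h1
      exact h1

/-- Condition (C) at the level of sequences: group elements carrying points near `p`, `q` close to
`u` and points near `r`, `s` close to `v` bring two fixed points, far out in the directions `u` and
`v`, near the geodesic from `p` to `r`; acylindricity leaves finitely many of them. -/
theorem condC_core {D : ℝ} (hD : Hyp4 S D) (hg : GeodesicSpace S) (hact : IsIsometricAction act)
    (hacyl : AcylindricalAction act) {e : S} {u v : BSeq S e} (huv : ¬ ∀ R, close e R u.1 v.1) :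
    ∃ R, ∀ p q r s : BSeq S e, (¬ ∀ R, close e R p.1 q.1) → (¬ ∀ R, close e R r.1 s.1) →
      ∃ L, {g : G | ∃ p' q' r' s' : BSeq S e, close e L p.1 p'.1 ∧ close e L q.1 q'.1 ∧
        close e L r.1 r'.1 ∧ close e L s.1 s'.1 ∧
        close e R u.1 (fun n => act g (p'.1 n)) ∧ close e R u.1 (fun n => act g (q'.1 n)) ∧
        close e R v.1 (fun n => act g (r'.1 n)) ∧
        close e R v.1 (fun n => act g (s'.1 n))}.Finite := by
  have hnn := hD.nonneg e
  obtain ⟨R0, hR0, N0, hN0⟩ := far_of_not_close hD huv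
  obtain ⟨Ra, Na, hRa, hNa, hacy⟩ := hacyl (2 * (R0 + 5 * D) + 2 * D + 1) (by positivity)
  set ρ := R0 + 2 * D + 1 + Ra with hρ
  obtain ⟨N1, hN1⟩ := close_self u (ρ + D)
  obtain ⟨N2, hN2⟩ := close_self v (ρ + D)
  set n := max N0 (max N1 N2) with hn
  have hn0 : N0 ≤ n := le_max_left _ _
  have hn1 : N1 ≤ n := (le_max_left _ _).trans (le_max_right _ _)
  have hn2 : N2 ≤ n := (le_max_right _ _).trans (le_max_right _ _)
  have hρ0 : 0 ≤ ρ := by positivity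
  have hdu : ρ ≤ dist e (u.1 n) := by
    have := hN1 n hn1 n hn1
    rw [gprod_self, dist_comm] at this; linarith
  have hdv : ρ ≤ dist e (v.1 n) := by
    have := hN2 n hn2 n hn2
    rw [gprod_self, dist_comm] at this; linarith
  obtain ⟨us, hus1, hus2⟩ := exists_between hg hρ0 hdu
  obtain ⟨vs, hvs1, hvs2⟩ := exists_between hg hρ0 hdv
  have gu : gprod e us (u.1 n) = ρ := by
    unfold gprod; rw [dist_comm us e, dist_comm _ e]; linarith
  have gv : gprod e vs (v.1 n) = ρ := by
    unfold gprod; rw [dist_comm vs e, dist_comm _ e]; linarith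
  have huv' : Ra ≤ dist us vs := by
    have h1 : gprod e us vs ≤ R0 + 2 * D :=
      gprod_le_replace (r := ρ) hD (hN0 n hn0 n hn0) (by rw [gprod_comm, gu])
        (by rw [gprod_comm, gv]) (by linarith)
    unfold gprod at h1
    rw [dist_comm us e, dist_comm vs e] at h1
    linarith
  refine ⟨ρ + D, fun p q r s hpq hrs => ?_⟩
  obtain ⟨R1, hR1, M1, hM1⟩ := far_of_not_close hD hpq
  obtain ⟨R2, hR2, M2, hM2⟩ := far_of_not_close hD hrs
  set L := 2 * R0 + 2 * (R1 + R2) + 13 * D + ρ + 1 with hL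
  obtain ⟨A1, hA1⟩ := close_self p (L + D)
  obtain ⟨A2, hA2⟩ := close_self q (L + D)
  obtain ⟨A3, hA3⟩ := close_self r (L + D)
  obtain ⟨A4, hA4⟩ := close_self s (L + D)
  obtain ⟨m, hm1, hm2, hm3, hm4, hm5, hm6⟩ :
      ∃ m, M1 ≤ m ∧ M2 ≤ m ∧ A1 ≤ m ∧ A2 ≤ m ∧ A3 ≤ m ∧ A4 ≤ m :=
    ⟨M1 + M2 + A1 + A2 + A3 + A4, by omega, by omega, by omega, by omega, by omega, by omega⟩
  refine ⟨L + D, (finite_of_near hD hact (P := p.1 m) (W := r.1 m) (c := R0 + 5 * D)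
    (hacy us vs huv').1).subset ?_⟩
  rintro g ⟨p', q', r', s', ⟨B1, hB1⟩, ⟨B2, hB2⟩, ⟨B3, hB3⟩, ⟨B4, hB4⟩, ⟨B5, hB5⟩, ⟨B6, hB6⟩,
    ⟨B7, hB7⟩, ⟨B8, hB8⟩⟩
  obtain ⟨k, k1, k2, k3, k4, k5, k6, k7, k8, k9, k10⟩ :
      ∃ k, B1 ≤ k ∧ B2 ≤ k ∧ B3 ≤ k ∧ B4 ≤ k ∧ B5 ≤ k ∧ B6 ≤ k ∧ B7 ≤ k ∧ B8 ≤ k ∧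
        m ≤ k ∧ n ≤ k :=
    ⟨B1 + B2 + B3 + B4 + B5 + B6 + B7 + B8 + m + n, by omega, by omega, by omega, by omega,
      by omega, by omega, by omega, by omega, by omega, by omega⟩
  have up : ∀ {x x' y : S} {t : ℝ}, t + D ≤ gprod e x x' → t + D ≤ gprod e x' y →
      t ≤ gprod e x y := fun h1 h2 => by
    have := hD.three h1 h2; linarith
  have hp : L ≤ gprod e (p.1 m) (p'.1 k) := up (hA1 m hm3 k (hm3.trans k9)) (hB1 k k1 k k1)
  have hq : L ≤ gprod e (q.1 m) (q'.1 k) := up (hA2 m hm4 k (hm4.trans k9)) (hB2 k k2 k k2)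
  have hr : L ≤ gprod e (r.1 m) (r'.1 k) := up (hA3 m hm5 k (hm5.trans k9)) (hB3 k k3 k k3)
  have hs : L ≤ gprod e (s.1 m) (s'.1 k) := up (hA4 m hm6 k (hm6.trans k9)) (hB4 k k4 k k4)
  have gp : ρ ≤ gprod e (u.1 n) (act g (p'.1 k)) :=
    up (hN1 n hn1 k (hn1.trans k10)) (hB5 k k5 k k5)
  have gq : ρ ≤ gprod e (u.1 n) (act g (q'.1 k)) :=
    up (hN1 n hn1 k (hn1.trans k10)) (hB6 k k6 k k6)
  have gr : ρ ≤ gprod e (v.1 n) (act g (r'.1 k)) :=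
    up (hN2 n hn2 k (hn2.trans k10)) (hB7 k k7 k k7)
  have gs : ρ ≤ gprod e (v.1 n) (act g (s'.1 k)) :=
    up (hN2 n hn2 k (hn2.trans k10)) (hB8 k k8 k k8)
  have hPQ : gprod e (p.1 m) (q.1 m) ≤ R1 + R2 := by linarith [hM1 m hm1 m hm1]
  have hWZ : gprod e (r.1 m) (s.1 m) ≤ R1 + R2 := by linarith [hM2 m hm2 m hm2]
  constructor
  · exact near_of_moves hD hact (hN0 n hn0 n hn0) hPQ hWZ hp hq hr hs gp gq gr gs (by linarith)
      (by linarith) (by linarith) (by rw [dist_comm]; exact hus1) (Or.inl (hD.three gu.ge gp))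
  · exact near_of_moves hD hact (hN0 n hn0 n hn0) hPQ hWZ hp hq hr hs gp gq gr gs (by linarith)
      (by linarith) (by linarith) (by rw [dist_comm]; exact hvs1) (Or.inr (hD.three gv.ge gr))

end CondC

end AHProof

namespace AHProof

/-! ### Loxodromic elements -/

section Lox

variable {S : Type*} [MetricSpace S] {G : Type*} [Group G] {act : G → S → S}

theorem dist_act_inv (hact : IsIsometricAction act) (g : G) (x y : S) :
    dist (act g⁻¹ x) y = dist x (act g y) := by
  rw [← (hact.2 g).dist_eq, act_act_inv hact.1]

/-- A numerical criterion for `f` to act as a loxodromic isometry. -/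
def IsLox (act : G → S → S) (e : S) (D : ℝ) (f : G) : Prop :=
  2 * gprod e (act f e) (act f⁻¹ e) + 3 * D < dist e (act f e)

theorem IsLox.inv (hact : IsIsometricAction act) {e : S} {D : ℝ} {f : G} (h : IsLox act e D f) :
    IsLox act e D f⁻¹ := by
  unfold IsLox at *
  rw [inv_inv, gprod_comm, dist_comm, dist_act_inv hact]
  exact h

theorem act_pow_succ (hact : IsIsometricAction act) (f : G) (n : ℕ) (x : S) :
    act (f ^ (n + 1)) x = act f (act (f ^ n) x) := by
  rw [pow_succ', hact.1.2]

theorem dist_pow_pow (hact : IsIsometricAction act) (e : S) (f : G) (m n : ℕ) :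
    dist (act (f ^ m) e) (act (f ^ (m + n)) e) = dist e (act (f ^ n) e) := by
  rw [pow_add, hact.1.2, (hact.2 _).dist_eq]

theorem dist_inv_pow (hact : IsIsometricAction act) (e : S) (f : G) (n : ℕ) :
    dist e (act (f⁻¹ ^ n) e) = dist e (act (f ^ n) e) := by
  rw [inv_pow, dist_comm, dist_act_inv hact]

/-- The orbit `fⁿ e` makes uniform progress, without backtracking. -/
theorem IsLox.step (hact : IsIsometricAction act) {e : S} {D : ℝ} (hD : Hyp4 S D) {f : G}
    (h : IsLox act e D f) (n : ℕ) :
    gprod e (act f⁻¹ e) (act (f ^ n) e) ≤ gprod e (act f e) (act f⁻¹ e) + D ∧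
    dist e (act (f ^ n) e) + (dist e (act f e) - 2 * gprod e (act f e) (act f⁻¹ e) - 2 * D)
      ≤ dist e (act (f ^ (n + 1)) e) := by
  have hnn := hD.nonneg e
  have hk := gprod_nonneg e (act f e) (act f⁻¹ e)
  have second : ∀ n, gprod e (act f⁻¹ e) (act (f ^ n) e) ≤
      gprod e (act f e) (act f⁻¹ e) + D → dist e (act (f ^ n) e) +
      (dist e (act f e) - 2 * gprod e (act f e) (act f⁻¹ e) - 2 * D)
      ≤ dist e (act (f ^ (n + 1)) e) := by
    intro n hn
    have h1 : dist (act f⁻¹ e) (act (f ^ n) e) = dist e (act (f ^ (n + 1)) e) := by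
      rw [dist_act_inv hact, act_pow_succ hact]
    have h2 : dist (act f⁻¹ e) e = dist e (act f e) := dist_act_inv hact f e e
    set k := gprod e (act f e) (act f⁻¹ e)
    unfold gprod at hn
    rw [h1, h2, dist_comm _ e] at hn
    linarith
  have first : gprod e (act f⁻¹ e) (act (f ^ n) e) ≤ gprod e (act f e) (act f⁻¹ e) + D := by
    unfold IsLox at h
    induction n with
    | zero =>
      rw [pow_zero, hact.1.1]
      have := gprod_le_right e (act f⁻¹ e) e
      rw [dist_self] at this
      linarith
    | succ n ih =>
      have h1 := second n ih
      have h2 : dist (act f e) (act (f ^ (n + 1)) e) = dist e (act (f ^ n) e) := by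
        rw [act_pow_succ hact, (hact.2 f).dist_eq]
      set k := gprod e (act f e) (act f⁻¹ e) with hkdef
      have h3 : dist e (act f e) - k - D ≤ gprod e (act f e) (act (f ^ (n + 1)) e) := by
        unfold gprod
        rw [h2, dist_comm _ e, dist_comm _ e]
        linarith
      rcases hD.small hkdef.ge (act (f ^ (n + 1)) e) with h4 | h4
      · linarith
      · rw [gprod_comm]; exact h4
  exact ⟨first, second n first⟩

theorem IsLox.exists_speed (hact : IsIsometricAction act) {e : S} {D : ℝ} (hD : Hyp4 S D) {f : G}
    (h : IsLox act e D f) : ∃ c, 0 < c ∧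
      (∀ n : ℕ, n * c ≤ dist e (act (f ^ n) e)) ∧
      (∀ m n : ℕ, m ≤ n → m * c / 2 ≤ gprod e (act (f ^ m) e) (act (f ^ n) e)) := by
  have hnn := hD.nonneg e
  set c := dist e (act f e) - 2 * gprod e (act f e) (act f⁻¹ e) - 2 * D with hc
  have hc0 : 0 < c := by unfold IsLox at h; linarith
  have hst := fun n => (h.step hact hD n).2
  have hmono : Monotone (fun n : ℕ => dist e (act (f ^ n) e)) :=
    monotone_nat_of_le_succ fun n => by linarith [hst n]
  have hlin : ∀ n : ℕ, n * c ≤ dist e (act (f ^ n) e) := by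
    intro n
    induction n with
    | zero => simp
    | succ n ih => push_cast; linarith [hst n]
  refine ⟨c, hc0, hlin, fun m n hmn => ?_⟩
  obtain ⟨k, rfl⟩ := Nat.exists_eq_add_of_le hmn
  have h1 := dist_pow_pow hact e f m k
  have h2 : dist e (act (f ^ k) e) ≤ dist e (act (f ^ (m + k)) e) := hmono (by omega)
  unfold gprod
  rw [h1, dist_comm _ e, dist_comm _ e]
  linarith [hlin m]

theorem IsLox.conv (hact : IsIsometricAction act) {e : S} {D : ℝ} (hD : Hyp4 S D) {f : G}
    (h : IsLox act e D f) : ConvToInfty e (fun n => act (f ^ n) e) := by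
  obtain ⟨c, hc, -, h2⟩ := h.exists_speed hact hD
  rw [convToInfty_iff]
  intro R
  obtain ⟨N, hN⟩ := exists_nat_gt (2 * R / c)
  rw [div_lt_iff₀ hc] at hN
  have aux : ∀ i j : ℕ, N ≤ i → i ≤ j → R ≤ gprod e (act (f ^ i) e) (act (f ^ j) e) := by
    intro i j hi hij
    have h3 : (N : ℝ) * c ≤ i * c := by gcongr
    linarith [h2 i j hij]
  refine ⟨N, fun i hi j hj => ?_⟩
  rcases le_total i j with hij | hij
  · exact aux i j hi hij
  · rw [gprod_comm]; exact aux j i hj hij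

/-- The attracting fixed point of a loxodromic element, as a sequence. -/
def IsLox.pt (hact : IsIsometricAction act) {e : S} {D : ℝ} (hD : Hyp4 S D) {f : G}
    (h : IsLox act e D f) : BSeq S e := ⟨fun n => act (f ^ n) e, h.conv hact hD⟩

theorem IsLox.far (hact : IsIsometricAction act) {e : S} {D : ℝ} (hD : Hyp4 S D) {f : G}
    (h : IsLox act e D f) : ∃ C, ∀ i j : ℕ, 1 ≤ i →
      gprod e (act (f ^ i) e) (act (f⁻¹ ^ j) e) ≤ C := by
  have hnn := hD.nonneg e
  have h' : IsLox act e D f⁻¹ := h.inv hact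
  refine ⟨gprod e (act f e) (act f⁻¹ e) + 2 * D, fun i j hi => ?_⟩
  obtain ⟨n, rfl⟩ := Nat.exists_eq_add_of_le' hi
  have h1 := (h.step hact hD n).2
  have h2 := (h'.step hact hD j).1
  rw [inv_inv, gprod_comm e (act f⁻¹ e) (act f e)] at h2
  have h3 : dist (act f e) (act (f ^ (n + 1)) e) = dist e (act (f ^ n) e) := by
    rw [act_pow_succ hact, (hact.2 f).dist_eq]
  unfold IsLox at h
  set k := gprod e (act f e) (act f⁻¹ e) with hkdef
  have h4 : dist e (act f e) - k - D ≤ gprod e (act f e) (act (f ^ (n + 1)) e) := by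
    unfold gprod
    rw [h3, dist_comm _ e, dist_comm _ e]
    linarith
  rcases hD.small h2 (act (f ^ (n + 1)) e) with h5 | h5
  · linarith
  · linarith

/-- Two long elements in different directions: one of `a`, `b`, `a⁻¹ b` is loxodromic. -/
theorem exists_lox_of_far (hact : IsIsometricAction act) {e : S} {D : ℝ} (hD : Hyp4 S D)
    {C : ℝ} (hC : 0 ≤ C) {a b : G} (ha : 4 * C + 20 * D + 1 ≤ dist e (act a e))
    (hb : 4 * C + 20 * D + 1 ≤ dist e (act b e)) (hab : gprod e (act a e) (act b e) ≤ C) :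
    ∃ f, IsLox act e D f := by
  have hnn := hD.nonneg e
  by_contra hcon
  push Not at hcon
  have h1 := hcon a
  have h2 := hcon b
  apply hcon (a⁻¹ * b)
  unfold IsLox at *
  push Not at h1 h2
  have hf : dist e (act (a⁻¹ * b) e) = dist (act a e) (act b e) := by
    rw [hact.1.2, dist_comm, dist_act_inv hact, dist_comm]
  have e1 : dist (act (a⁻¹ * b) e) (act a⁻¹ e) = dist e (act b e) := by
    rw [hact.1.2, (hact.2 _).dist_eq, dist_comm]
  have e2 : dist (act (a⁻¹ * b)⁻¹ e) (act b⁻¹ e) = dist e (act a e) := by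
    rw [mul_inv_rev, inv_inv, hact.1.2, (hact.2 _).dist_eq, dist_comm]
  have e3 : dist (act (a⁻¹ * b)⁻¹ e) e = dist (act a e) (act b e) := by
    rw [dist_act_inv hact, hf]
  have e4 : dist (act a⁻¹ e) e = dist e (act a e) := dist_act_inv hact a e e
  have e5 : dist (act b⁻¹ e) e = dist e (act b e) := dist_act_inv hact b e e
  have hab' := hab
  unfold gprod at hab'
  rw [dist_comm _ e, dist_comm _ e] at hab'
  have g1 : 2 * C + 5 * D + 1 ≤ gprod e (act a⁻¹ e) (act (a⁻¹ * b) e) := by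
    rw [gprod_comm]
    unfold gprod
    rw [e1, e4, dist_comm _ e, hf]
    linarith
  have g2 : 2 * C + 5 * D + 1 ≤ gprod e (act b⁻¹ e) (act (a⁻¹ * b)⁻¹ e) := by
    rw [gprod_comm]
    unfold gprod
    rw [e2, e3, e5]
    linarith
  have g3 : gprod e (act a⁻¹ e) (act b⁻¹ e) ≤ C + 2 * D :=
    gprod_le_replace (r := 2 * C + 5 * D + 1 / 2) hD hab (by linarith) (by linarith)
      (by linarith)
  have g4 : gprod e (act (a⁻¹ * b) e) (act (a⁻¹ * b)⁻¹ e) ≤ C + 2 * D + 2 * D :=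
    gprod_le_replace hD g3 g1 g2 (by linarith)
  rw [hf]
  linarith

/-- A non-elementary action contains a loxodromic element. -/
theorem exists_lox (hact : IsIsometricAction act) {e : S} {D : ℝ} (hD : Hyp4 S D)
    (hne : NonelemAction act e) : ∃ f, IsLox act e D f := by
  obtain ⟨ξ, η, -, ⟨s, gs, hs, rfl⟩, ⟨s', hs', ht, rfl⟩, -, hne, -, -⟩ := hne
  have hnc : ¬ ∀ R, close e R (fun n => act (gs n) s) (fun n => act (hs' n) s') := by
    intro h
    exact hne ((quot_eq_iff hD).2 h)
  obtain ⟨R0, hR0, N, hN⟩ := far_of_not_close hD (u := ⟨_, hs⟩) (v := ⟨_, ht⟩) hnc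
  set C := R0 + dist s e + dist s' e with hC
  have hC0 : 0 ≤ C := by positivity
  obtain ⟨N1, h1⟩ := convToInfty_iff.1 hs (4 * C + 20 * D + 1 + dist s e)
  obtain ⟨N2, h2⟩ := convToInfty_iff.1 ht (4 * C + 20 * D + 1 + dist s' e)
  set n := N + N1 + N2 with hn
  refine exists_lox_of_far hact hD hC0 (a := gs n) (b := hs' n) ?_ ?_ ?_
  · have h3 := h1 n (by omega) n (by omega)
    rw [gprod_self] at h3
    have h4 := dist_triangle (act (gs n) s) (act (gs n) e) e
    rw [(hact.2 _).dist_eq, dist_comm (act _ e) e] at h4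
    simp only at h3
    linarith
  · have h3 := h2 n (by omega) n (by omega)
    rw [gprod_self] at h3
    have h4 := dist_triangle (act (hs' n) s') (act (hs' n) e) e
    rw [(hact.2 _).dist_eq, dist_comm (act _ e) e] at h4
    simp only at h3
    linarith
  · have h3 := hN n (by omega) n (by omega)
    have h4 := gprod_move_right e (act (gs n) e) (act (hs' n) e) (act (hs' n) s')
    have h5 := gprod_move_right e (act (hs' n) s') (act (gs n) e) (act (gs n) s)
    rw [(hact.2 _).dist_eq, dist_comm e] at h4 h5
    rw [gprod_comm e (act (hs' n) s'), gprod_comm e (act (hs' n) s')] at h5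
    simp only at h3
    linarith

/-- The quantitative form of north–south dynamics: sequences that are not close to the
repelling point are pushed close to the attracting one. -/
theorem IsLox.push (hact : IsIsometricAction act) {e : S} {D : ℝ} (hD : Hyp4 S D) {f : G}
    (h : IsLox act e D f) (R R' : ℝ) : ∃ N : ℕ, ∀ n : ℕ, N < n → ∀ b : BSeq S e,
      ¬ close e R (fun n => act (f⁻¹ ^ n) e) b.1 →
      close e R' (fun n => act (f ^ n) e) (fun j => act (f ^ n) (b.1 j)) := by
  have hnn := hD.nonneg e
  obtain ⟨c, hc, h1, h2⟩ := h.exists_speed hact hD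
  obtain ⟨c', hc', h1', h2'⟩ := (h.inv hact).exists_speed hact hD
  set T := 2 * (|R| + |R'| + 3 * D + 1) with hT
  obtain ⟨N1, hN1⟩ := exists_nat_gt (T / c)
  obtain ⟨N2, hN2⟩ := exists_nat_gt (T / c')
  rw [div_lt_iff₀ hc] at hN1
  rw [div_lt_iff₀ hc'] at hN2
  refine ⟨N1 + N2, fun n hn b hb => ?_⟩
  have hnc : T < n * c := by
    have : (N1 : ℝ) * c ≤ n * c := by
      have : N1 ≤ n := by omega
      gcongr
    linarith
  have hnc' : T < n * c' := by
    have : (N2 : ℝ) * c' ≤ n * c' := by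
      have : N2 ≤ n := by omega
      gcongr
    linarith
  have hRR := le_abs_self R
  have hRR' := le_abs_self R'
  obtain ⟨J, hJ⟩ := close_self b (|R| + 2 * D + 1)
  unfold close at hb
  push Not at hb
  obtain ⟨i', hi', j', hj', hlt⟩ := hb (n + J)
  have hR0 := abs_nonneg R
  have hR0' := abs_nonneg R'
  refine ⟨n + J, fun i hi j hj => ?_⟩
  have h3 : gprod e (act (f⁻¹ ^ n) e) (b.1 j) ≤ |R| + 2 * D := by
    refine gprod_le_replace (r := |R| + 2 * D + 1) hD (hlt.le.trans hRR) ?_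
      (hJ j' (by omega) j (by omega)) (by linarith)
    rw [gprod_comm]
    linarith [h2' n i' (by omega)]
  have h4 : |R'| + D ≤ gprod e (act (f ^ n) e) (act (f ^ n) (b.1 j)) := by
    have e1 := dist_act_inv hact (f ^ n) e (b.1 j)
    have e2 := dist_act_inv hact (f ^ n) e e
    rw [inv_pow] at h3
    unfold gprod at h3 ⊢
    rw [e1, e2] at h3
    rw [(hact.2 _).dist_eq, dist_comm _ e, dist_comm _ e, dist_comm e (b.1 j)]
    rw [dist_comm e (act (f ^ n) (b.1 j))] at *
    linarith [h1 n]
  have h5 : |R'| + D ≤ gprod e (act (f ^ i) e) (act (f ^ n) e) := by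
    rw [gprod_comm]
    linarith [h2 n i (by omega)]
  have h6 := hD.three h5 h4
  linarith

end Lox

/-! ### From an acylindrical action to the dynamics on the boundary -/

section Forward

universe u

variable {S : Type u} [MetricSpace S] {G : Type*} [Group G] {act : G → S → S}

theorem close_act (hact : IsIsometricAction act) {e : S} (g : G) {R : ℝ} {a b : ℕ → S}
    (h : close e R a b) :
    close e (R - dist e (act g e)) (fun n => act g (a n)) (fun n => act g (b n)) := by
  obtain ⟨N, hN⟩ := h
  refine ⟨N, fun i hi j hj => ?_⟩
  have h1 := gprod_move_base (act g e) e (act g (a i)) (act g (b j))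
  rw [gprod_isometry (hact.2 g), dist_comm] at h1
  linarith [hN i hi j hj]

theorem close_act_all (hact : IsIsometricAction act) {e : S} (g : G) {a b : ℕ → S}
    (h : ∀ R, close e R a b) (R : ℝ) :
    close e R (fun n => act g (a n)) (fun n => act g (b n)) := by
  simpa using close_act hact g (h (R + dist e (act g e)))

/-- The action on sequences converging to infinity. -/
def shift (hact : IsIsometricAction act) {e : S} (g : G) (a : BSeq S e) : BSeq S e :=
  ⟨fun n => act g (a.1 n), convToInfty_iff.2 (close_act_all hact g (close_self a))⟩

/-- The Gromov boundary carries the required action: condition (C) is `condC_core`, and a loxodromic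
element has north–south dynamics by `IsLox.push`. -/
theorem forward {δ : ℝ} (hδ : 0 ≤ δ) (hgeo : GeodesicSpace S) (hhyp : DeltaHyperbolic S δ)
    (hact : IsIsometricAction act) (hacyl : AcylindricalAction act) {e : S}
    (hne : NonelemAction act e) :
    ∃ (M : Type u) (_i : TopologicalSpace M) (act : G → M → M),
        IsActionByHomeos act ∧ CompletelyHausdorff M ∧
        (∃ a b c : M, a ≠ b ∧ b ≠ c ∧ a ≠ c) ∧
        ConditionC act ∧ ∃ g : G, NorthSouth act g := by
  have hD := hyp4_of_slim hδ hgeo hhyp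
  obtain ⟨f, hf⟩ := exists_lox hact hD hne
  obtain ⟨M, _, mk, hsurj, heq, hCH, hopen, hbasic⟩ := exists_boundary hD e
  set actM : G → M → M := fun g m => mk (shift hact g (Function.surjInv hsurj m)) with hactM
  have hmk : ∀ g a, actM g (mk a) = mk (shift hact g a) := by
    intro g a
    have h1 := (heq (Function.surjInv hsurj (mk a)) a).1 (Function.surjInv_eq hsurj _)
    exact (heq _ _).2 (close_act_all hact g h1)
  have hisact : IsAction actM := by
    constructor
    · intro x
      obtain ⟨a, rfl⟩ := hsurj x
      rw [hmk]
      congr 1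
      exact Subtype.ext (funext fun n => hact.1.1 _)
    · intro g h x
      obtain ⟨a, rfl⟩ := hsurj x
      rw [hmk h a, hmk, hmk]
      congr 1
      exact Subtype.ext (funext fun n => hact.1.2 _ _ _)
  have hcont : ∀ g, Continuous (actM g) := by
    intro g
    refine continuous_def.2 fun U hU => isOpen_iff_mem_nhds.2 fun x hx => ?_
    obtain ⟨a, rfl⟩ := hsurj x
    rw [Set.mem_preimage, hmk] at hx
    obtain ⟨R, hR⟩ := hopen U hU _ hx
    obtain ⟨O, hO, haO, hO'⟩ := hbasic a (R + dist e (act g e))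
    refine Filter.mem_of_superset (hO.mem_nhds haO) fun y hy => ?_
    obtain ⟨b, rfl⟩ := hsurj y
    rw [Set.mem_preimage, hmk]
    refine hR _ ?_
    exact close_mono (close_act hact g (hO' b hy)) (by linarith)
  refine ⟨M, inferInstance, actM, ⟨hisact, hcont⟩, hCH, ?_, ?_, f, ?_⟩
  · obtain ⟨x, y, z, -, -, -, hxy, hyz, hxz⟩ := hne
    obtain ⟨a, rfl⟩ := Quot.exists_rep x
    obtain ⟨b, rfl⟩ := Quot.exists_rep y
    obtain ⟨c, rfl⟩ := Quot.exists_rep z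
    have aux : ∀ a b : BSeq S e, (Quot.mk (bequiv e) a) ≠ Quot.mk (bequiv e) b → mk a ≠ mk b :=
      fun a b h h' => h ((quot_eq_iff hD).2 ((heq a b).1 h'))
    exact ⟨mk a, mk b, mk c, aux _ _ hxy, aux _ _ hyz, aux _ _ hxz⟩
  · rintro ⟨u, u'⟩ ⟨v, v'⟩ hu hv huv
    simp only at hu hv
    subst hu hv
    obtain ⟨u, rfl⟩ := hsurj u
    obtain ⟨v, rfl⟩ := hsurj v
    have huv' : ¬ ∀ R, close e R u.1 v.1 := by
      intro h
      exact huv (by rw [(heq u v).2 h])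
    obtain ⟨R, hR⟩ := condC_core hD hgeo hact hacyl huv'
    obtain ⟨U, hU, huU, hU'⟩ := hbasic u R
    obtain ⟨V, hV, hvV, hV'⟩ := hbasic v R
    refine ⟨U ×ˢ U, V ×ˢ V, hU.prod hU, hV.prod hV, ⟨huU, huU⟩, ⟨hvV, hvV⟩, ?_⟩
    rintro ⟨p, q⟩ ⟨r, s⟩ hpq hrs -
    obtain ⟨p, rfl⟩ := hsurj p
    obtain ⟨q, rfl⟩ := hsurj q
    obtain ⟨r, rfl⟩ := hsurj r
    obtain ⟨s, rfl⟩ := hsurj s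
    obtain ⟨L, hL⟩ := hR p q r s (fun h => hpq ((heq _ _).2 h)) (fun h => hrs ((heq _ _).2 h))
    obtain ⟨P, oP, iP, hP⟩ := hbasic p L
    obtain ⟨Q, oQ, iQ, hQ⟩ := hbasic q L
    obtain ⟨W, oW, iW, hW⟩ := hbasic r L
    obtain ⟨Z, oZ, iZ, hZ⟩ := hbasic s L
    refine ⟨P ×ˢ Q, W ×ˢ Z, oP.prod oQ, oW.prod oZ, ⟨iP, iQ⟩, ⟨iW, iZ⟩, hL.subset ?_⟩
    rintro g ⟨⟨_, ⟨⟨p', q'⟩, ⟨hp', hq'⟩, rfl⟩, hpU, hqU⟩, ⟨_, ⟨⟨r', s'⟩, ⟨hr', hs'⟩, rfl⟩, hrV, hsV⟩⟩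
    obtain ⟨p', rfl⟩ := hsurj p'
    obtain ⟨q', rfl⟩ := hsurj q'
    obtain ⟨r', rfl⟩ := hsurj r'
    obtain ⟨s', rfl⟩ := hsurj s'
    simp only [pairMap, hmk] at hp' hq' hr' hs' hpU hqU hrV hsV
    exact ⟨p', q', r', s', hP _ hp', hQ _ hq', hW _ hr', hZ _ hs', hU' _ hpU, hU' _ hqU,
      hV' _ hrV, hV' _ hsV⟩
  · have hf' := hf.inv hact
    have shiftc : ∀ f' : G, IsLox act e (3 * δ) f' → ∀ R,
        close e R (fun n => act f' (act (f' ^ n) e)) (fun n => act (f' ^ n) e) := by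
      intro f' h' R
      obtain ⟨N, hN⟩ := convToInfty_iff.1 (h'.conv hact hD) R
      refine ⟨N, fun i hi j hj => ?_⟩
      simp only [← act_pow_succ hact]
      exact hN (i + 1) (by omega) j hj
    have hfix : actM f (mk (hf.pt hact hD)) = mk (hf.pt hact hD) := by
      rw [hmk, heq]
      exact shiftc f hf
    have hfix' : actM f (mk (hf'.pt hact hD)) = mk (hf'.pt hact hD) := by
      have h1 : actM f⁻¹ (mk (hf'.pt hact hD)) = mk (hf'.pt hact hD) := by
        rw [hmk, heq]
        exact shiftc f⁻¹ hf'
      conv_lhs => rw [← h1]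
      exact act_act_inv hisact f _
    have hdyn : ∀ U V : Set M, IsOpen U → IsOpen V → mk (hf'.pt hact hD) ∈ U →
        mk (hf.pt hact hD) ∈ V → ∃ N : ℕ, ∀ n : ℕ, N < n → actM (f ^ n) '' Uᶜ ⊆ V := by
      intro U V hU hV hxU hyV
      obtain ⟨R, hR⟩ := hopen U hU _ hxU
      obtain ⟨R', hR'⟩ := hopen V hV _ hyV
      obtain ⟨N, hN⟩ := hf.push hact hD R R'
      refine ⟨N, fun n hn => ?_⟩
      rintro _ ⟨z, hz, rfl⟩
      obtain ⟨b, rfl⟩ := hsurj z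
      rw [hmk]
      exact hR' _ (hN n hn b fun hcl => hz (hR b hcl))
    refine ⟨mk (hf'.pt hact hD), mk (hf.pt hact hD), ?_, ?_, hdyn⟩
    · intro h
      obtain ⟨C, hC⟩ := hf.far hact hD
      exact not_close_all_of_eventually (N := 1) (fun i hi j _ => hC i j hi) ((heq _ _).1 h.symm)
    · intro z
      refine ⟨fun hz => ?_, ?_⟩
      · by_contra hcon
        push Not at hcon
        obtain ⟨U, U', hU, hU', hxU, hzU, hd⟩ := hCH _ _ hcon.1.symm
        obtain ⟨V, V', hV, hV', hyV, hzV, hd'⟩ := hCH _ _ hcon.2.symm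
        obtain ⟨N, hN⟩ := hdyn U V hU hV hxU hyV
        have hpow : ∀ n : ℕ, actM (f ^ n) z = z := by
          intro n
          induction n with
          | zero => rw [pow_zero, hisact.1]
          | succ n ih => rw [pow_succ, hisact.2, hz, ih]
        have h1 : z ∈ V := by
          refine hN (N + 1) (by omega) ⟨z, fun hz' => ?_, hpow _⟩
          have : z ∈ closure U ∩ closure U' := ⟨subset_closure hz', subset_closure hzU⟩
          rw [hd] at this
          exact this
        have : z ∈ closure V ∩ closure V' := ⟨subset_closure h1, subset_closure hzV⟩
        rw [hd'] at this
        exact this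
      · rintro (rfl | rfl)
        · exact hfix'
        · exact hfix

end Forward

end AHProof

namespace AHProof

/-! ### The metric realization of a connected graph -/

section Realization

universe u

variable {V : Type u}

/-- A point of the realization: position `t ∈ [0,1]` on the oriented edge from `u` to `v`;
the degenerate `u = v`, `t = 0` represents the vertex `u`.  Each edge occurs with both
orientations, i.e. edges are doubled, which does not affect distances between vertices. -/
structure RPt (X : SimpleGraph V) where
  /-- initial vertex -/
  u : V
  /-- terminal vertex -/
  v : V
  /-- position on the edge -/
  t : ℝ
  t0 : 0 ≤ t
  t1 : t ≤ 1
  adj : X.Adj u v ∨ (u = v ∧ t = 0)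

namespace RPt

variable {X : SimpleGraph V}

/-- The two end vertices of the edge of a point. -/
def vert (P : RPt X) (i : Bool) : V := if i then P.v else P.u

/-- The distances to the two end vertices along the edge. -/
def wt (P : RPt X) (i : Bool) : ℝ := if i then 1 - P.t else P.t

/-- Length of the route from `P` to `Q` through end `i` of `P` and end `j` of `Q`. -/
noncomputable def via (P Q : RPt X) (i j : Bool) : ℝ :=
  P.wt i + X.dist (P.vert i) (Q.vert j) + Q.wt j

theorem wt_nonneg (P : RPt X) (i : Bool) : 0 ≤ P.wt i := by
  cases i
  · exact P.t0
  · simp only [wt, if_true]; linarith [P.t1]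

theorem vert_dist (P : RPt X) (i j : Bool) :
    (X.dist (P.vert i) (P.vert j) : ℝ) ≤ P.wt i + P.wt j := by
  have h : (X.dist P.u P.v : ℝ) ≤ 1 := by
    rcases P.adj with h | h
    · rw [SimpleGraph.dist_eq_one_iff_adj.2 h]; simp
    · rw [h.1]; simp
  have h' := P.t0
  have h'' := P.t1
  cases i <;> cases j <;> simp [vert, wt]
  · exact h'
  · exact_mod_cast h
  · rw [SimpleGraph.dist_comm]; exact_mod_cast h
  · exact h''

open Classical in
/-- The distance on the realization. -/
noncomputable def D (P Q : RPt X) : ℝ :=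
  if P.u = Q.u ∧ P.v = Q.v then |P.t - Q.t| else
    min (min (via P Q false false) (via P Q false true))
      (min (via P Q true false) (via P Q true true))

theorem D_same {P Q : RPt X} (h : P.u = Q.u ∧ P.v = Q.v) : D P Q = |P.t - Q.t| := if_pos h

theorem D_le_via (P Q : RPt X) (i j : Bool) : D P Q ≤ via P Q i j := by
  by_cases h : P.u = Q.u ∧ P.v = Q.v
  · rw [D_same h]
    have h1 := P.vert_dist i j
    have a1 := P.t0
    have a2 := P.t1
    have b1 := Q.t0
    have b2 := Q.t1
    rcases P.adj with hadj | ⟨hu, ht⟩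
    · rw [h.1, h.2] at hadj
      have e1 : X.dist Q.u Q.v = 1 := SimpleGraph.dist_eq_one_iff_adj.2 hadj
      have e2 : X.dist Q.v Q.u = 1 := SimpleGraph.dist_eq_one_iff_adj.2 hadj.symm
      cases i <;> cases j <;> simp [via, vert, wt, h, e1, e2, abs_le] <;>
        constructor <;> linarith
    · have hQ : Q.t = 0 := by
        rcases Q.adj with h2 | h2
        · rw [← h.1, ← h.2, hu] at h2
          exact absurd h2 (SimpleGraph.irrefl X)
        · exact h2.2
      rw [ht, hQ]
      have h2 := P.wt_nonneg i
      have h3 := Q.wt_nonneg j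
      simp only [sub_self, abs_zero, via]
      positivity
  · unfold D
    rw [if_neg h]
    cases i <;> cases j <;> simp

theorem D_cases (P Q : RPt X) :
    (P.u = Q.u ∧ P.v = Q.v) ∨ ∃ i j, D P Q = via P Q i j := by
  by_cases h : P.u = Q.u ∧ P.v = Q.v
  · exact Or.inl h
  · right
    unfold D
    rw [if_neg h]
    rcases min_choice (min (via P Q false false) (via P Q false true))
      (min (via P Q true false) (via P Q true true)) with h1 | h1 <;> rw [h1]
    · rcases min_choice (via P Q false false) (via P Q false true) with h2 | h2 <;> rw [h2]
      exacts [⟨_, _, rfl⟩, ⟨_, _, rfl⟩]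
    · rcases min_choice (via P Q true false) (via P Q true true) with h2 | h2 <;> rw [h2]
      exacts [⟨_, _, rfl⟩, ⟨_, _, rfl⟩]

theorem via_comm (P Q : RPt X) (i j : Bool) : via P Q i j = via Q P j i := by
  unfold via; rw [SimpleGraph.dist_comm]; ring

theorem D_comm_le (P Q : RPt X) : D P Q ≤ D Q P := by
  rcases D_cases Q P with h | ⟨i, j, h⟩
  · rw [D_same h, D_same ⟨h.1.symm, h.2.symm⟩, abs_sub_comm]
  · rw [h, ← via_comm]; exact D_le_via P Q j i

theorem same_wt {P Q : RPt X} (i : Bool) : P.wt i ≤ |P.t - Q.t| + Q.wt i := by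
  have h1 := le_abs_self (P.t - Q.t)
  have h2 := neg_le_abs (P.t - Q.t)
  cases i <;> simp [wt] <;> linarith

theorem same_vert {P Q : RPt X} (h : P.u = Q.u ∧ P.v = Q.v) (i : Bool) : P.vert i = Q.vert i := by
  cases i <;> simp [vert, h]

theorem D_triangle (hc : X.Connected) (P Q R : RPt X) : D P R ≤ D P Q + D Q R := by
  have tri := fun a b c => hc.dist_triangle (u := a) (v := b) (w := c)
  rcases D_cases P Q with h | ⟨i, j, h⟩
  · rcases D_cases Q R with h' | ⟨k, l, h'⟩
    · rw [D_same h, D_same h', D_same ⟨h.1.trans h'.1, h.2.trans h'.2⟩]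
      exact abs_sub_le _ _ _
    · rw [D_same h, h']
      refine (D_le_via P R k l).trans ?_
      unfold via
      rw [same_vert h]
      linarith [same_wt (P := P) (Q := Q) k]
  · rcases D_cases Q R with h' | ⟨k, l, h'⟩
    · rw [D_same h', h]
      refine (D_le_via P R i j).trans ?_
      unfold via
      rw [same_vert h']
      have := same_wt (P := R) (Q := Q) j
      rw [abs_sub_comm] at this
      linarith
    · rw [h, h']
      refine (D_le_via P R i l).trans ?_
      unfold via
      have h1 := tri (P.vert i) (Q.vert j) (R.vert l)
      have h2 := tri (Q.vert j) (Q.vert k) (R.vert l)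
      have h3 := Q.vert_dist j k
      have h4 : (X.dist (P.vert i) (R.vert l) : ℝ) ≤ X.dist (P.vert i) (Q.vert j) +
        (X.dist (Q.vert j) (Q.vert k) + X.dist (Q.vert k) (R.vert l)) := by
        exact_mod_cast h1.trans (by omega)
      linarith

/-- The pseudometric on the realization. -/
@[reducible] noncomputable def pseudo (hc : X.Connected) : PseudoMetricSpace (RPt X) where
  dist := D
  dist_self P := by rw [D_same ⟨rfl, rfl⟩]; simp
  dist_comm P Q := le_antisymm (D_comm_le P Q) (D_comm_le Q P)
  dist_triangle := D_triangle hc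

/-- The vertex `v` as a point of the realization. -/
def ofV (X : SimpleGraph V) (v : V) : RPt X := ⟨v, v, 0, le_refl _, zero_le_one, Or.inr ⟨rfl, rfl⟩⟩

theorem D_ofV (v w : V) : D (ofV X v) (ofV X w) = X.dist v w := by
  refine le_antisymm ((D_le_via _ _ false false).trans ?_) ?_
  · simp [via, wt, vert, ofV]
  · rcases D_cases (ofV X v) (ofV X w) with h | ⟨i, j, h⟩
    · have hvw : v = w := h.1
      rw [D_same h, hvw]
      simp [ofV]
    · rw [h]
      have h1 := (ofV X v).wt_nonneg i
      have h2 := (ofV X w).wt_nonneg j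
      have h3 : (ofV X v).vert i = v := by cases i <;> rfl
      have h4 : (ofV X w).vert j = w := by cases j <;> rfl
      unfold via
      rw [h3, h4]
      linarith

theorem D_vert_le (P : RPt X) (i : Bool) : D P (ofV X (P.vert i)) ≤ P.wt i := by
  refine (D_le_via _ _ i false).trans ?_
  simp [via, wt, vert, ofV]

/-- The point at position `t` (clamped to `[0,1]`) on an edge. -/
def onEdge {u v : V} (h : X.Adj u v) (t : ℝ) : RPt X :=
  ⟨u, v, max 0 (min 1 t), le_max_left _ _, max_le zero_le_one (min_le_left _ _), Or.inl h⟩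

/-- The image of a point under a graph automorphism given by a group action. -/
def smul {G : Type*} [Group G] [MulAction G V]
    (hinv : ∀ (g : G) (u v : V), X.Adj u v → X.Adj (g • u) (g • v)) (g : G) (P : RPt X) : RPt X :=
  ⟨g • P.u, g • P.v, P.t, P.t0, P.t1, by
    rcases P.adj with h | h
    · exact Or.inl (hinv g _ _ h)
    · exact Or.inr ⟨by rw [h.1], h.2⟩⟩

theorem dist_smul {G : Type*} [Group G] [MulAction G V] (hc : X.Connected)
    (hinv : ∀ (g : G) (u v : V), X.Adj u v → X.Adj (g • u) (g • v)) (g : G) (u v : V) :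
    X.dist (g • u) (g • v) = X.dist u v := by
  have key : ∀ (g : G) (u v : V), X.dist (g • u) (g • v) ≤ X.dist u v := by
    intro g u v
    obtain ⟨p, hp⟩ := hc.exists_walk_length_eq_dist u v
    let f : X →g X := ⟨fun v => g • v, fun h => hinv g _ _ h⟩
    have := SimpleGraph.dist_le (p.map f)
    rw [SimpleGraph.Walk.length_map, hp] at this
    exact this
  refine le_antisymm (key g u v) ?_
  have := key g⁻¹ (g • u) (g • v)
  simpa using this

theorem D_smul {G : Type*} [Group G] [MulAction G V] (hc : X.Connected)
    (hinv : ∀ (g : G) (u v : V), X.Adj u v → X.Adj (g • u) (g • v)) (g : G) (P Q : RPt X) :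
    D (smul hinv g P) (smul hinv g Q) = D P Q := by
  have hv : ∀ (P : RPt X) i, (smul hinv g P).vert i = g • P.vert i := by
    intro P i; cases i <;> rfl
  have hw : ∀ (P : RPt X) i, (smul hinv g P).wt i = P.wt i := by
    intro P i; cases i <;> rfl
  have hvia : ∀ i j, via (smul hinv g P) (smul hinv g Q) i j = via P Q i j := by
    intro i j
    unfold via
    rw [hv, hv, hw, hw, dist_smul hc hinv]
  unfold D
  simp only [hvia]
  by_cases h : P.u = Q.u ∧ P.v = Q.v
  · rw [if_pos h, if_pos ⟨congrArg (g • ·) h.1, congrArg (g • ·) h.2⟩]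
    rfl
  · rw [if_neg h, if_neg]
    exact fun h' => h ⟨smul_left_cancel g h'.1, smul_left_cancel g h'.2⟩

end RPt

/-- `x` and `y` are joined by a geodesic segment. -/
def Joined {S : Type*} [MetricSpace S] (x y : S) : Prop := ∃ Γ : Set S, IsGeodesicSegment Γ x y

theorem Joined.symm {S : Type*} [MetricSpace S] {x y : S} (h : Joined x y) : Joined y x := by
  obtain ⟨Γ, hΓ⟩ := h
  exact ⟨Γ, seg_symm hΓ⟩

theorem joined_iff {S : Type*} [MetricSpace S] {x y : S} : Joined x y ↔
    ∃ γ : ℝ → S, γ 0 = x ∧ γ (dist x y) = y ∧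
    ∀ s ∈ Set.Icc (0 : ℝ) (dist x y), ∀ t ∈ Set.Icc (0 : ℝ) (dist x y), s ≤ t →
      dist (γ s) (γ t) ≤ t - s := by
  constructor
  · rintro ⟨Γ, γ, h0, h1, h2, -⟩
    exact ⟨γ, h0, h1, fun s hs t ht hst => by
      rw [h2 s hs t ht, abs_sub_comm, abs_of_nonneg (by linarith)]⟩
  · rintro ⟨γ, h0, h1, h2⟩
    have hz : (0 : ℝ) ∈ Set.Icc (0 : ℝ) (dist x y) := ⟨le_refl _, dist_nonneg⟩
    have ho : dist x y ∈ Set.Icc (0 : ℝ) (dist x y) := ⟨dist_nonneg, le_refl _⟩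
    have key : ∀ s ∈ Set.Icc (0 : ℝ) (dist x y), ∀ t ∈ Set.Icc (0 : ℝ) (dist x y), s ≤ t →
      dist (γ s) (γ t) = |s - t| := by
      intro s hs t ht hst
      rw [abs_sub_comm, abs_of_nonneg (by linarith)]
      refine le_antisymm (h2 s hs t ht hst) ?_
      have a1 := h2 0 hz s hs hs.1
      have a2 := h2 t ht _ ho ht.2
      rw [h0] at a1
      rw [h1] at a2
      have := dist_triangle4 x (γ s) (γ t) y
      linarith
    refine ⟨_, γ, h0, h1, fun s hs t ht => ?_, rfl⟩
    rcases le_total s t with h | h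
    · exact key s hs t ht h
    · rw [dist_comm, abs_sub_comm]; exact key t ht s hs h

theorem Joined.trans {S : Type*} [MetricSpace S] {x y z : S} (h : Joined x y) (h' : Joined y z)
    (hd : dist x z = dist x y + dist y z) : Joined x z := by
  rw [joined_iff] at *
  obtain ⟨γ, h0, h1, h2⟩ := h
  obtain ⟨γ', h0', h1', h2'⟩ := h'
  have ha := dist_nonneg (x := x) (y := y)
  have hb := dist_nonneg (x := y) (y := z)
  refine ⟨fun s => if s ≤ dist x y then γ s else γ' (s - dist x y), ?_, ?_, ?_⟩
  · simp [ha, h0]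
  · simp only [hd]
    split_ifs with hle
    · have hyz : dist y z = 0 := by linarith
      rw [hyz, add_zero, h1]
      exact dist_eq_zero.1 hyz
    · simpa using h1'
  · intro s hs t ht hst
    rw [hd] at hs ht
    simp only
    split_ifs with c1 c2 c2
    · exact h2 s ⟨hs.1, c1⟩ t ⟨ht.1, c2⟩ hst
    · push Not at c2
      have a1 := h2 s ⟨hs.1, c1⟩ (dist x y) ⟨ha, le_refl _⟩ c1
      have a2 := h2' 0 ⟨le_refl _, hb⟩ (t - dist x y) ⟨by linarith, by linarith [ht.2]⟩
        (by linarith)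
      rw [h1] at a1
      rw [h0'] at a2
      have := dist_triangle (γ s) y (γ' (t - dist x y))
      linarith
    · linarith
    · push Not at c1 c2
      have := h2' (s - dist x y) ⟨by linarith, by linarith [hs.2]⟩ (t - dist x y)
        ⟨by linarith, by linarith [ht.2]⟩ (by linarith)
      linarith

/-- The realization of a connected graph with a group action: a geodesic space with an isometric
action, containing the vertices isometrically and `1`-densely. -/
theorem exists_realization {G : Type*} [Group G] [MulAction G V] (X : SimpleGraph V)
    (hc : X.Connected) (hinv : ∀ (g : G) (u v : V), X.Adj u v → X.Adj (g • u) (g • v)) :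
    ∃ (S : Type u) (_ : MetricSpace S) (ι : V → S) (act : G → S → S), GeodesicSpace S ∧
      IsIsometricAction act ∧ (∀ g v, act g (ι v) = ι (g • v)) ∧
      (∀ u v, dist (ι u) (ι v) = X.dist u v) ∧ ∀ p, ∃ v, dist p (ι v) ≤ 1 := by
  let _ : PseudoMetricSpace (RPt X) := RPt.pseudo hc
  have hdist : ∀ P Q : RPt X, dist (SeparationQuotient.mk P) (SeparationQuotient.mk Q) =
    RPt.D P Q := fun P Q => SeparationQuotient.dist_mk P Q
  have heq : ∀ P Q : RPt X, RPt.D P Q ≤ 0 → SeparationQuotient.mk P = SeparationQuotient.mk Q :=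
    fun P Q h => dist_le_zero.1 (by rw [hdist]; exact h)
  have hsurj := SeparationQuotient.surjective_mk (X := RPt X)
  -- geodesics inside one edge
  have hedge : ∀ P Q : RPt X, P.u = Q.u → P.v = Q.v → P.t ≤ Q.t →
      Joined (SeparationQuotient.mk P) (SeparationQuotient.mk Q) := by
    intro P Q hu hv ht
    have hPQ : dist (SeparationQuotient.mk P) (SeparationQuotient.mk Q) = Q.t - P.t := by
      rw [hdist, RPt.D_same ⟨hu, hv⟩, abs_sub_comm, abs_of_nonneg (by linarith)]
    rw [joined_iff]
    rcases P.adj with hadj | ⟨huv, h0⟩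
    · refine ⟨fun s => SeparationQuotient.mk (RPt.onEdge hadj (P.t + s)), ?_, ?_, ?_⟩
      · apply heq
        rw [RPt.D_same (P := RPt.onEdge hadj _) (Q := P) ⟨rfl, rfl⟩]
        simp [RPt.onEdge, P.t0, P.t1]
      · apply heq
        rw [hPQ, RPt.D_same (P := RPt.onEdge hadj _) (Q := Q) ⟨hu, hv⟩]
        simp [RPt.onEdge, Q.t0, Q.t1]
      · intro s hs t ht hst
        rw [hdist, RPt.D_same (P := RPt.onEdge hadj (P.t + s))
          (Q := RPt.onEdge hadj (P.t + t)) ⟨rfl, rfl⟩]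
        simp only [RPt.onEdge]
        have h1 := abs_max_sub_max_le_abs (min 1 (P.t + s)) (min 1 (P.t + t)) 0
        have h2 := abs_min_sub_min_le_max 1 (P.t + s) 1 (P.t + t)
        rw [max_comm 0, max_comm 0]
        refine h1.trans (h2.trans (max_le (by simpa using hst) ?_))
        rw [abs_le]
        constructor <;> linarith
    · have hQ : Q.t = 0 := by
        rcases Q.adj with h2 | h2
        · rw [← hu, ← hv, huv] at h2
          exact absurd h2 (SimpleGraph.irrefl X)
        · exact h2.2
      have h3 : dist (SeparationQuotient.mk P) (SeparationQuotient.mk Q) = 0 := by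
        rw [hPQ, h0, hQ]; simp
      have h4 := dist_eq_zero.1 h3
      rw [h3]
      exact ⟨fun _ => SeparationQuotient.mk P, rfl, h4, fun s hs t ht hst => by
        rw [dist_self]; linarith⟩
  have hedge' : ∀ P Q : RPt X, P.u = Q.u → P.v = Q.v →
      Joined (SeparationQuotient.mk P) (SeparationQuotient.mk Q) := by
    intro P Q hu hv
    rcases le_total P.t Q.t with h | h
    · exact hedge P Q hu hv h
    · exact (hedge Q P hu.symm hv.symm h).symm
  have hend : ∀ (P : RPt X) (i : Bool),
      Joined (SeparationQuotient.mk P) (SeparationQuotient.mk (RPt.ofV X (P.vert i))) := by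
    intro P i
    rcases P.adj with hadj | ⟨huv, h0⟩
    · cases i
      · have h1 := heq ⟨P.u, P.v, 0, le_refl _, zero_le_one, Or.inl hadj⟩ (RPt.ofV X (P.vert false))
          ((RPt.D_vert_le _ false).trans (le_of_eq rfl))
        rw [← h1]
        exact hedge' _ _ rfl rfl
      · have h1 := heq ⟨P.u, P.v, 1, zero_le_one, le_refl _, Or.inl hadj⟩ (RPt.ofV X (P.vert true))
          ((RPt.D_vert_le _ true).trans (by simp [RPt.wt]))
        rw [← h1]
        exact hedge' _ _ rfl rfl
    · have : P.vert i = P.u := by cases i <;> simp [RPt.vert, huv]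
      rw [this]
      exact hedge' _ _ rfl huv.symm
  have hvert : ∀ (n : ℕ) (u v : V), X.dist u v = n →
      Joined (SeparationQuotient.mk (RPt.ofV X u)) (SeparationQuotient.mk (RPt.ofV X v)) := by
    intro n
    induction n with
    | zero =>
      intro u v h
      rw [(hc.dist_eq_zero_iff).1 h]
      exact hedge' _ _ rfl rfl
    | succ n ih =>
      intro u v h
      obtain ⟨p, hp⟩ := hc.exists_walk_length_eq_dist u v
      cases p with
      | nil => rw [SimpleGraph.dist_self] at h; omega
      | @cons _ w _ hadj p =>
        rw [SimpleGraph.Walk.length_cons] at hp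
        have h1 := SimpleGraph.dist_le p
        have h2 := hc.dist_triangle (u := u) (v := w) (w := v)
        have h3 : X.dist u w = 1 := SimpleGraph.dist_eq_one_iff_adj.2 hadj
        have h4 : X.dist w v = n := by omega
        refine Joined.trans (y := SeparationQuotient.mk (RPt.ofV X w)) ?_ (ih w v h4) ?_
        · have e1 := heq ⟨u, w, 0, le_refl _, zero_le_one, Or.inl hadj⟩ (RPt.ofV X u)
            ((RPt.D_vert_le _ false).trans (le_of_eq rfl))
          rw [← e1]
          exact hend ⟨u, w, 0, le_refl _, zero_le_one, Or.inl hadj⟩ true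
        · rw [hdist, hdist, hdist, RPt.D_ofV, RPt.D_ofV, RPt.D_ofV, h, h3, h4]
          push_cast; ring
  refine ⟨SeparationQuotient (RPt X), inferInstance, fun v => SeparationQuotient.mk (RPt.ofV X v),
    fun g => SeparationQuotient.lift (fun P => SeparationQuotient.mk (RPt.smul hinv g P)) ?_,
    ?_, ⟨⟨?_, ?_⟩, ?_⟩, ?_, ?_, ?_⟩
  · intro P Q hPQ
    apply heq
    rw [RPt.D_smul hc, ← hdist, SeparationQuotient.mk_eq_mk.2 hPQ, dist_self]
  · intro x y
    obtain ⟨P, rfl⟩ := hsurj x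
    obtain ⟨Q, rfl⟩ := hsurj y
    rcases RPt.D_cases P Q with h | ⟨i, j, h⟩
    · exact hedge' P Q h.1 h.2
    · have h1 := RPt.D_vert_le P i
      have h2 := RPt.D_vert_le Q j
      have h3 := RPt.D_ofV (X := X) (P.vert i) (Q.vert j)
      rw [← hdist] at h h1 h2 h3
      unfold RPt.via at h
      rw [dist_comm] at h2
      have h4 := dist_triangle4 (SeparationQuotient.mk P)
        (SeparationQuotient.mk (RPt.ofV X (P.vert i)))
        (SeparationQuotient.mk (RPt.ofV X (Q.vert j))) (SeparationQuotient.mk Q)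
      have h5 := dist_triangle (SeparationQuotient.mk P)
        (SeparationQuotient.mk (RPt.ofV X (P.vert i)))
        (SeparationQuotient.mk (RPt.ofV X (Q.vert j)))
      have h6 := dist_triangle (SeparationQuotient.mk P)
        (SeparationQuotient.mk (RPt.ofV X (Q.vert j))) (SeparationQuotient.mk Q)
      exact ((hend P i).trans (hvert _ _ _ rfl) (by linarith)).trans (hend Q j).symm (by linarith)
  · intro x
    obtain ⟨P, rfl⟩ := hsurj x
    simp only [SeparationQuotient.lift_mk]
    congr 1
    cases P
    simp [RPt.smul]
  · intro g h x
    obtain ⟨P, rfl⟩ := hsurj x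
    simp only [SeparationQuotient.lift_mk]
    congr 1
    cases P
    simp [RPt.smul, mul_smul]
  · intro g
    refine Isometry.of_dist_eq fun x y => ?_
    obtain ⟨P, rfl⟩ := hsurj x
    obtain ⟨Q, rfl⟩ := hsurj y
    simp only [SeparationQuotient.lift_mk]
    rw [hdist, hdist, RPt.D_smul hc]
  · intro g v
    simp only [SeparationQuotient.lift_mk]
    rfl
  · intro u v
    rw [hdist, RPt.D_ofV]
  · intro p
    obtain ⟨P, rfl⟩ := hsurj p
    refine ⟨P.vert false, ?_⟩
    rw [hdist]
    exact (RPt.D_vert_le P false).trans P.t1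

end Realization

end AHProof

namespace AHProof

/-! ### Projection data and their strengthening -/

section Projections

universe u

variable {V : Type u} {G : Type*} [Group G] [MulAction G V]

/-- Coarse projection data: `d Y X Z` measures how far apart `X` and `Z` are seen from `Y`. -/
structure WProj (G : Type*) {V : Type u} [Group G] [MulAction G V] (d : V → V → V → ℕ)
    (θ : ℕ) : Prop where
  symm : ∀ Y X Z, d Y X Z = d Y Z X
  tri : ∀ Y X W Z, W ≠ Y → d Y X Z ≤ d Y X W + d Y W Z
  self : ∀ Y X, d Y X X ≤ θ
  behr : ∀ Y X Z, θ < d Y X Z → d X Y Z ≤ θ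
  fin : ∀ X Z, {Y | θ < d Y X Z}.Finite
  inv : ∀ (g : G) Y X Z, d (g • Y) (g • X) (g • Z) = d Y X Z
  base : ∀ Y Z, d Y Y Z ≤ θ

/-- Projection data for which a vertex `Y` seen between `X` and `Z` makes the views of `X` and `Y`
from `Z` coincide exactly. -/
structure SProj (G : Type*) {V : Type u} [Group G] [MulAction G V] (d : V → V → V → ℕ)
    (θ : ℕ) : Prop where
  symm : ∀ Y X Z, d Y X Z = d Y Z X
  tri : ∀ Y X W Z, W ≠ Y → d Y X Z ≤ d Y X W + d Y W Z
  self : ∀ Y X, d Y X X ≤ θ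
  view : ∀ Y X Z, θ < d Y X Z → ∀ W, d Z X W = d Z Y W
  fin : ∀ X Z, {Y | θ < d Y X Z}.Finite
  inv : ∀ (g : G) Y X Z, d (g • Y) (g • X) (g • Z) = d Y X Z
  base : ∀ Y Z, d Y Y Z ≤ θ

namespace WProj

variable {d : V → V → V → ℕ} {θ : ℕ}

/-- `X` and `Z` are related from `Y` if one of them lies far out between the other and `Y`. -/
def Rl (d : V → V → V → ℕ) (Θ : ℕ) (Y X Z : V) : Prop := Θ < d Z X Y ∨ Θ < d X Z Y

theorem Rl.symm {Θ : ℕ} {Y X Z : V} (h : Rl d Θ Y X Z) : Rl d Θ Y Z X := Or.symm h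

/-- `c` lies between `r` and `Y` (or equals `r`). -/
def Dom (d : V → V → V → ℕ) (L : ℕ) (Y c r : V) : Prop := r = c ∨ L < d c r Y

theorem behr' (h : WProj G d θ) {Y X Z : V} (h1 : θ < d Y X Z) : d X Z Y ≤ θ := by
  rw [h.symm]; exact h.behr Y X Z h1

theorem behr2 (h : WProj G d θ) {Y X Z : V} (h1 : θ < d Y X Z) : d Z X Y ≤ θ := by
  rw [h.symm Y] at h1
  exact h.behr' h1

/-- Passing from domination by `c` to domination by the initial vertex `p` of a chain. -/
theorem dom_step (h : WProj G d θ) {Y p q c z : V} (hp : p ≠ Y) (hc : c ≠ Y)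
    (hR : Rl d (10 * θ) Y p q) (h1 : Dom d (6 * θ) Y p q) (h2 : Dom d (6 * θ) Y p c)
    (h3 : Dom d (6 * θ) Y c q) (h4 : Dom d (6 * θ) Y c z) : Dom d (6 * θ) Y p z := by
  rcases h2 with rfl | h2
  · exact h4
  have e1 : d c Y p ≤ θ := h.behr' (Z := Y) (X := c) (Y := p) (by omega)
  have hcp : c ≠ p := by
    rintro rfl
    have := h.behr2 (Y := c) (X := c) (Z := Y) (by omega)
    have := h.base c Y
    omega
  have hpq : q ≠ p := by
    rintro rfl
    rcases h3 with h3 | h3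
    · exact hcp h3.symm
    · rw [h.symm] at h3; omega
  have h1 := h1.resolve_left hpq
  have e2 : d q p Y ≤ θ := h.behr _ _ _ (by omega)
  have e3 : 10 * θ < d p q Y := by
    rcases hR with hR | hR
    · omega
    · exact hR
  have key : ∀ w, Dom d (6 * θ) Y c w → d p w c ≤ θ := by
    rintro w (rfl | hw)
    · exact h.self _ _
    · have := h.tri c w p Y hcp.symm
      rw [h.symm c p Y] at this
      exact h.behr2 (X := w) (Z := p) (Y := c) (by omega)
  have k1 := key q h3
  have k2 := key z h4
  rw [h.symm] at k2
  have t1 := h.tri p q c Y hcp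
  have hz : z ≠ p ∨ z = p := ne_or_eq _ _
  rcases hz with hz | hz
  · right
    have t2 := h.tri p c z Y hz
    omega
  · exact Or.inl hz

/-- If `p` and `z` both dominate `q`, related to `p`, and `w`, related to `z`, then one of `p`, `z`
dominates the other. -/
theorem dom_both (h : WProj G d θ) {Y p q w z : V} (hp : p ≠ Y) (hz : z ≠ Y)
    (hR : Rl d (10 * θ) Y p q) (hR' : Rl d (10 * θ) Y w z) (h1 : Dom d (6 * θ) Y p q)
    (h2 : Dom d (6 * θ) Y p w) (h3 : Dom d (6 * θ) Y z q) (h4 : Dom d (6 * θ) Y z w) :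
    Dom d (6 * θ) Y p z ∨ Dom d (6 * θ) Y z p := by
  by_contra hcon
  push Not at hcon
  obtain ⟨n1, n2⟩ := hcon
  have hpz : z ≠ p := fun e => n1 (Or.inl e)
  have hpq : q ≠ p := by rintro rfl; exact n2 h3
  have hwz : w ≠ z := by rintro rfl; exact n1 h2
  have hqz : q ≠ z := by rintro rfl; exact n1 h1
  have hwp : w ≠ p := by rintro rfl; exact n2 h4
  have m1 : ¬ 6 * θ < d p z Y := fun e => n1 (Or.inr e)
  have m2 : ¬ 6 * θ < d z p Y := fun e => n2 (Or.inr e)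
  replace h1 := h1.resolve_left hpq
  replace h2 := h2.resolve_left hwp
  replace h3 := h3.resolve_left hqz
  replace h4 := h4.resolve_left hwz
  have e2 : d q p Y ≤ θ := h.behr _ _ _ (by omega)
  have e3 : 10 * θ < d p q Y := by
    rcases hR with hR | hR
    · omega
    · exact hR
  have e4 : d w z Y ≤ θ := h.behr _ _ _ (by omega)
  have e5 : 10 * θ < d z w Y := by
    rcases hR' with hR | hR
    · exact hR
    · omega
  have t1 := h.tri p q z Y hpz
  have b1 : d z q p ≤ θ := h.behr2 (Y := p) (X := q) (Z := z) (by omega)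
  have t2 := h.tri z q p Y hpz.symm
  have b2 : d p z Y ≤ θ := h.behr z p Y (by omega)
  have t3 := h.tri p w z Y hpz
  have b3 : d z w p ≤ θ := h.behr2 (Y := p) (X := w) (Z := z) (by omega)
  have t4 := h.tri z w p Y hpz.symm
  omega

/-- In a finite chain of related vertices some vertex dominates all the others. -/
theorem dom_chain (h : WProj G d θ) {Y : V} (n : ℕ) : ∀ f : ℕ → V,
    (∀ i ≤ n, f i ≠ Y) → (∀ i < n, Rl d (10 * θ) Y (f i) (f (i + 1))) →
    ∃ s ≤ n, ∀ r ≤ n, Dom d (6 * θ) Y (f s) (f r) := by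
  induction n with
  | zero =>
    intro f _ _
    refine ⟨0, le_refl _, fun r hr => ?_⟩
    rw [Nat.le_zero.1 hr]
    exact Or.inl rfl
  | succ n ih =>
    intro f hf hR
    rcases Nat.eq_zero_or_pos n with rfl | hn
    · rcases hR 0 (by omega) with hr | hr
      · refine ⟨1, by omega, fun r hr' => ?_⟩
        interval_cases r
        · right; simp at hr; omega
        · exact Or.inl rfl
      · refine ⟨0, by omega, fun r hr' => ?_⟩
        interval_cases r
        · exact Or.inl rfl
        · right; simp at hr; omega
    · obtain ⟨s, hs, hs'⟩ := ih f (fun i hi => hf i (by omega)) (fun i hi => hR i (by omega))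
      obtain ⟨t, ht, ht'⟩ := ih (fun i => f (i + 1)) (fun i hi => hf _ (by omega))
        (fun i hi => hR _ (by omega))
      have tt : ∀ r, 1 ≤ r → r ≤ n + 1 → Dom d (6 * θ) Y (f (t + 1)) (f r) := by
        intro r h1 h2
        have := ht' (r - 1) (by omega)
        rwa [Nat.sub_add_cancel h1] at this
      have hR0 := hR 0 (by omega)
      have hRn := hR n (by omega)
      have up : ∀ c, (∀ r ≤ n, Dom d (6 * θ) Y (f c) (f r)) → c ≤ n + 1 →
          Dom d (6 * θ) Y (f c) (f (n + 1)) →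
          ∃ s ≤ n + 1, ∀ r ≤ n + 1, Dom d (6 * θ) Y (f s) (f r) := by
        intro c h1 h2 h3
        refine ⟨c, h2, fun r hr => ?_⟩
        rcases Nat.lt_or_ge n r with h4 | h4
        · rwa [show r = n + 1 by omega]
        · exact h1 r h4
      have up' : ∀ c, (∀ r, 1 ≤ r → r ≤ n + 1 → Dom d (6 * θ) Y (f c) (f r)) → c ≤ n + 1 →
          Dom d (6 * θ) Y (f c) (f 0) →
          ∃ s ≤ n + 1, ∀ r ≤ n + 1, Dom d (6 * θ) Y (f s) (f r) := by
        intro c h1 h2 h3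
        refine ⟨c, h2, fun r hr => ?_⟩
        rcases Nat.eq_zero_or_pos r with h4 | h4
        · rwa [h4]
        · exact h1 r h4 hr
      rcases Nat.eq_zero_or_pos s with rfl | hs0
      · rcases Nat.lt_or_ge t n with htn | htn
        · refine up 0 hs' (by omega) ?_
          exact h.dom_step (hf 0 (by omega)) (hf (t + 1) (by omega)) hR0 (hs' 1 hn)
            (hs' (t + 1) (by omega)) (tt 1 (by omega) (by omega)) (tt (n + 1) (by omega) (by omega))
        · have e : t = n := by omega
          subst e
          rcases h.dom_both (hf 0 (by omega)) (hf _ (le_refl _)) hR0 hRn (hs' 1 hn)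
            (hs' _ (le_refl _)) (tt 1 (by omega) (by omega)) (tt t (by omega) (by omega)) with h1 | h1
          · exact up 0 hs' (by omega) h1
          · exact up' _ tt (by omega) h1
      · rcases Nat.lt_or_ge t n with htn | htn
        · have d1 := hs' (t + 1) (by omega)
          have d2 := tt s hs0 (by omega)
          have e : f s = f (t + 1) := by
            rcases d1 with d1 | d1
            · exact d1.symm
            rcases d2 with d2 | d2
            · exact d2
            have := h.behr _ _ _ (show θ < d (f s) (f (t + 1)) Y by omega)
            omega
          refine up s hs' (by omega) ?_
          rw [e]
          exact tt _ (by omega) (by omega)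
        · have e : t = n := by omega
          subst e
          refine up' (t + 1) tt (by omega) ?_
          exact h.dom_step (hf _ (by omega)) (hf s (by omega)) hRn.symm (tt t hn (by omega))
            (tt s hs0 (by omega)) (hs' t (by omega)) (hs' 0 (by omega))

theorem rl_ne (h : WProj G d θ) {Y X Z : V} (hR : Rl d (10 * θ) Y X Z) : X ≠ Y ∧ Z ≠ Y := by
  constructor
  · rintro rfl
    have h1 := h.self Z X
    have h2 := h.base X Z
    rw [h.symm] at h2
    rcases hR with hR | hR
    · omega
    · omega
  · rintro rfl
    have h1 := h.self X Z
    have h2 := h.base Z X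
    rw [h.symm] at h2
    rcases hR with hR | hR <;> omega

/-- The equivalence relation of not being distinguishable from `Y`, generated by `Rl`. -/
def Eqv (d : V → V → V → ℕ) (θ : ℕ) (Y : V) : V → V → Prop :=
  Relation.ReflTransGen (Rl d (10 * θ) Y)

theorem Eqv.symm {Y X Z : V} (h : Eqv d θ Y X Z) : Eqv d θ Y Z X := by
  induction h with
  | refl => exact Relation.ReflTransGen.refl
  | tail _ h1 ih => exact (Relation.ReflTransGen.single (Rl.symm h1)).trans ih

theorem exists_chain {α : Type*} {R : α → α → Prop} {a b : α} (h : Relation.ReflTransGen R a b) :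
    ∃ (n : ℕ) (f : ℕ → α), f 0 = a ∧ f n = b ∧ ∀ i < n, R (f i) (f (i + 1)) := by
  induction h using Relation.ReflTransGen.head_induction_on with
  | refl => exact ⟨0, fun _ => b, rfl, rfl, fun i hi => by omega⟩
  | @head a c hac _ ih =>
    obtain ⟨n, f, h0, h1, h2⟩ := ih
    refine ⟨n + 1, fun k => Nat.casesOn k a f, rfl, h1, fun i hi => ?_⟩
    cases i with
    | zero => simpa [h0] using hac
    | succ i => exact h2 i (by omega)

theorem eqv_bound (h : WProj G d θ) {Y X Z : V} (hR : Eqv d θ Y X Z) : d Y X Z ≤ 2 * θ := by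
  obtain ⟨n, f, h0, h1, h2⟩ := exists_chain hR
  rcases Nat.eq_zero_or_pos n with rfl | hn
  · rw [← h0, ← h1]
    have := h.self Y (f 0)
    omega
  have hf : ∀ i ≤ n, f i ≠ Y := by
    intro i hi
    rcases Nat.lt_or_ge i n with h3 | h3
    · exact (h.rl_ne (h2 i h3)).1
    · have := (h.rl_ne (h2 (n - 1) (by omega))).2
      rwa [show n - 1 + 1 = i by omega] at this
  obtain ⟨s, hs, hs'⟩ := h.dom_chain n f hf h2
  have key : ∀ r ≤ n, d Y (f r) (f s) ≤ θ := by
    intro r hr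
    rcases hs' r hr with h3 | h3
    · rw [h3]; exact h.self _ _
    · exact h.behr2 (X := f r) (Y := f s) (Z := Y) (by omega)
  have k1 := key 0 (by omega)
  have k2 := key n le_rfl
  rw [h0] at k1
  rw [h1, h.symm] at k2
  have := h.tri Y X (f s) Z (hf s hs)
  omega

theorem eqv_ne (h : WProj G d θ) {Y X Z : V} (hR : Eqv d θ Y X Z) (hX : X ≠ Y) : Z ≠ Y := by
  induction hR with
  | refl => exact hX
  | tail _ h1 _ => exact (h.rl_ne h1).2

theorem eqv_base (h : WProj G d θ) {Y Z : V} (hR : Eqv d θ Y Y Z) : Z = Y := by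
  by_contra hne
  exact h.eqv_ne hR.symm hne rfl

/-- The strengthened projection distance: the supremum over indistinguishability classes. -/
noncomputable def sd (d : V → V → V → ℕ) (θ : ℕ) (Y X Z : V) : ℕ :=
  sSup {n | ∃ X' Z', Eqv d θ Y X X' ∧ Eqv d θ Y Z Z' ∧ n = d Y X' Z'}

theorem sd_bound (h : WProj G d θ) {Y X Z X' Z' : V} (hX : X ≠ Y) (hZ : Z ≠ Y)
    (h1 : Eqv d θ Y X X') (h2 : Eqv d θ Y Z Z') : d Y X' Z' ≤ d Y X Z + 4 * θ := by
  have b1 := h.eqv_bound h1.symm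
  have b2 := h.eqv_bound h2
  have t1 := h.tri Y X' X Z' hX
  have t2 := h.tri Y X Z Z' hZ
  omega

theorem sd_bdd (h : WProj G d θ) (Y X Z : V) :
    BddAbove {n | ∃ X' Z', Eqv d θ Y X X' ∧ Eqv d θ Y Z Z' ∧ n = d Y X' Z'} := by
  refine ⟨d Y X Z + 4 * θ + θ, ?_⟩
  rintro n ⟨X', Z', h1, h2, rfl⟩
  by_cases hX : X = Y
  · subst hX
    rw [h.eqv_base h1]
    have := h.base X Z'
    omega
  by_cases hZ : Z = Y
  · subst hZ
    rw [h.eqv_base h2]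
    have := h.base Z X'
    rw [h.symm] at this
    omega
  have := h.sd_bound hX hZ h1 h2
  omega

theorem le_sd (h : WProj G d θ) {Y X Z X' Z' : V}
    (h1 : Eqv d θ Y X X') (h2 : Eqv d θ Y Z Z') : d Y X' Z' ≤ sd d θ Y X Z :=
  le_csSup (h.sd_bdd Y X Z) ⟨X', Z', h1, h2, rfl⟩

theorem sd_le {Y X Z : V} {n : ℕ}
    (hn : ∀ X' Z', Eqv d θ Y X X' → Eqv d θ Y Z Z' → d Y X' Z' ≤ n) : sd d θ Y X Z ≤ n := by
  refine csSup_le ⟨_, X, Z, Relation.ReflTransGen.refl, Relation.ReflTransGen.refl, rfl⟩ ?_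
  rintro m ⟨X', Z', h1, h2, rfl⟩
  exact hn X' Z' h1 h2

theorem d_le_sd (h : WProj G d θ) (Y X Z : V) : d Y X Z ≤ sd d θ Y X Z :=
  h.le_sd Relation.ReflTransGen.refl Relation.ReflTransGen.refl

theorem sd_base (h : WProj G d θ) (Y Z : V) : sd d θ Y Y Z ≤ θ := by
  refine sd_le fun X' Z' h1 _ => ?_
  rw [h.eqv_base h1]
  exact h.base _ _

theorem sd_symm_le (h : WProj G d θ) (Y X Z : V) : sd d θ Y X Z ≤ sd d θ Y Z X :=
  sd_le fun X' Z' h1 h2 => by rw [h.symm]; exact h.le_sd h2 h1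

theorem sd_big (h : WProj G d θ) {Y X Z : V} (hb : θ < sd d θ Y X Z) :
    X ≠ Y ∧ Z ≠ Y ∧ sd d θ Y X Z ≤ d Y X Z + 4 * θ := by
  have hX : X ≠ Y := by
    rintro rfl
    have := h.sd_base X Z
    omega
  have hZ : Z ≠ Y := by
    rintro rfl
    have := h.sd_base Z X
    have := h.sd_symm_le Z X Z
    omega
  exact ⟨hX, hZ, sd_le fun X' Z' h1 h2 => h.sd_bound hX hZ h1 h2⟩

/-- The exact form of the Behrstock inequality, which is the point of the modification `sd`. -/
theorem sd_view (h : WProj G d θ) {Y X Z : V} (hb : 14 * θ < sd d θ Y X Z) (W : V) :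
    sd d θ Z X W = sd d θ Z Y W := by
  obtain ⟨-, -, h1⟩ := h.sd_big (by omega : θ < sd d θ Y X Z)
  have hE : Eqv d θ Z X Y := Relation.ReflTransGen.single (Or.inl (by omega))
  apply le_antisymm
  · exact sd_le fun X' Z' h1 h2 => h.le_sd (hE.symm.trans h1) h2
  · exact sd_le fun X' Z' h1 h2 => h.le_sd (hE.trans h1) h2

theorem eqv_smul (h : WProj G d θ) (g : G) {Y X Z : V} (hR : Eqv d θ Y X Z) :
    Eqv d θ (g • Y) (g • X) (g • Z) := by
  refine Relation.ReflTransGen.lift (r := Rl d (10 * θ) Y) (p := Rl d (10 * θ) (g • Y))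
    (fun v => g • v) (fun a b hab => ?_) _ _ hR
  simp only [Function.onFun]
  unfold Rl at *
  rwa [h.inv, h.inv]

theorem sd_smul_le (h : WProj G d θ) (g : G) (Y X Z : V) :
    sd d θ Y X Z ≤ sd d θ (g • Y) (g • X) (g • Z) :=
  sd_le fun X' Z' h1 h2 => by
    rw [← h.inv g]
    exact h.le_sd (h.eqv_smul g h1) (h.eqv_smul g h2)

/-- Coarse projection data can be strengthened by taking suprema over classes. -/
theorem strong (h : WProj G d θ) : SProj G (sd d θ) (14 * θ) where
  symm Y X Z := le_antisymm (h.sd_symm_le _ _ _) (h.sd_symm_le _ _ _)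
  tri Y X W Z hW := sd_le fun X' Z' h1 h2 => by
    have t := h.tri Y X' W Z' hW
    have t1 := h.le_sd h1 (Relation.ReflTransGen.refl (a := W))
    have t2 := h.le_sd (Relation.ReflTransGen.refl (a := W)) h2
    omega
  self Y X := by
    by_contra hcon
    obtain ⟨-, -, h1⟩ := h.sd_big (by omega : θ < sd d θ Y X X)
    have := h.self Y X
    omega
  view Y X Z hb W := h.sd_view hb W
  fin X Z := by
    refine (h.fin X Z).subset fun Y hY => ?_
    have hY : 14 * θ < sd d θ Y X Z := hY
    obtain ⟨-, -, h1⟩ := h.sd_big (by omega : θ < sd d θ Y X Z)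
    show θ < d Y X Z
    omega
  inv g Y X Z := by
    refine le_antisymm ?_ (h.sd_smul_le g Y X Z)
    have := h.sd_smul_le g⁻¹ (g • Y) (g • X) (g • Z)
    simpa using this
  base Y Z := (h.sd_base Y Z).trans (by omega)

end WProj

end Projections

end AHProof

namespace AHProof

/-! ### The projection graph -/

section ProjGraph

universe u

variable {V : Type u} {G : Type*} [Group G] [MulAction G V]

/-- The vertices between `X` and `Z`. -/
def btw (d : V → V → V → ℕ) (K : ℕ) (X Z : V) : Set V := {Y | K < d Y X Z}

/-- The projection graph: two vertices are adjacent if no vertex lies between them. -/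
def pgraph (d : V → V → V → ℕ) (hs : ∀ Y X Z, d Y X Z = d Y Z X) (K : ℕ) : SimpleGraph V where
  Adj X Z := X ≠ Z ∧ ∀ Y, d Y X Z ≤ K
  symm := ⟨fun X Z h => ⟨h.1.symm, fun Y => by rw [hs]; exact h.2 Y⟩⟩
  loopless := ⟨fun _ h => h.1 rfl⟩

namespace SProj

variable {d : V → V → V → ℕ} {θ K : ℕ}

theorem view' (h : SProj G d θ) {Y X Z : V} (h1 : θ < d Y X Z) (W : V) : d X Z W = d X Y W := by
  rw [h.symm] at h1
  exact h.view _ _ _ h1 W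

theorem behr (h : SProj G d θ) {Y X Z : V} (h1 : θ < d Y X Z) : d Z X Y ≤ θ := by
  rw [h.view _ _ _ h1]; exact h.self _ _

theorem ne_left (h : SProj G d θ) {Y X Z : V} (h1 : θ < d Y X Z) : X ≠ Y := by
  rintro rfl
  have := h.base X Z
  omega

theorem ne_right (h : SProj G d θ) {Y X Z : V} (h1 : θ < d Y X Z) : Z ≠ Y := by
  rw [h.symm] at h1
  exact h.ne_left h1

/-- If `W` is between `X` and `Z` and `Y` is between `X` and `W`, then from `Y` the vertices `W`
and `Z` look the same. -/
theorem nest (h : SProj G d θ) {X Y Z W : V} (hW : θ < d W X Z) (hY : θ < d Y X W) (U : V) :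
    d Y Z U = d Y W U := by
  have h1 := h.view _ _ _ hY Z
  rw [h1] at hW
  exact h.view' hW U

theorem btw_fin (h : SProj G d θ) (hK : 3 * θ ≤ K) (X Z : V) : (btw d K X Z).Finite :=
  (h.fin X Z).subset fun Y (hY : K < d Y X Z) => show θ < d Y X Z by omega

theorem btw_symm (h : SProj G d θ) (X Z : V) : btw d K X Z = btw d K Z X := by
  unfold btw
  simp only [h.symm _ X Z]

theorem btw_sub (h : SProj G d θ) (hK : 3 * θ ≤ K) {X Z W : V} (hW : W ∈ btw d K X Z) :
    btw d K X W ⊆ btw d K X Z := by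
  intro Y (hY : K < d Y X W)
  have hW : K < d W X Z := hW
  show K < d Y X Z
  rw [h.symm, h.nest (by omega : θ < d W X Z) (by omega : θ < d Y X W), h.symm]
  exact hY

theorem btw_ncard_lt (h : SProj G d θ) (hK : 3 * θ ≤ K) {X Z W : V} (hW : W ∈ btw d K X Z) :
    (btw d K X W).ncard < (btw d K X Z).ncard := by
  apply Set.ncard_lt_ncard _ (h.btw_fin hK X Z)
  refine ⟨h.btw_sub hK hW, fun hsub => ?_⟩
  have h1 : K < d W X W := hsub hW
  exact h.ne_right (by omega : θ < d W X W) rfl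

theorem exists_walk (h : SProj G d θ) (hK : 3 * θ ≤ K) (n : ℕ) : ∀ X Z : V,
    (btw d K X Z).ncard ≤ n → ∃ p : (pgraph d h.symm K).Walk X Z,
      ∀ v ∈ p.support, v = X ∨ v = Z ∨ v ∈ btw d K X Z := by
  induction n with
  | zero =>
    intro X Z hn
    by_cases hXZ : X = Z
    · subst hXZ
      exact ⟨SimpleGraph.Walk.nil, fun v hv => by simp at hv; exact Or.inl hv⟩
    have h0 := (Set.ncard_eq_zero (h.btw_fin hK X Z)).1 (Nat.le_zero.1 hn)
    have hadj : (pgraph d h.symm K).Adj X Z := by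
      refine ⟨hXZ, fun Y => ?_⟩
      by_contra hc
      have : Y ∈ btw d K X Z := not_le.1 hc
      rw [h0] at this
      exact this
    refine ⟨SimpleGraph.Walk.cons hadj SimpleGraph.Walk.nil, fun v hv => ?_⟩
    simp at hv
    tauto
  | succ n ih =>
    intro X Z hn
    rcases (btw d K X Z).eq_empty_or_nonempty with h0 | ⟨W, hW⟩
    · exact ih X Z (by rw [h0]; simp)
    · have hW' : W ∈ btw d K Z X := by rw [h.btw_symm]; exact hW
      have c1 := h.btw_ncard_lt hK hW
      have c2 := h.btw_ncard_lt hK hW'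
      have s1 := h.btw_sub hK hW
      have s2 := h.btw_sub hK hW'
      rw [h.btw_symm Z X, h.btw_symm Z W] at c2 s2
      obtain ⟨p, hp⟩ := ih X W (by omega)
      obtain ⟨q, hq⟩ := ih W Z (by omega)
      refine ⟨p.append q, fun v hv => ?_⟩
      rw [SimpleGraph.Walk.mem_support_append_iff] at hv
      rcases hv with hv | hv
      · rcases hp v hv with rfl | rfl | h1
        · exact Or.inl rfl
        · exact Or.inr (Or.inr hW)
        · exact Or.inr (Or.inr (s1 h1))
      · rcases hq v hv with rfl | rfl | h1
        · exact Or.inr (Or.inr hW)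
        · exact Or.inr (Or.inl rfl)
        · exact Or.inr (Or.inr (s2 h1))

theorem conn (h : SProj G d θ) (hK : 3 * θ ≤ K) [Nonempty V] :
    (pgraph d h.symm K).Connected :=
  { preconnected := fun X Z => (h.exists_walk hK _ X Z le_rfl).choose.reachable }

theorem adj_view (h : SProj G d θ) (hK : 3 * θ ≤ K) {X X' Y : V}
    (hadj : (pgraph d h.symm K).Adj X X') (hY : θ < d Y X X') :
    X = Y ∨ (pgraph d h.symm K).Adj X Y := by
  by_contra hcon
  push Not at hcon
  obtain ⟨h1, h2⟩ := hcon
  have : ∃ W, K < d W X Y := by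
    by_contra hW
    push Not at hW
    exact h2 ⟨h1, hW⟩
  obtain ⟨W, hW⟩ := this
  have e1 := h.nest hY (by omega : θ < d W X Y) X
  have e2 := hadj.2 W
  rw [h.symm, e1, h.symm] at e2
  omega

theorem far_view_adj (h : SProj G d θ) (hK : 3 * θ ≤ K) [Nonempty V] {X X' Y : V}
    (hadj : (pgraph d h.symm K).Adj X X') (hY : 3 ≤ (pgraph d h.symm K).dist X Y) (U : V) :
    d Y X U = d Y X' U := by
  have hc := h.conn hK
  obtain ⟨W, hW, hmin⟩ : ∃ W ∈ btw d K X Y, ∀ W' ∈ btw d K X Y,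
      (btw d K W Y).ncard ≤ (btw d K W' Y).ncard := by
    apply Set.exists_min_image _ _ (h.btw_fin hK X Y)
    rw [Set.nonempty_iff_ne_empty]
    intro h0
    have hXY : X ≠ Y := by rintro rfl; simp at hY
    have : (pgraph d h.symm K).Adj X Y := ⟨hXY, fun Z => by
      by_contra hZ
      have : Z ∈ btw d K X Y := not_le.1 hZ
      rw [h0] at this; exact this⟩
    have := SimpleGraph.dist_eq_one_iff_adj.2 this
    omega
  have hW' : K < d W X Y := hW
  have hWY : (pgraph d h.symm K).Adj W Y := by
    refine ⟨(h.ne_right (by omega : θ < d W X Y)).symm, fun Z => ?_⟩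
    by_contra hZ
    have hZ : Z ∈ btw d K Y W := by rw [h.btw_symm]; exact not_le.1 hZ
    have m1 : W ∈ btw d K Y X := by rw [h.btw_symm]; exact hW
    have m2 := h.btw_sub hK m1 hZ
    have m3 := hmin Z (by rw [h.btw_symm]; exact m2)
    have m4 := h.btw_ncard_lt hK hZ
    rw [h.btw_symm Y Z, h.btw_symm Y W] at m4
    omega
  have t1 : (pgraph d h.symm K).dist W Y = 1 := SimpleGraph.dist_eq_one_iff_adj.2 hWY
  have t2 := hc.dist_triangle (u := X) (v := W) (w := Y)
  have n1 : ¬ (pgraph d h.symm K).Adj X W := fun hh => by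
    have := SimpleGraph.dist_eq_one_iff_adj.2 hh
    omega
  have n2 : X ≠ W := by rintro rfl; omega
  have s1 : d W X X' ≤ θ := by
    by_contra hh
    rcases h.adj_view hK hadj (not_le.1 hh) with e | e
    exacts [n2 e, n1 e]
  have n3 : X' ≠ W := by rintro rfl; exact n1 hadj
  have s2 := h.tri W X X' Y n3
  rw [h.view _ _ _ (by omega : θ < d W X Y), h.view _ _ _ (by omega : θ < d W X' Y)]

/-- Closest-point-projection principle: vertices much closer to `X` than `Y` is look the same as `X`
seen from `Y`. -/
theorem far_view (h : SProj G d θ) (hK : 3 * θ ≤ K) [Nonempty V] {X X' Y : V}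
    (hY : (pgraph d h.symm K).dist X X' + 3 ≤ (pgraph d h.symm K).dist X Y) (U : V) :
    d Y X U = d Y X' U := by
  have hc := h.conn hK
  obtain ⟨p, hp⟩ := hc.exists_walk_length_eq_dist X X'
  rw [← hp] at hY
  clear hp
  induction p with
  | nil => rfl
  | @cons a b c hadj p ih =>
    rw [SimpleGraph.Walk.length_cons] at hY
    have t1 : (pgraph d h.symm K).dist a b = 1 := SimpleGraph.dist_eq_one_iff_adj.2 hadj
    have t2 := hc.dist_triangle (u := a) (v := b) (w := Y)
    rw [h.far_view_adj hK hadj (by omega), ih (by omega)]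

/-- Two vertices between `X` and `Z` are linearly ordered. -/
theorem btw_total (h : SProj G d θ) (hK : 3 * θ ≤ K) {X Z v w : V} (hv : v ∈ btw d K X Z)
    (hw : w ∈ btw d K X Z) (hne : v ≠ w) : v ∈ btw d K X w ∨ w ∈ btw d K X v := by
  have hv : K < d v X Z := hv
  have hw : K < d w X Z := hw
  have t1 := h.tri v X w Z hne.symm
  have t2 := h.tri w X v Z hne
  by_cases c : θ < d v w Z
  · right
    show K < d w X v
    rw [h.symm, ← h.view' c X, h.symm]
    exact hw
  · have c1 : θ < d v X w := by omega
    have c2 := h.behr c1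
    left
    show K < d v X w
    rw [h.symm, ← h.view' (by omega : θ < d w v Z) X, h.symm]
    exact hv

theorem rank_inj (h : SProj G d θ) (hK : 3 * θ ≤ K) {X Z v w : V} (hv : v ∈ btw d K X Z)
    (hw : w ∈ btw d K X Z) (he : (btw d K X v).ncard = (btw d K X w).ncard) : v = w := by
  by_contra hne
  rcases h.btw_total hK hv hw hne with h1 | h1
  · have := h.btw_ncard_lt hK h1; omega
  · have := h.btw_ncard_lt hK h1; omega

theorem rank_adj (h : SProj G d θ) (hK : 3 * θ ≤ K) {X Z Z' : V}
    (hadj : (pgraph d h.symm K).Adj Z Z') :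
    (btw d K X Z).ncard ≤ (btw d K X Z').ncard + 2 := by
  -- At most one vertex lost in passing from `Z` to `Z'` is seen between `X` and `Z'` with the
  -- weaker constant `θ`, and at most one is not.
  have hsub : btw d K X Z ⊆ btw d K X Z' ∪
      ({v | v ∈ btw d K X Z \ btw d K X Z' ∧ θ < d v X Z'} ∪
        {v | v ∈ btw d K X Z \ btw d K X Z' ∧ d v X Z' ≤ θ}) := by
    intro v hv
    by_cases h1 : v ∈ btw d K X Z'
    · exact Or.inl h1
    · by_cases h2 : θ < d v X Z'
      · exact Or.inr (Or.inl ⟨⟨hv, h1⟩, h2⟩)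
      · exact Or.inr (Or.inr ⟨⟨hv, h1⟩, not_lt.1 h2⟩)
  have s1 : {v | v ∈ btw d K X Z \ btw d K X Z' ∧ θ < d v X Z'}.Subsingleton := by
    have key : ∀ v w, v ∈ btw d K X w → v ∉ btw d K X Z' → θ < d w X Z' → False := by
      intro v w hvw hv hw
      have hvw : K < d v X w := hvw
      apply hv
      show K < d v X Z'
      rw [h.symm, h.nest hw (by omega : θ < d v X w), h.symm]
      exact hvw
    rintro v ⟨⟨hv, hv'⟩, hv2⟩ w ⟨⟨hw, hw'⟩, hw2⟩
    by_contra hne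
    rcases h.btw_total hK hv hw hne with h1 | h1
    · exact key v w h1 hv' hw2
    · exact key w v h1 hw' hv2
  have s2 : {v | v ∈ btw d K X Z \ btw d K X Z' ∧ d v X Z' ≤ θ}.Subsingleton := by
    have key : ∀ v w, v ∈ btw d K X w → v ∈ btw d K X Z → w ∈ btw d K X Z →
        d v X Z' ≤ θ → d w X Z' ≤ θ → False := by
      intro v w hvw hv hw hv' hw'
      have hvw : K < d v X w := hvw
      have hv : K < d v X Z := hv
      have hw : K < d w X Z := hw
      have e1 := h.view _ _ _ (by omega : θ < d v X w)
      rw [e1] at hw hw'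
      have e2 := h.view' (by omega : θ < d w v Z)
      have hZ'v : Z' ≠ v := by
        rintro rfl
        have e4 : d w Z' Z ≤ K := by rw [h.symm]; exact hadj.2 w
        omega
      have hXv := (h.ne_left (by omega : θ < d v X Z))
      have t := h.tri v X Z' Z hZ'v
      have e3 : θ < d v w Z' := by
        rw [← e2, h.symm]; omega
      have e4 := hadj.2 w
      rw [h.symm, h.view _ _ _ (by rw [h.symm] at e3; exact e3 : θ < d v Z' w)] at e4
      omega
    rintro v ⟨⟨hv, hv'⟩, hv2⟩ w ⟨⟨hw, hw'⟩, hw2⟩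
    by_contra hne
    rcases h.btw_total hK hv hw hne with h1 | h1
    · exact key v w h1 hv hw hv2 hw2
    · exact key w v h1 hw hv hw2 hv2
  have f1 := s1.finite
  have f2 := s2.finite
  have c0 := Set.ncard_le_ncard hsub ((h.btw_fin hK X Z').union (f1.union f2))
  have c1 := Set.ncard_union_le (btw d K X Z')
      ({v | v ∈ btw d K X Z \ btw d K X Z' ∧ θ < d v X Z'} ∪
        {v | v ∈ btw d K X Z \ btw d K X Z' ∧ d v X Z' ≤ θ})
  have c2 := Set.ncard_union_le {v | v ∈ btw d K X Z \ btw d K X Z' ∧ θ < d v X Z'}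
        {v | v ∈ btw d K X Z \ btw d K X Z' ∧ d v X Z' ≤ θ}
  have c3 := (Set.ncard_le_one f1).2 fun a ha b hb => s1 ha hb
  have c4 := (Set.ncard_le_one f2).2 fun a ha b hb => s2 ha hb
  omega

/-- The number of vertices between `X` and `Z` is a Lipschitz function of `Z`, so a long chain of
vertices between two vertices forces them to be far apart. -/
theorem rank_lip (h : SProj G d θ) (hK : 3 * θ ≤ K) [Nonempty V] (X Z Z' : V) :
    (btw d K X Z).ncard ≤ (btw d K X Z').ncard + 2 * (pgraph d h.symm K).dist Z Z' := by
  obtain ⟨p, hp⟩ := (h.conn hK).exists_walk_length_eq_dist Z Z'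
  rw [← hp]
  clear hp
  induction p with
  | nil => simp
  | @cons a b c hadj p ih =>
    rw [SimpleGraph.Walk.length_cons]
    have := h.rank_adj hK hadj (X := X)
    omega

theorem adj_smul (h : SProj G d θ) (g : G) (X Z : V) (hadj : (pgraph d h.symm K).Adj X Z) :
    (pgraph d h.symm K).Adj (g • X) (g • Z) := by
  refine ⟨fun e => hadj.1 (smul_left_cancel g e), fun Y => ?_⟩
  have := hadj.2 (g⁻¹ • Y)
  rw [← h.inv g] at this
  simpa using this

theorem btw_smul (h : SProj G d θ) (g : G) (X Z : V) :
    (btw d K (g • X) (g • Z)).ncard = (btw d K X Z).ncard := by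
  have : btw d K (g • X) (g • Z) = (fun v => g • v) '' btw d K X Z := by
    ext Y
    constructor
    · intro (hY : K < d Y (g • X) (g • Z))
      refine ⟨g⁻¹ • Y, ?_, by simp⟩
      show K < d _ _ _
      rw [← h.inv g]
      simpa using hY
    · rintro ⟨Y, hY, rfl⟩
      show K < d _ _ _
      rw [h.inv]
      exact hY
  rw [this, Set.ncard_image_of_injective _ (MulAction.injective g)]

end SProj

end ProjGraph

end AHProof

namespace AHProof

/-! ### The action on the projection graph -/

section ProjAction

universe u

variable {V : Type u} {G : Type*} [Group G] [MulAction G V]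

theorem finite_of_finset_bound {α : Type*} {Q : Set α} {N : ℕ}
    (h : ∀ F : Finset α, (∀ g ∈ F, g ∈ Q) → F.card ≤ N) : Q.Finite ∧ Q.ncard ≤ N := by
  have hf : Q.Finite := by
    by_contra hi
    obtain ⟨F, hF, hc⟩ := Set.Infinite.exists_subset_card_eq hi (N + 1)
    have := h F fun g hg => hF hg
    omega
  refine ⟨hf, ?_⟩
  rw [Set.ncard_eq_toFinset_card Q hf]
  exact h _ fun g hg => by simpa using hg

theorem exists_support_dist (X : SimpleGraph V) (hc : X.Connected) {a z b : V} (p : X.Walk z b)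
    (n : ℕ) (h0 : X.dist a z ≤ n) (h1 : n ≤ X.dist a b) : ∃ v ∈ p.support, X.dist a v = n := by
  induction p with
  | nil => exact ⟨_, by simp, le_antisymm h0 h1⟩
  | @cons z w b hadj p ih =>
    by_cases h2 : X.dist a w ≤ n
    · obtain ⟨v, hv, hv'⟩ := ih h2 h1
      exact ⟨v, by simp [hv], hv'⟩
    · have t1 : X.dist z w = 1 := SimpleGraph.dist_eq_one_iff_adj.2 hadj
      have t2 := hc.dist_triangle (u := a) (v := z) (w := w)
      exact ⟨z, by simp, by omega⟩

namespace SProj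

variable {d : V → V → V → ℕ} {θ K : ℕ} {S : Type u} [MetricSpace S] {ι : V → S}

/-- If a geodesic stays far from `Y`, its endpoints look the same from `Y`. -/
theorem geod_view (h : SProj G d θ) (hK : 3 * θ ≤ K) [Nonempty V]
    (hd : ∀ u v, dist (ι u) (ι v) = (pgraph d h.symm K).dist u v)
    (hnear : ∀ p : S, ∃ v, dist p (ι v) ≤ 1) {x y : S} {a b Y : V} (ha : dist x (ι a) ≤ 1)
    (hb : dist y (ι b) ≤ 1) {Γ : Set S} (hΓ : IsGeodesicSegment Γ x y)
    (hfar : ∀ s ∈ Γ, 7 ≤ dist s (ι Y)) (U : V) : d Y a U = d Y b U := by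
  have loc : ∀ (p q : S) (v w : V), dist p (ι v) ≤ 1 → dist q (ι w) ≤ 1 → dist p q ≤ 1 →
      7 ≤ dist p (ι Y) → d Y v U = d Y w U := by
    intro p q v w h1 h2 h3 h4
    apply h.far_view hK
    have t1 := dist_triangle4 (ι v) p q (ι w)
    rw [dist_comm (ι v) p, hd] at t1
    have t2 := dist_triangle p (ι v) (ι Y)
    rw [hd] at t2
    have t3 : ((pgraph d h.symm K).dist v w : ℝ) ≤ 3 := by linarith
    have t4 : (6 : ℝ) ≤ (pgraph d h.symm K).dist v Y := by linarith
    have t5 : (pgraph d h.symm K).dist v w ≤ 3 := by exact_mod_cast t3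
    have t6 : 6 ≤ (pgraph d h.symm K).dist v Y := by exact_mod_cast t4
    omega
  obtain ⟨γ, g0, g1, g2, rfl⟩ := hΓ
  have key : ∀ (n : ℕ) (t : ℝ), t ∈ Set.Icc 0 (dist x y) → t ≤ n → ∀ v, dist (γ t) (ι v) ≤ 1 →
      d Y a U = d Y v U := by
    intro n
    induction n with
    | zero =>
      intro t ht htn v hv
      have : t = 0 := le_antisymm (by simpa using htn) ht.1
      subst this
      refine loc x (γ 0) a v ha hv (by rw [g0]; simp) ?_
      have := hfar (γ 0) ⟨0, ht, rfl⟩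
      rwa [g0] at this
    | succ n ih =>
      intro t ht htn v hv
      have hm : max 0 (t - 1) ∈ Set.Icc (0 : ℝ) (dist x y) :=
        ⟨le_max_left _ _, max_le dist_nonneg (by linarith [ht.2])⟩
      obtain ⟨w, hw⟩ := hnear (γ (max 0 (t - 1)))
      rw [ih _ hm (max_le (Nat.cast_nonneg _) (by push_cast at htn; linarith)) w hw]
      refine loc _ (γ t) w v hw hv ?_ (hfar _ ⟨_, hm, rfl⟩)
      rw [g2 _ hm _ ht, abs_le]
      constructor
      · linarith [le_max_right 0 (t - 1)]
      · have : max 0 (t - 1) ≤ t := max_le ht.1 (by linarith)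
        linarith
  obtain ⟨n, hn⟩ := exists_nat_ge (dist x y)
  exact key n _ ⟨dist_nonneg, le_refl _⟩ hn b (by rw [g1]; exact hb)

/-- The bottleneck property: a vertex seen between vertices near the endpoints of a geodesic lies
near the geodesic. -/
theorem geod_near (h : SProj G d θ) (hK : 3 * θ ≤ K) [Nonempty V]
    (hd : ∀ u v, dist (ι u) (ι v) = (pgraph d h.symm K).dist u v)
    (hnear : ∀ p : S, ∃ v, dist p (ι v) ≤ 1) {x y : S} {a b Y : V} (ha : dist x (ι a) ≤ 1)
    (hb : dist y (ι b) ≤ 1) {Γ : Set S} (hΓ : IsGeodesicSegment Γ x y)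
    (hY : θ < d Y a b) : ∃ s ∈ Γ, dist s (ι Y) ≤ 7 := by
  by_contra hcon
  push Not at hcon
  have := h.geod_view hK hd hnear ha hb hΓ (fun s hs => (hcon s hs).le) b
  rw [this] at hY
  have := h.self Y b
  omega

/-- A walk all of whose vertices lie near a geodesic, running from one side of the time `τ` to the
other, passes near the point at time `τ`. -/
theorem walk_near {X : SimpleGraph V} (hd : ∀ u v, dist (ι u) (ι v) = X.dist u v) {γ : ℝ → S}
    {ℓ τ : ℝ} (hγ : ∀ s ∈ Set.Icc 0 ℓ, ∀ t ∈ Set.Icc 0 ℓ, dist (γ s) (γ t) = |s - t|)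
    (hτ : τ ∈ Set.Icc 0 ℓ) {a b : V} (p : X.Walk a b)
    (hp : ∀ v ∈ p.support, ∃ σ ∈ Set.Icc 0 ℓ, dist (γ σ) (ι v) ≤ 7)
    (ha : ∃ σ ∈ Set.Icc 0 ℓ, dist (γ σ) (ι a) ≤ 7 ∧ σ ≤ τ)
    (hb : ∃ σ ∈ Set.Icc 0 ℓ, dist (γ σ) (ι b) ≤ 7 ∧ τ ≤ σ) :
    ∃ v ∈ p.support, dist (γ τ) (ι v) ≤ 22 := by
  have fin : ∀ (a b : V) σ σ', σ ∈ Set.Icc 0 ℓ → σ' ∈ Set.Icc 0 ℓ → dist (γ σ) (ι a) ≤ 7 →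
      dist (γ σ') (ι b) ≤ 7 → dist (ι a) (ι b) ≤ 1 → σ ≤ τ → τ ≤ σ' → dist (γ τ) (ι a) ≤ 22 := by
    intro a b σ σ' m m' h1 h2 h3 h4 h5
    have t1 := dist_triangle4 (γ σ) (ι a) (ι b) (γ σ')
    rw [dist_comm (ι b), hγ σ m σ' m', abs_sub_comm, abs_of_nonneg (by linarith)] at t1
    have t2 := dist_triangle (γ τ) (γ σ) (ι a)
    rw [hγ τ hτ σ m, abs_of_nonneg (by linarith)] at t2
    linarith
  induction p with
  | @nil a =>
    obtain ⟨σ, m, h1, h2⟩ := ha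
    obtain ⟨σ', m', h1', h2'⟩ := hb
    exact ⟨a, by simp, fin a a σ σ' m m' h1 h1' (by simp) h2 h2'⟩
  | @cons a w b hadj p ih =>
    obtain ⟨σ', m', h1'⟩ := hp w (by simp)
    by_cases h2' : σ' ≤ τ
    · obtain ⟨v, hv, hv'⟩ := ih (fun v hv => hp v (by simp [hv])) ⟨σ', m', h1', h2'⟩ hb
      exact ⟨v, by simp [hv], hv'⟩
    · obtain ⟨σ, m, h1, h2⟩ := ha
      refine ⟨a, by simp, fin a w σ σ' m m' h1 h1' ?_ h2 (by linarith)⟩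
      rw [hd, SimpleGraph.dist_eq_one_iff_adj.2 hadj]
      simp

/-- Triangles are slim: the side is shadowed by the chain of vertices between its endpoints, and by
the triangle inequality for `d` each such vertex is near one of the other two sides. -/
theorem hyp (h : SProj G d θ) (hK : 3 * θ ≤ K) [Nonempty V]
    (hd : ∀ u v, dist (ι u) (ι v) = (pgraph d h.symm K).dist u v)
    (hnear : ∀ p : S, ∃ v, dist p (ι v) ≤ 1) : DeltaHyperbolic S 29 := by
  intro x y z Γ₁ Γ₂ Γ₃ h1 h2 h3 p hp
  have fin : ∀ q ∈ Γ₂ ∪ Γ₃, dist p q ≤ 29 → Metric.infDist p (Γ₂ ∪ Γ₃) ≤ 29 :=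
    fun q hq hpq => (Metric.infDist_le_dist_of_mem hq).trans hpq
  obtain ⟨a, ha⟩ := hnear x
  obtain ⟨b, hb⟩ := hnear y
  obtain ⟨c, hc⟩ := hnear z
  obtain ⟨w, hw⟩ := h.exists_walk hK _ a b le_rfl
  obtain ⟨v, hv, hpv⟩ : ∃ v ∈ w.support, dist p (ι v) ≤ 22 := by
    have h1' := h1
    obtain ⟨γ, g0, g1, g2, hΓ⟩ := h1'
    rw [hΓ] at hp
    obtain ⟨τ, hτ, rfl⟩ := hp
    have hz : (0 : ℝ) ∈ Set.Icc (0 : ℝ) (dist x y) := ⟨le_refl _, dist_nonneg⟩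
    have ho : dist x y ∈ Set.Icc (0 : ℝ) (dist x y) := ⟨dist_nonneg, le_refl _⟩
    refine walk_near hd g2 hτ w (fun v hv => ?_) ⟨0, hz, by rw [g0]; linarith, hτ.1⟩
      ⟨_, ho, by rw [g1]; linarith, hτ.2⟩
    rcases hw v hv with rfl | rfl | hv
    · exact ⟨0, hz, by rw [g0]; linarith⟩
    · exact ⟨_, ho, by rw [g1]; linarith⟩
    · have hv : K < d v a b := hv
      obtain ⟨s, hs, hs'⟩ := h.geod_near hK hd hnear ha hb h1 (by omega : θ < d v a b)
      rw [hΓ] at hs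
      obtain ⟨σ, hσ, rfl⟩ := hs
      exact ⟨σ, hσ, hs'⟩
  rcases hw v hv with rfl | rfl | hv
  · refine fin x (Or.inr (seg_right h3)) ?_
    have := dist_triangle_right p x (ι v)
    linarith
  · refine fin y (Or.inl (seg_left h2)) ?_
    have := dist_triangle_right p y (ι v)
    linarith
  · have hv : K < d v a b := hv
    by_cases e : c = v
    · subst e
      refine fin z (Or.inl (seg_right h2)) ?_
      have := dist_triangle_right p z (ι c)
      linarith
    have hor : θ < d v b c ∨ θ < d v c a := by
      by_contra hcon
      push Not at hcon
      have t := h.tri v a c b e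
      rw [h.symm v a c, h.symm v c b] at t
      omega
    rcases hor with h4 | h4
    · obtain ⟨s, hs, hs'⟩ := h.geod_near hK hd hnear hb hc h2 h4
      refine fin s (Or.inl hs) ?_
      have := dist_triangle_right p s (ι v)
      linarith
    · obtain ⟨s, hs, hs'⟩ := h.geod_near hK hd hnear hc ha h3 h4
      refine fin s (Or.inr hs) ?_
      have := dist_triangle_right p s (ι v)
      linarith

/-- The inverse of an element moving two far apart points by little sends each of two vertices in the
middle to one of boundedly many vertices, so the bound `B` on stabilizers of pairs gives acylindricity. -/
theorem acyl (h : SProj G d θ) (hK : 3 * θ ≤ K) [Nonempty V]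
    (hd : ∀ u v, dist (ι u) (ι v) = (pgraph d h.symm K).dist u v)
    (hnear : ∀ p : S, ∃ v, dist p (ι v) ≤ 1) {act : G → S → S} (hact : IsIsometricAction act)
    (hι : ∀ g v, act g (ι v) = ι (g • v)) {B : ℕ}
    (hB : ∀ X Z : V, X ≠ Z → ∀ F : Finset G, (∀ g ∈ F, g • X = X ∧ g • Z = Z) → F.card ≤ B) :
    AcylindricalAction act := by
  have hc := h.conn hK
  intro ε hε
  obtain ⟨m, hm⟩ := exists_nat_ge (ε + 2)
  refine ⟨2 * m + 20, B * (4 * m + 1) ^ 2 + 1, by positivity, by positivity, fun x y hxy => ?_⟩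
  apply finite_of_finset_bound
  intro F hF
  obtain ⟨a, ha⟩ := hnear x
  obtain ⟨b, hb⟩ := hnear y
  have move : ∀ (x : S) (a : V) (g : G), dist x (ι a) ≤ 1 → dist x (act g x) ≤ ε →
      (pgraph d h.symm K).dist a (g • a) ≤ m := by
    intro x a g h1 h2
    have t1 := dist_triangle4 (ι a) x (act g x) (act g (ι a))
    rw [(hact.2 g).dist_eq, dist_comm (ι a) x, hι, hd] at t1
    have : ((pgraph d h.symm K).dist a (g • a) : ℝ) ≤ m := by linarith
    exact_mod_cast this
  have hab : 2 * m + 18 ≤ (pgraph d h.symm K).dist a b := by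
    have t1 := dist_triangle4 x (ι a) (ι b) y
    rw [dist_comm (ι b) y, hd] at t1
    have : ((2 * m + 18 : ℕ) : ℝ) ≤ (pgraph d h.symm K).dist a b := by push_cast; linarith
    exact_mod_cast this
  obtain ⟨w, hw⟩ := h.exists_walk hK _ a b le_rfl
  have pick : ∀ n, m + 3 ≤ n → n ≤ m + 4 → ∃ v, (pgraph d h.symm K).dist a v = n ∧
      v ∈ btw d K a b ∧ m + 3 ≤ (pgraph d h.symm K).dist b v := by
    intro n h1 h2
    obtain ⟨v, hv, hv'⟩ := exists_support_dist _ hc (a := a) w n (by simp) (by omega)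
    have t := hc.dist_triangle (u := a) (v := v) (w := b)
    rw [SimpleGraph.dist_comm (u := v)] at t
    refine ⟨v, hv', ?_, by omega⟩
    rcases hw v hv with rfl | rfl | h3
    · simp at hv'; omega
    · simp at t; omega
    · exact h3
  obtain ⟨W, w1, w2, w3⟩ := pick (m + 3) (by omega) (by omega)
  obtain ⟨W', w1', w2', w3'⟩ := pick (m + 4) (by omega) (by omega)
  have hne : W ≠ W' := by rintro rfl; omega
  -- translates of a middle vertex lie between `a` and `b`, in a bounded range of positions
  have land : ∀ U, m + 3 ≤ (pgraph d h.symm K).dist a U → U ∈ btw d K a b →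
      m + 3 ≤ (pgraph d h.symm K).dist b U → ∀ g ∈ F, g⁻¹ • U ∈ btw d K a b ∧
        (btw d K a (g⁻¹ • U)).ncard ≤ (btw d K a U).ncard + 2 * m ∧
        (btw d K a U).ncard ≤ (btw d K a (g⁻¹ • U)).ncard + 2 * m := by
    intro U u1 u2 u3 g hg
    have m1 := move x a g ha (hF g hg).1
    have m2 := move y b g hb (hF g hg).2
    refine ⟨?_, ?_, ?_⟩
    · show K < d _ _ _
      rw [← h.inv g, smul_inv_smul, ← h.far_view hK (X := a) (by omega), h.symm,
        ← h.far_view hK (X := b) (by omega), h.symm]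
      exact u2
    · rw [← h.btw_smul g, smul_inv_smul, h.btw_symm, h.btw_symm a]
      have := h.rank_lip hK U (g • a) a
      rw [SimpleGraph.dist_comm] at this
      omega
    · rw [← h.btw_smul g a (g⁻¹ • U), smul_inv_smul, h.btw_symm, h.btw_symm (g • a)]
      have := h.rank_lip hK U a (g • a)
      omega
  classical
  have cnt : ∀ U, m + 3 ≤ (pgraph d h.symm K).dist a U → U ∈ btw d K a b →
      m + 3 ≤ (pgraph d h.symm K).dist b U → (F.image fun g => g⁻¹ • U).card ≤ 4 * m + 1 := by
    intro U u1 u2 u3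
    have : (Finset.Icc ((btw d K a U).ncard - 2 * m) ((btw d K a U).ncard + 2 * m)).card
        ≤ 4 * m + 1 := by
      rw [Nat.card_Icc]; omega
    refine le_trans (Finset.card_le_card_of_injOn (fun v => (btw d K a v).ncard) ?_ ?_) this
    · intro v hv
      obtain ⟨g, hg, rfl⟩ := Finset.mem_image.1 hv
      have := land U u1 u2 u3 g hg
      simp only [Finset.coe_Icc, Set.mem_Icc]
      omega
    · intro v hv v' hv' he
      obtain ⟨g, hg, rfl⟩ := Finset.mem_image.1 hv
      obtain ⟨g', hg', rfl⟩ := Finset.mem_image.1 hv'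
      exact h.rank_inj hK (land U u1 u2 u3 g hg).1 (land U u1 u2 u3 g' hg').1 he
  have c1 := cnt W (by omega) w2 w3
  have c2 := cnt W' (by omega) w2' w3'
  have c3 := Finset.card_le_mul_card_image (f := fun g : G => (g⁻¹ • W, g⁻¹ • W')) F B (by
    intro q hq
    obtain ⟨g₀, hg₀, rfl⟩ := Finset.mem_image.1 hq
    rw [← Finset.card_image_of_injective _ (mul_left_injective g₀⁻¹)]
    refine hB W W' hne _ fun k hk => ?_
    obtain ⟨g, hg, rfl⟩ := Finset.mem_image.1 hk
    have e := (Finset.mem_filter.1 hg).2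
    simp only [Prod.mk.injEq] at e
    simp only [mul_smul]
    rw [← e.1, ← e.2]
    simp)
  have c4 : (F.image fun g : G => (g⁻¹ • W, g⁻¹ • W')).card ≤ (4 * m + 1) * (4 * m + 1) := by
    refine le_trans (Finset.card_le_card (t := (F.image fun g => g⁻¹ • W) ×ˢ
      (F.image fun g => g⁻¹ • W')) ?_) ?_
    · intro q hq
      obtain ⟨g, hg, rfl⟩ := Finset.mem_image.1 hq
      exact Finset.mk_mem_product (Finset.mem_image_of_mem _ hg) (Finset.mem_image_of_mem _ hg)
    · rw [Finset.card_product]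
      exact Nat.mul_le_mul c1 c2
  calc F.card ≤ B * _ := c3
    _ ≤ B * ((4 * m + 1) * (4 * m + 1)) := Nat.mul_le_mul le_rfl c4
    _ ≤ B * (4 * m + 1) ^ 2 + 1 := by rw [sq]; omega

end SProj

end ProjAction

end AHProof

namespace AHProof

/-! ### Non-elementarity of the action on the projection graph -/

section NonElem

universe u

variable {V : Type u} {G : Type*} [Group G] [MulAction G V]

namespace SProj

variable {d : V → V → V → ℕ} {θ K : ℕ} {S : Type u} [MetricSpace S] {ι : V → S}

/-- In a chain of vertices each of which separates its neighbours, the past of a vertex looks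
like its predecessor. -/
theorem chain_past (h : SProj G d θ) (hK : 3 * θ ≤ K) {f : ℕ → V}
    (hf : ∀ j, K < d (f (j + 1)) (f j) (f (j + 2))) (i : ℕ) : ∀ (n : ℕ) (U : V),
    d (f (i + n + 1)) (f i) U = d (f (i + n + 1)) (f (i + n)) U := by
  intro n
  induction n with
  | zero => intro U; rfl
  | succ n ih =>
    intro U
    have h1 := hf (i + n)
    rw [← ih] at h1
    exact h.view _ _ _ (show θ < d (f (i + n + 1)) (f i) (f (i + (n + 1) + 1)) by
      rw [show i + (n + 1) + 1 = i + n + 2 by omega]; omega) U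

theorem chain_future (h : SProj G d θ) (hK : 3 * θ ≤ K) {f : ℕ → V}
    (hf : ∀ j, K < d (f (j + 1)) (f j) (f (j + 2))) : ∀ (n j : ℕ) (U : V),
    d (f j) (f (j + n + 1)) U = d (f j) (f (j + 1)) U := by
  intro n
  induction n with
  | zero => intro j U; rfl
  | succ n ih =>
    intro j U
    have h1 := hf j
    have h2 := ih (j + 1) (f j)
    rw [h.symm, show j + 1 + 1 = j + 2 by omega] at h1
    rw [← show j + 1 + 1 = j + 2 by omega, ← h2] at h1
    rw [show j + 1 + n + 1 = j + (n + 1) + 1 by omega] at h1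
    exact h.view _ _ _ (by omega : θ < d (f (j + 1)) (f (j + (n + 1) + 1)) (f j)) U

/-- Local separation along a sequence of vertices propagates to all triples. -/
theorem chain_sep (h : SProj G d θ) (hK : 3 * θ ≤ K) {f : ℕ → V}
    (hf : ∀ j, K < d (f (j + 1)) (f j) (f (j + 2))) {i j l : ℕ} (hij : i < j) (hjl : j < l) :
    K < d (f j) (f i) (f l) := by
  obtain ⟨n, rfl⟩ : ∃ n, j = i + n + 1 := ⟨j - i - 1, by omega⟩
  obtain ⟨m, rfl⟩ : ∃ m, l = i + n + 1 + m + 1 := ⟨l - (i + n + 1) - 1, by omega⟩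
  rw [h.chain_past hK hf, h.symm, h.chain_future hK hf, h.symm]
  exact hf (i + n)

/-- The chain `Y₀, Y₁, wY₀, wY₁, w²Y₀, …`. -/
def zig (w : G) (Y₀ Y₁ : V) (n : ℕ) : V := if n % 2 = 0 then w ^ (n / 2) • Y₀ else w ^ (n / 2) • Y₁

theorem zig_even (w : G) (Y₀ Y₁ : V) (n : ℕ) : zig w Y₀ Y₁ (2 * n) = w ^ n • Y₀ := by
  unfold zig
  rw [if_pos (by omega), show 2 * n / 2 = n by omega]

theorem zig_odd (w : G) (Y₀ Y₁ : V) (n : ℕ) : zig w Y₀ Y₁ (2 * n + 1) = w ^ n • Y₁ := by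
  unfold zig
  rw [if_neg (by omega), show (2 * n + 1) / 2 = n by omega]

theorem zig_sep (h : SProj G d θ) {a b : G} {Y₀ Y₁ : V} (ha : a • Y₀ = Y₀) (hb : b • Y₁ = Y₁)
    (h1 : K < d Y₀ Y₁ (a • Y₁)) (h3 : K < d Y₁ Y₀ (b • Y₀)) (j : ℕ) :
    K < d (zig (b * a) Y₀ Y₁ (j + 1)) (zig (b * a) Y₀ Y₁ j) (zig (b * a) Y₀ Y₁ (j + 2)) := by
  rcases Nat.even_or_odd' j with ⟨n, rfl | rfl⟩
  · rw [zig_even, zig_odd, show 2 * n + 2 = 2 * (n + 1) by ring, zig_even, pow_succ, mul_smul,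
      h.inv, mul_smul, ha]
    exact h3
  · rw [zig_odd, show 2 * n + 1 + 1 = 2 * (n + 1) by ring, zig_even,
      show 2 * n + 1 + 2 = 2 * (n + 1) + 1 by ring, zig_odd, pow_succ,
      mul_smul _ _ Y₀, mul_smul _ _ Y₁, h.inv, mul_smul b a Y₀, mul_smul b a Y₁, ha]
    -- translate by `b⁻¹`, which fixes `Y₁`
    rw [← h.inv b⁻¹]
    have hb' : b⁻¹ • Y₁ = Y₁ := by rw [inv_smul_eq_iff, hb]
    simpa [hb'] using h1

/-- If `a` fixes `Y₀`, `b` fixes `Y₁` and both rotate by a large amount, then `b * a` translates along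
the chain `zig`, and its translates under `a` give three limit points. -/
theorem nonelem (h : SProj G d θ) (hK : 3 * θ ≤ K) [Nonempty V]
    (hd : ∀ u v, dist (ι u) (ι v) = (pgraph d h.symm K).dist u v)
    (hnear : ∀ p : S, ∃ v, dist p (ι v) ≤ 1) {act : G → S → S} (hact : IsIsometricAction act)
    (hι : ∀ g v, act g (ι v) = ι (g • v)) (hgeo : GeodesicSpace S) {a b : G} {Y₀ Y₁ : V}
    (ha : a • Y₀ = Y₀) (hb : b • Y₁ = Y₁)
    (h1 : K < d Y₀ Y₁ (a • Y₁)) (h2 : K < d Y₀ Y₁ (a • a • Y₁)) (h3 : K < d Y₁ Y₀ (b • Y₀)) :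
    NonelemAction act (ι Y₀) := by
  have hD := hyp4_of_slim (by norm_num : (0 : ℝ) ≤ 29) hgeo (h.hyp hK hd hnear)
  have hsep := h.zig_sep ha hb h1 h3
  set ρ := zig (b * a) Y₀ Y₁ with hρ
  have ρ0 : ρ 0 = Y₀ := by rw [hρ]; simpa using zig_even (b * a) Y₀ Y₁ 0
  have ρ1 : ρ 1 = Y₁ := by rw [hρ]; simpa using zig_odd (b * a) Y₀ Y₁ 0
  -- a separating vertex lies near geodesics
  have prod : ∀ u v w : V, θ < d w u v → dist (ι u) (ι w) + dist (ι w) (ι v) ≤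
      dist (ι u) (ι v) + 14 := by
    intro u v w hw
    obtain ⟨Γ, hΓ⟩ := hgeo (ι u) (ι v)
    obtain ⟨s, hs, hs'⟩ := h.geod_near hK hd hnear (x := ι u) (y := ι v) (by simp) (by simp) hΓ hw
    have e := seg_dist hΓ hs
    have t1 := dist_triangle (ι u) s (ι w)
    have t2 := dist_triangle (ι w) s (ι v)
    rw [dist_comm (ι w) s] at t2
    linarith
  have rank : ∀ n, n ≤ (btw d K Y₀ (ρ (n + 1))).ncard := by
    intro n
    induction n with
    | zero => omega
    | succ n ih =>
      have hm : ρ (n + 1) ∈ btw d K Y₀ (ρ (n + 1 + 1)) := by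
        have := h.chain_sep hK hsep (i := 0) (j := n + 1) (l := n + 1 + 1) (by omega) (by omega)
        rwa [ρ0] at this
      have := h.btw_ncard_lt hK hm
      omega
  have far : ∀ n : ℕ, (n : ℝ) - 1 ≤ dist (ι Y₀) (ι ((b * a) ^ n • Y₀)) := by
    intro n
    rcases Nat.eq_zero_or_pos n with rfl | hn
    · have := dist_nonneg (x := ι Y₀) (y := ι ((b * a) ^ 0 • Y₀))
      push_cast; linarith
    have r1 := rank (2 * n - 1)
    rw [show 2 * n - 1 + 1 = 2 * n by omega, hρ, zig_even] at r1
    have r2 := h.rank_lip hK Y₀ ((b * a) ^ n • Y₀) Y₀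
    have r3 : (btw d K Y₀ Y₀).ncard = 0 := by
      rw [Set.ncard_eq_zero (h.btw_fin hK _ _), Set.eq_empty_iff_forall_notMem]
      intro W (hW : K < d W Y₀ Y₀)
      have := h.self W Y₀
      omega
    rw [SimpleGraph.dist_comm] at r2
    rw [hd]
    have : n ≤ (pgraph d h.symm K).dist Y₀ ((b * a) ^ n • Y₀) + 1 := by omega
    have : (n : ℝ) ≤ (pgraph d h.symm K).dist Y₀ ((b * a) ^ n • Y₀) + 1 := by exact_mod_cast this
    linarith
  -- Gromov products along the basic ray
  have along : ∀ n m : ℕ, n ≤ m → (n : ℝ) - 8 ≤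
      gprod (ι Y₀) (ι ((b * a) ^ n • Y₀)) (ι ((b * a) ^ m • Y₀)) := by
    intro n m hnm
    have f := far n
    have e : dist (ι Y₀) (ι ((b * a) ^ n • Y₀)) + dist (ι ((b * a) ^ n • Y₀))
        (ι ((b * a) ^ m • Y₀)) ≤ dist (ι Y₀) (ι ((b * a) ^ m • Y₀)) + 14 := by
      rcases Nat.eq_or_lt_of_le hnm with rfl | hlt
      · simp
      rcases Nat.eq_zero_or_pos n with rfl | hn
      · simp
      apply prod
      have := h.chain_sep hK hsep (i := 0) (j := 2 * n) (l := 2 * m) (by omega) (by omega)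
      rw [ρ0, hρ, zig_even, zig_even] at this
      omega
    unfold gprod
    rw [dist_comm _ (ι Y₀), dist_comm _ (ι Y₀)]
    linarith
  have aY : ∀ i : ℕ, a ^ i • Y₀ = Y₀ := by
    intro i
    induction i with
    | zero => simp
    | succ i ih => rw [pow_succ, mul_smul, ha, ih]
  have conv : ∀ i : ℕ, ConvToInfty (ι Y₀) (fun n => act (a ^ i * (b * a) ^ n) (ι Y₀)) := by
    intro i
    rw [convToInfty_iff]
    intro R
    obtain ⟨N, hN⟩ := exists_nat_ge (R + 8)
    refine ⟨N, fun n hn m hm => ?_⟩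
    have e0 : ι Y₀ = act (a ^ i) (ι Y₀) := by rw [hι, aY]
    have e1 : ∀ n, act (a ^ i * (b * a) ^ n) (ι Y₀) = act (a ^ i) (ι ((b * a) ^ n • Y₀)) := by
      intro n
      rw [hact.1.2, hι]
    simp only [e1]
    nth_rewrite 1 [e0]
    rw [gprod_isometry (hact.2 _)]
    have hn' : (N : ℝ) ≤ n := by exact_mod_cast hn
    have hm' : (N : ℝ) ≤ m := by exact_mod_cast hm
    rcases le_total n m with h4 | h4
    · have := along n m h4
      linarith
    · have := along m n h4
      rw [gprod_comm] at this
      linarith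
  -- Gromov products across different rays
  have view0 : ∀ (i n : ℕ) (U : V), d Y₀ (a ^ i • (b * a) ^ (n + 1) • Y₀) U =
      d Y₀ (a ^ i • Y₁) U := by
    intro i n U
    have e := h.chain_future hK hsep (2 * n + 1) 0 ((a ^ i)⁻¹ • U)
    rw [show 0 + (2 * n + 1) + 1 = 2 * (n + 1) by ring, zero_add, ρ0, ρ1, hρ, zig_even] at e
    rw [← h.inv (a ^ i), ← h.inv (a ^ i) Y₀ Y₁, smul_inv_smul, aY] at e
    exact e
  have across : ∀ i j : ℕ, K < d Y₀ (a ^ i • Y₁) (a ^ j • Y₁) →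
      ¬ ∀ R, close (ι Y₀) R (fun n => act (a ^ i * (b * a) ^ n) (ι Y₀))
        (fun n => act (a ^ j * (b * a) ^ n) (ι Y₀)) := by
    intro i j hij
    refine not_close_all_of_eventually (C := 7) (N := 1) fun n hn m hm => ?_
    obtain ⟨n, rfl⟩ : ∃ k, n = k + 1 := ⟨n - 1, by omega⟩
    obtain ⟨m, rfl⟩ : ∃ k, m = k + 1 := ⟨m - 1, by omega⟩
    rw [← view0 i n, h.symm, ← view0 j m, h.symm] at hij
    simp only [hι, mul_smul _ ((b * a) ^ _)]
    have := prod _ _ _ (by omega : θ < d Y₀ (a ^ i • (b * a) ^ (n + 1) • Y₀)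
      (a ^ j • (b * a) ^ (m + 1) • Y₀))
    unfold gprod
    rw [dist_comm (ι (a ^ j • (b * a) ^ (m + 1) • Y₀)) (ι Y₀)]
    linarith
  let β : ℕ → BSeq S (ι Y₀) := fun i => ⟨_, conv i⟩
  have lim : ∀ i, (Quot.mk _ (β i) : GBoundary S (ι Y₀)) ∈ limitSet act (ι Y₀) :=
    fun i => ⟨ι Y₀, fun n => a ^ i * (b * a) ^ n, conv i, rfl⟩
  have neq : ∀ i j : ℕ, K < d Y₀ (a ^ i • Y₁) (a ^ j • Y₁) →
      (Quot.mk _ (β i) : GBoundary S (ι Y₀)) ≠ Quot.mk _ (β j) := by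
    intro i j hij he
    exact across i j hij ((quot_eq_iff hD).1 he)
  refine ⟨_, _, _, lim 0, lim 1, lim 2, neq 0 1 ?_, neq 1 2 ?_, neq 0 2 ?_⟩
  · simpa using h1
  · rw [pow_one, pow_two, mul_smul, ← h.inv a⁻¹]
    have ha' : a⁻¹ • Y₀ = Y₀ := by rw [inv_smul_eq_iff, ha]
    simpa [ha'] using h1
  · rw [pow_zero, one_smul, pow_two, mul_smul]
    exact h2

end SProj

/-- Projection data with bounded pair stabilizers and two independent rotations yield
acylindrical hyperbolicity. -/
theorem acylHyp_of_proj {V : Type} {G : Type*} [Group G] [MulAction G V] {d : V → V → V → ℕ}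
    {θ : ℕ} (h : WProj G d θ) {B : ℕ}
    (hB : ∀ X Z : V, X ≠ Z → ∀ F : Finset G, (∀ g ∈ F, g • X = X ∧ g • Z = Z) → F.card ≤ B)
    {a b : G} {Y₀ Y₁ : V} (ha : a • Y₀ = Y₀) (hb : b • Y₁ = Y₁)
    (h1 : 42 * θ < d Y₀ Y₁ (a • Y₁)) (h2 : 42 * θ < d Y₀ Y₁ (a • a • Y₁))
    (h3 : 42 * θ < d Y₁ Y₀ (b • Y₀)) : AcylindricallyHyperbolic G := by
  have hs := h.strong
  have hK : 3 * (14 * θ) ≤ 42 * θ := by omega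
  have : Nonempty V := ⟨Y₀⟩
  obtain ⟨S, _, ι, act, hgeo, hact, hι, hd, hnear⟩ := exists_realization (G := G)
    (pgraph _ hs.symm (42 * θ)) (hs.conn hK) (fun g u v => hs.adj_smul g u v)
  refine ⟨S, _, act, 29, by norm_num, hgeo, hs.hyp hK hd hnear, hact,
    hs.acyl hK hd hnear hact hι hB, ι Y₀, ?_⟩
  exact hs.nonelem hK hd hnear hact hι hgeo ha hb (lt_of_lt_of_le h1 (h.d_le_sd _ _ _))
    (lt_of_lt_of_le h2 (h.d_le_sd _ _ _)) (lt_of_lt_of_le h3 (h.d_le_sd _ _ _))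

end NonElem

end AHProof

namespace AHProof

/-! ### Walls associated with an element having north–south dynamics -/

section Walls

variable {G : Type*} {M : Type*} [Group G] [MulAction G M]

/-- The translate `hP`, seen as the negative side of the wall `h`. The positive side of `h` is the
complement of `nb P (h * t)`. -/
def nb (P : Set M) (h : G) : Set M := {m | h⁻¹ • m ∈ P}

/-- The output of the dynamics: a set `P` around the repelling point `x` of `t` such that the walls
`(hP, M \ htP)`, `h ∈ G`, form a system with good combinatorial properties. The field `four` says
that for two walls at least one of the four intersections of their sides is empty; the field `fin`
says that two pairs of points are separated by finitely many walls only. -/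
structure WallData (t : G) (P : Set M) (x y : M) : Prop where
  tx : t • x = x
  ty : t • y = y
  hx : x ∈ P
  hy : y ∉ P
  nest : ∀ m ∈ P, t⁻¹ • m ∈ P
  four : ∀ (h : G) (m₁ m₂ m₃ m₄ : M), m₁ ∈ P → h • m₁ ∈ P → m₂ ∈ P → t⁻¹ • h • m₂ ∉ P →
    t⁻¹ • m₃ ∉ P → h • m₃ ∈ P → t⁻¹ • m₄ ∉ P → t⁻¹ • h • m₄ ∉ P → False
  esc_x : ∀ m, m ≠ x → ∃ n : ℕ, t ^ n • m ∉ P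
  esc_y : ∀ m, m ≠ y → ∃ n : ℕ, (t ^ n)⁻¹ • m ∈ P
  fin : ∀ p q r s : M, p ≠ q → r ≠ s →
    {h : G | h • p ∈ P ∧ h • q ∈ P ∧ t⁻¹ • h • r ∉ P ∧ t⁻¹ • h • s ∉ P}.Finite
  third : ∃ z, z ≠ x ∧ z ≠ y

/-- Two increasing families of sets such that the members with index `0` and `2` of the first one
are weakly comparable with all members of the second one are interleaved. -/
theorem interleave {A B : ℤ → Set M} (hB : Monotone B)
    (h0 : ∀ j, A 0 ⊆ B (j + 1) ∨ B j ⊆ A 1) (h2 : ∀ j, A 2 ⊆ B (j + 1) ∨ B j ⊆ A 3)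
    (lo : ∃ m ∈ A 0, ∃ j, m ∉ B j) (hi : ∃ m, m ∉ A 1 ∧ ∃ j, m ∈ B j) :
    (∃ j, A 0 ⊆ B j ∧ B (j + 1) ⊆ A 3) ∨ (∃ j, B (j - 1) ⊆ A 1 ∧ A 2 ⊆ B (j + 3)) := by
  obtain ⟨m, hm, j₀, hj₀⟩ := lo
  obtain ⟨m', hm', j₁, hj₁⟩ := hi
  obtain ⟨j, hj, hmin⟩ := Int.exists_least_of_bdd (P := fun j => A 0 ⊆ B (j + 1))
    ⟨j₀ - 1, fun z hz => by
      by_contra hlt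
      exact hj₀ (hB (by omega) (hz hm))⟩
    ⟨j₁, (h0 j₁).resolve_right fun h => hm' (h hj₁)⟩
  have hj' : B (j - 1) ⊆ A 1 := by
    refine (h0 (j - 1)).resolve_left fun h => ?_
    have := hmin (j - 1) h
    omega
  rcases h2 (j + 2) with h | h
  · exact Or.inr ⟨j, hj', by rwa [show j + 2 + 1 = j + 3 by ring] at h⟩
  · exact Or.inl ⟨j + 1, hj, by rwa [show j + 1 + 1 = j + 2 by ring]⟩

theorem mem_nb {P : Set M} {h : G} {m : M} : m ∈ nb P h ↔ h⁻¹ • m ∈ P := Iff.rfl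

theorem smul_mem_nb {P : Set M} {g h : G} {m : M} : g • m ∈ nb P (g * h) ↔ m ∈ nb P h := by
  rw [mem_nb, mem_nb, mul_inv_rev, mul_smul, inv_smul_smul]

theorem mem_nb_mul {P : Set M} {g h : G} {m : M} : m ∈ nb P (g * h) ↔ g⁻¹ • m ∈ nb P h := by
  rw [mem_nb, mem_nb, mul_inv_rev, mul_smul]

theorem mem_nb_one {P : Set M} {m : M} : m ∈ nb P (1 : G) ↔ m ∈ P := by
  rw [mem_nb, inv_one, one_smul]

namespace WallData

variable {t : G} {P : Set M} {x y : M}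

theorem zx (w : WallData t P x y) (j : ℤ) : t ^ j • x = x :=
  MulAction.zpow_smul_eq_iff_period_dvd.2 (by
    have : MulAction.period t x = 1 := by
      rw [MulAction.period_eq_one_iff]; exact w.tx
    rw [this]; simp)

theorem zy (w : WallData t P x y) (j : ℤ) : t ^ j • y = y :=
  MulAction.zpow_smul_eq_iff_period_dvd.2 (by
    have : MulAction.period t y = 1 := by
      rw [MulAction.period_eq_one_iff]; exact w.ty
    rw [this]; simp)

theorem mono (w : WallData t P x y) (h : G) : Monotone fun j : ℤ => nb P (h * t ^ j) := by
  refine monotone_int_of_le_succ fun j m hm => ?_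
  simp only [mem_nb, zpow_add, zpow_one, ← mul_assoc] at hm ⊢
  rw [mul_inv_rev _ t, mul_smul]
  exact w.nest _ hm

theorem sub (w : WallData t P x y) (h : G) : nb P h ⊆ nb P (h * t) := by
  have := w.mono h (by norm_num : (0 : ℤ) ≤ 1)
  simpa using this

theorem x_mem (w : WallData t P x y) (h : G) (j : ℤ) : h • x ∈ nb P (h * t ^ j) := by
  rw [smul_mem_nb, mem_nb, ← zpow_neg, w.zx]; exact w.hx

theorem y_notMem (w : WallData t P x y) (h : G) (j : ℤ) : h • y ∉ nb P (h * t ^ j) := by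
  rw [smul_mem_nb, mem_nb, ← zpow_neg, w.zy]; exact w.hy

theorem x_mem' (w : WallData t P x y) (h : G) : h • x ∈ nb P h := by
  simpa using w.x_mem h 0

theorem y_notMem' (w : WallData t P x y) (h : G) : h • y ∉ nb P (h * t) := by
  simpa using w.y_notMem h 1

theorem esc_lo (w : WallData t P x y) (h : G) {m : M} (hm : m ≠ h • x) :
    ∃ j : ℤ, m ∉ nb P (h * t ^ j) := by
  obtain ⟨n, hn⟩ := w.esc_x (h⁻¹ • m) (fun e => hm (by rw [← e, smul_inv_smul]))
  refine ⟨-n, ?_⟩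
  rw [mem_nb_mul, mem_nb]
  simpa using hn

theorem esc_hi (w : WallData t P x y) (h : G) {m : M} (hm : m ≠ h • y) :
    ∃ j : ℤ, m ∈ nb P (h * t ^ j) := by
  obtain ⟨n, hn⟩ := w.esc_y (h⁻¹ • m) (fun e => hm (by rw [← e, smul_inv_smul]))
  refine ⟨n, ?_⟩
  rw [mem_nb_mul, mem_nb]
  simpa using hn

/-- Every point other than the fixed points lies in a gap between consecutive walls. -/
theorem gap (w : WallData t P x y) (h : G) {m : M} (hx : m ≠ h • x) (hy : m ≠ h • y) :
    ∃ j : ℤ, m ∉ nb P (h * t ^ j) ∧ m ∈ nb P (h * t ^ (j + 1)) := by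
  obtain ⟨j₀, hj₀⟩ := w.esc_lo h hx
  obtain ⟨j, hj, hmin⟩ := Int.exists_least_of_bdd (P := fun j => m ∈ nb P (h * t ^ j))
    ⟨j₀, fun z hz => by
      by_contra hlt
      exact hj₀ (w.mono h (by omega : z ≤ j₀) hz)⟩ (w.esc_hi h hy)
  refine ⟨j - 1, fun h' => ?_, by simpa using hj⟩
  have := hmin _ h'
  omega

theorem fix_zpow (w : WallData t P x y) {a : ℤ} (ha : a ≠ 0) {m : M} (hm : t ^ a • m = m) :
    m = x ∨ m = y := by
  by_contra hne
  push Not at hne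
  obtain ⟨j, h1, h2⟩ := w.gap 1 (m := m) (by simpa using hne.1) (by simpa using hne.2)
  have key : ∀ b : ℤ, t ^ b • m = m → 0 < b → False := by
    intro b hb hb0
    have e : t ^ (-b) • m = m := by rw [zpow_neg, inv_smul_eq_iff, hb]
    have h3 : m ∈ nb P (1 * t ^ (j + 1 - b)) := by
      rw [← e, show 1 * t ^ (j + 1 - b) = t ^ (-b) * (1 * t ^ (j + 1)) by
        rw [one_mul, one_mul, ← zpow_add]; congr 1; ring, smul_mem_nb]
      exact h2
    exact h1 (w.mono 1 (by omega : j + 1 - b ≤ j) h3)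
  rcases lt_or_gt_of_ne ha with h | h
  · exact key (-a) (by rw [zpow_neg, inv_smul_eq_iff, hm]) (by omega)
  · exact key a hm h

theorem four' (w : WallData t P x y) (α β : G) {m₁ m₂ m₃ m₄ : M}
    (h1 : m₁ ∈ nb P α) (h1' : m₁ ∈ nb P β) (h2 : m₂ ∈ nb P α) (h2' : m₂ ∉ nb P (β * t))
    (h3 : m₃ ∉ nb P (α * t)) (h3' : m₃ ∈ nb P β) (h4 : m₄ ∉ nb P (α * t))
    (h4' : m₄ ∉ nb P (β * t)) : False := by
  have e : ∀ m : M, (β⁻¹ * α) • α⁻¹ • m = β⁻¹ • m := fun m => by rw [mul_smul, smul_inv_smul]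
  have f : ∀ (γ : G) (m : M), m ∉ nb P (γ * t) → t⁻¹ • γ⁻¹ • m ∉ P := fun γ m hm => by
    rw [← mul_smul, ← mul_inv_rev]; exact hm
  refine w.four (β⁻¹ * α) (α⁻¹ • m₁) (α⁻¹ • m₂) (α⁻¹ • m₃) (α⁻¹ • m₄) h1 ?_ h2 ?_ (f _ _ h3) ?_
    (f _ _ h4) ?_
  · rw [e]; exact h1'
  · rw [e]; exact f _ _ h2'
  · rw [e]; exact h3'
  · rw [e]; exact f _ _ h4'

theorem fin' (w : WallData t P x y) {p q r s : M} (hpq : p ≠ q) (hrs : r ≠ s) :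
    {h : G | p ∈ nb P h ∧ q ∈ nb P h ∧ r ∉ nb P (h * t) ∧ s ∉ nb P (h * t)}.Finite := by
  refine ((w.fin p q r s hpq hrs).image fun h => h⁻¹).subset fun h hh => ⟨h⁻¹, ?_, inv_inv h⟩
  obtain ⟨h1, h2, h3, h4⟩ := hh
  rw [mem_nb, mul_inv_rev, mul_smul] at h3 h4
  exact ⟨h1, h2, h3, h4⟩

/-- Every wall has two points on its negative side. -/
theorem two_neg (w : WallData t P x y) (h : G) : ∃ p q, p ≠ q ∧ p ∈ nb P h ∧ q ∈ nb P h := by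
  obtain ⟨z, hzx, hzy⟩ := w.third
  obtain ⟨n, hn⟩ := w.esc_y z hzy
  refine ⟨h • x, h • (t ^ n)⁻¹ • z, fun e => hzx ?_, w.x_mem' h, ?_⟩
  · have e' := smul_left_cancel h e
    rw [eq_inv_smul_iff] at e'
    rw [← e']
    simpa using w.zx n
  · rw [mem_nb, inv_smul_smul]; exact hn

theorem two_pos (w : WallData t P x y) (h : G) :
    ∃ p q, p ≠ q ∧ p ∉ nb P (h * t) ∧ q ∉ nb P (h * t) := by
  obtain ⟨z, hzx, hzy⟩ := w.third
  obtain ⟨n, hn⟩ := w.esc_x z hzx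
  refine ⟨h • y, h • t • t ^ n • z, fun e => hzy ?_, w.y_notMem' h, ?_⟩
  · have e' := smul_left_cancel h e
    rw [← mul_smul, ← pow_succ', ← inv_smul_eq_iff] at e'
    rw [← e']
    have := w.zy (-((n + 1 : ℕ) : ℤ))
    rwa [zpow_neg, zpow_natCast] at this
  · rw [smul_mem_nb, mem_nb, inv_smul_smul]; exact hn

end WallData

end Walls

end AHProof

namespace AHProof

/-! ### Elements whose axis follows the axis of `t` for a long time -/

section Follow

variable {G : Type*} {M : Type*} [Group G] [MulAction G M]

namespace WallData

variable {t : G} {P : Set M} {x y : M}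

/-- The case of `follow` in which the axis of the conjugate is oriented as that of `t`: by
`interleave` the two families of walls are interleaved, and the finiteness of separating walls applies. -/
theorem follow_pos (w : WallData t P x y) : ∃ F : Set G, F.Finite ∧ ∀ k : G,
    k • x ∈ P → k • y ∉ nb P (t ^ (3 : ℤ)) → ∃ j : ℤ, k * t ^ j ∈ F := by
  obtain ⟨p, q, hpq, hp, hq⟩ := w.two_neg 1
  obtain ⟨r, s, hrs, hr, hs⟩ := w.two_pos (t ^ (2 : ℤ))
  obtain ⟨p', q', hpq', hp', hq'⟩ := w.two_neg (t ^ (-1 : ℤ))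
  rw [show t ^ (2 : ℤ) * t = t ^ (3 : ℤ) by group] at hr hs
  refine ⟨_, (w.fin' hpq hrs).union (((w.fin' hpq' hrs).image fun h => t * h⁻¹)), fun k hx hy => ?_⟩
  have A1 : ∀ i : ℤ, 0 ≤ i → k • x ∈ nb P (1 * t ^ i) := fun i hi =>
    w.mono 1 hi (by simpa [mem_nb] using hx)
  have A2 : ∀ i : ℤ, i ≤ 3 → k • y ∉ nb P (1 * t ^ i) := fun i hi hm =>
    hy (by simpa using w.mono 1 hi hm)
  have dich : ∀ i : ℤ, 0 ≤ i → i ≤ 2 → ∀ j : ℤ,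
      nb P (1 * t ^ i) ⊆ nb P (k * t ^ (j + 1)) ∨ nb P (k * t ^ j) ⊆ nb P (1 * t ^ (i + 1)) := by
    intro i h0 h2 j
    by_contra hne
    rw [not_or, Set.not_subset, Set.not_subset] at hne
    obtain ⟨⟨m, hm, hm'⟩, m', h3, h3'⟩ := hne
    refine w.four' (1 * t ^ i) (k * t ^ j) (A1 i h0) (w.x_mem k j) hm ?_ ?_ h3
      (m₄ := k • y) ?_ ?_
    · rwa [mul_assoc, ← zpow_add_one]
    · rwa [mul_assoc, ← zpow_add_one]
    · rw [mul_assoc, ← zpow_add_one]; exact A2 _ (by omega)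
    · rw [mul_assoc, ← zpow_add_one]; exact w.y_notMem _ _
  have lo : ∃ m ∈ nb P (1 * t ^ (0 : ℤ)), ∃ j : ℤ, m ∉ nb P (k * t ^ j) := by
    by_cases e : p = k • x
    · exact ⟨q, by simpa using hq, w.esc_lo k fun e' => hpq (e.trans e'.symm)⟩
    · exact ⟨p, by simpa using hp, w.esc_lo k e⟩
  have hi : ∃ m, m ∉ nb P (1 * t ^ (1 : ℤ)) ∧ ∃ j : ℤ, m ∈ nb P (k * t ^ j) := by
    have mn := w.mono 1 (by norm_num : (1 : ℤ) ≤ 3)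
    by_cases e : r = k • y
    · exact ⟨s, fun h => hs (by simpa using mn h), w.esc_hi k fun e' => hrs (e.trans e'.symm)⟩
    · exact ⟨r, fun h => hr (by simpa using mn h), w.esc_hi k e⟩
  rcases interleave (A := fun i => nb P (1 * t ^ i)) (w.mono k)
    (dich 0 le_rfl (by norm_num)) (dich 2 (by norm_num) le_rfl) lo hi
    with ⟨j, h1, h2⟩ | ⟨j, h1, h2⟩
  · refine ⟨j, Or.inl ⟨h1 ?_, h1 ?_, fun h => hr ?_, fun h => hs ?_⟩⟩
    · simpa using hp
    · simpa using hq
    · simpa using h2 (by rwa [mul_assoc, ← zpow_add_one] at h)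
    · simpa using h2 (by rwa [mul_assoc, ← zpow_add_one] at h)
  · have a1 : ∀ m, m ∈ nb P (t ^ (-1 : ℤ)) → m ∈ nb P ((k * t ^ j)⁻¹ * t) := by
      intro m hm
      rw [← smul_mem_nb (g := k * t ^ j), mul_assoc, ← zpow_add] at hm
      have := h1 hm
      rw [← smul_mem_nb (g := k * t ^ j), mul_inv_cancel_left]
      simpa using this
    have a2 : ∀ m, m ∉ nb P (t ^ (3 : ℤ)) → m ∉ nb P ((k * t ^ j)⁻¹ * t * t) := by
      intro m hm hm'
      rw [mul_assoc, ← smul_mem_nb (g := k * t ^ j), mul_inv_cancel_left] at hm'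
      rw [← smul_mem_nb (g := k * t ^ j), mul_assoc, ← zpow_add] at hm
      exact hm (h2 (by simpa [zpow_two, pow_two, zpow_ofNat] using hm'))
    exact ⟨j, Or.inr ⟨_, ⟨a1 _ hp', a1 _ hq', a2 _ hr, a2 _ hs⟩, by group⟩⟩

theorem follow_neg (w : WallData t P x y) : ∃ F : Set G, F.Finite ∧ ∀ k : G,
    k • y ∈ P → k • x ∉ nb P (t ^ (3 : ℤ)) → ∃ j : ℤ, k * t ^ j ∈ F := by
  obtain ⟨p, q, hpq, hp, hq⟩ := w.two_neg 1
  obtain ⟨r, s, hrs, hr, hs⟩ := w.two_pos (t ^ (2 : ℤ))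
  obtain ⟨p', q', hpq', hp', hq'⟩ := w.two_neg (t ^ (-3 : ℤ))
  rw [show t ^ (2 : ℤ) * t = t ^ (3 : ℤ) by group] at hr hs
  refine ⟨_, (w.fin' hrs hpq).union (((w.fin' hrs hpq').image fun h => t * h⁻¹)), fun k hy hx => ?_⟩
  have A1 : ∀ i : ℤ, 0 ≤ i → k • y ∈ nb P (1 * t ^ i) := fun i hi =>
    w.mono 1 hi (by simpa [mem_nb] using hy)
  have A2 : ∀ i : ℤ, i ≤ 3 → k • x ∉ nb P (1 * t ^ i) := fun i hi hm =>
    hx (by simpa using w.mono 1 hi hm)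
  have hB : Monotone fun j : ℤ => (nb P (k * t ^ (-j)))ᶜ := fun a b hab =>
    Set.compl_subset_compl.2 (w.mono k (neg_le_neg hab))
  have dich : ∀ i : ℤ, 0 ≤ i → i ≤ 2 → ∀ j : ℤ,
      nb P (1 * t ^ i) ⊆ (nb P (k * t ^ (-(j + 1))))ᶜ ∨
        (nb P (k * t ^ (-j)))ᶜ ⊆ nb P (1 * t ^ (i + 1)) := by
    intro i h0 h2 j
    by_contra hne
    rw [not_or, Set.not_subset, Set.not_subset] at hne
    obtain ⟨⟨m, hm, hm'⟩, m', h3, h3'⟩ := hne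
    refine w.four' (1 * t ^ i) (k * t ^ (-(j + 1))) hm (not_not.1 hm') (A1 i h0) ?_ (m₃ := k • x)
      ?_ (w.x_mem _ _) (m₄ := m') ?_ ?_
    · rw [mul_assoc, ← zpow_add_one]; exact w.y_notMem _ _
    · rw [mul_assoc, ← zpow_add_one]; exact A2 _ (by omega)
    · rwa [mul_assoc, ← zpow_add_one]
    · rwa [mul_assoc, ← zpow_add_one, neg_add, neg_add_cancel_right]
  have lo : ∃ m ∈ nb P (1 * t ^ (0 : ℤ)), ∃ j : ℤ, m ∉ (nb P (k * t ^ (-j)))ᶜ := by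
    have key : ∀ m, m ≠ k • y → ∃ j : ℤ, m ∉ (nb P (k * t ^ (-j)))ᶜ := fun m hm => by
      obtain ⟨j, hj⟩ := w.esc_hi k hm
      exact ⟨-j, by simpa using hj⟩
    by_cases e : p = k • y
    · exact ⟨q, by simpa using hq, key _ fun e' => hpq (e.trans e'.symm)⟩
    · exact ⟨p, by simpa using hp, key _ e⟩
  have hi : ∃ m, m ∉ nb P (1 * t ^ (1 : ℤ)) ∧ ∃ j : ℤ, m ∈ (nb P (k * t ^ (-j)))ᶜ := by
    have key : ∀ m, m ≠ k • x → ∃ j : ℤ, m ∈ (nb P (k * t ^ (-j)))ᶜ := fun m hm => by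
      obtain ⟨j, hj⟩ := w.esc_lo k hm
      exact ⟨-j, by simpa using hj⟩
    have mn := w.mono 1 (by norm_num : (1 : ℤ) ≤ 3)
    by_cases e : r = k • x
    · exact ⟨s, fun h => hs (by simpa using mn h), key _ fun e' => hrs (e.trans e'.symm)⟩
    · exact ⟨r, fun h => hr (by simpa using mn h), key _ e⟩
  rcases interleave (A := fun i => nb P (1 * t ^ i)) hB
    (dich 0 le_rfl (by norm_num)) (dich 2 (by norm_num) le_rfl) lo hi
    with ⟨j, h1, h2⟩ | ⟨j, h1, h2⟩
  · have a1 : ∀ m, m ∉ nb P (t ^ (3 : ℤ)) → m ∈ nb P (k * t ^ (-(j + 1))) := fun m hm =>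
      not_not.1 fun h => hm (by simpa using h2 h)
    have a2 : ∀ m, m ∈ nb P (1 : G) → m ∉ nb P (k * t ^ (-(j + 1)) * t) := fun m hm h => by
      rw [mul_assoc, ← zpow_add_one, neg_add, neg_add_cancel_right] at h
      exact h1 (by simpa using hm) h
    exact ⟨-(j + 1), Or.inl ⟨a1 _ hr, a1 _ hs, a2 _ hp, a2 _ hq⟩⟩
  · have a1 : ∀ m, m ∉ nb P (t ^ (3 : ℤ)) → m ∈ nb P ((k * t ^ (-j))⁻¹ * t) := by
      intro m hm
      have hm : m ∉ nb P (t ^ (1 : ℤ)) := fun h => hm (by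
        simpa using w.mono 1 (by norm_num : (1 : ℤ) ≤ 3) (by simpa using h))
      rw [← smul_mem_nb (g := k * t ^ (-j)), mul_assoc, ← zpow_add,
        show -j + 1 = -(j - 1) by ring] at hm
      have := h1 hm
      rw [← smul_mem_nb (g := k * t ^ (-j)), mul_inv_cancel_left]
      simpa using this
    have a2 : ∀ m, m ∈ nb P (t ^ (-3 : ℤ)) → m ∉ nb P ((k * t ^ (-j))⁻¹ * t * t) := by
      intro m hm hm'
      rw [mul_assoc, ← smul_mem_nb (g := k * t ^ (-j)), mul_inv_cancel_left] at hm'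
      rw [← smul_mem_nb (g := k * t ^ (-j)), mul_assoc, ← zpow_add,
        show -j + -3 = -(j + 3) by ring] at hm
      exact h2 (by simpa [zpow_two, pow_two, zpow_ofNat] using hm') hm
    exact ⟨-j, Or.inr ⟨_, ⟨a1 _ hr, a1 _ hs, a2 _ hp', a2 _ hq'⟩, by group⟩⟩

/-- The elements that map the endpoints of the axis of `t` to opposite sides of the stretch
between the walls `1` and `t³`, in either direction, lie in finitely many cosets of `⟨t⟩`. -/
theorem follow (w : WallData t P x y) : ∃ F : Set G, F.Finite ∧ ∀ k : G,
    (k • x ∈ P ∧ k • y ∉ nb P (t ^ (3 : ℤ))) ∨ (k • y ∈ P ∧ k • x ∉ nb P (t ^ (3 : ℤ))) →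
    ∃ j : ℤ, k * t ^ j ∈ F := by
  obtain ⟨F₁, h1, h1'⟩ := w.follow_pos
  obtain ⟨F₂, h2, h2'⟩ := w.follow_neg
  refine ⟨F₁ ∪ F₂, h1.union h2, ?_⟩
  rintro k (⟨ha, hb⟩ | ⟨ha, hb⟩)
  · obtain ⟨j, hj⟩ := h1' k ha hb
    exact ⟨j, Or.inl hj⟩
  · obtain ⟨j, hj⟩ := h2' k ha hb
    exact ⟨j, Or.inr hj⟩

/-- An element whose axis follows the axis of `t` along sufficiently many walls preserves the
endpoints: by the pigeonhole principle it conjugates a power of `t` to a power of `t`. -/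
theorem follow_long (w : WallData t P x y) : ∃ L : ℕ, ∀ k : G,
    (k • x ∈ P ∧ k • y ∉ nb P (t ^ (L : ℤ))) ∨ (k • y ∈ P ∧ k • x ∉ nb P (t ^ (L : ℤ))) →
    (k • x = x ∨ k • x = y) ∧ (k • y = x ∨ k • y = y) := by
  obtain ⟨F, hF, hk⟩ := w.follow
  refine ⟨hF.toFinset.card + 3, fun k h => ?_⟩
  set n := hF.toFinset.card with hn
  have step : ∀ i : ℕ, i ≤ n → ∃ j : ℤ, t ^ (-(i : ℤ)) * k * t ^ j ∈ F := by
    intro i hi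
    have a1 : ∀ m : M, m ∈ P → t ^ (-(i : ℤ)) • m ∈ P := fun m hm => by
      have := w.mono 1 (by omega : (0 : ℤ) ≤ i) (show m ∈ nb P (1 * t ^ (0 : ℤ)) by
        simpa [mem_nb] using hm)
      simpa [mem_nb] using this
    have a2 : ∀ m : M, m ∉ nb P (t ^ ((n + 3 : ℕ) : ℤ)) →
        t ^ (-(i : ℤ)) • m ∉ nb P (t ^ (3 : ℤ)) := fun m hm h => by
      rw [show t ^ (3 : ℤ) = t ^ (-(i : ℤ)) * t ^ ((i : ℤ) + 3) by rw [← zpow_add]; simp,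
        smul_mem_nb] at h
      refine hm ?_
      have := w.mono 1 (by push_cast; omega : (i : ℤ) + 3 ≤ ((n + 3 : ℕ) : ℤ))
        (by simpa using h)
      simpa using this
    refine hk _ ?_
    rw [mul_smul, mul_smul]
    rcases h with ⟨h1, h2⟩ | ⟨h1, h2⟩
    · exact Or.inl ⟨a1 _ h1, a2 _ h2⟩
    · exact Or.inr ⟨a1 _ h1, a2 _ h2⟩
  choose! J hJ using step
  obtain ⟨i, hi, i', hi', hne, heq⟩ := Finset.exists_ne_map_eq_of_card_lt_of_maps_to
    (s := Finset.range (n + 1)) (t := hF.toFinset) (by simp [hn])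
    (f := fun i => t ^ (-(i : ℤ)) * k * t ^ (J i)) (fun i hi => by
      simp only [Finset.coe_range, Set.mem_Iio] at hi
      simpa using hJ i (by omega))
  -- `t ^ (i' - i)` equals `k t ^ (J i' - J i) k⁻¹`, hence fixes `kx` and `ky`
  have conj : ∀ m : M, (∀ j : ℤ, t ^ j • m = m) → t ^ ((i' : ℤ) - i) • k • m = k • m := by
    intro m hm
    have e : t ^ ((i' : ℤ) - i) * k = k * t ^ (J i' - J i) := by
      calc t ^ ((i' : ℤ) - i) * k
          = t ^ (i' : ℤ) * (t ^ (-(i : ℤ)) * k * t ^ (J i)) * t ^ (-J i) := by group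
        _ = t ^ (i' : ℤ) * (t ^ (-(i' : ℤ)) * k * t ^ (J i')) * t ^ (-J i) := by

          rw [heq]
        _ = k * t ^ (J i' - J i) := by group
    rw [← mul_smul, e, mul_smul, hm]
  have hne' : (i' : ℤ) - i ≠ 0 := by omega
  exact ⟨w.fix_zpow hne' (conj x w.zx), w.fix_zpow hne' (conj y w.zy)⟩

end WallData

end Follow

end AHProof

namespace AHProof

/-! ### The projection data defined by counting walls -/

section Count

open scoped Pointwise

variable {G : Type*} {M : Type*} [Group G] [MulAction G M]

theorem smul_pair' (g : G) (x y : M) : g • ({x, y} : Set M) = {g • x, g • y} := by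
  rw [← Set.image_smul, Set.image_pair]

theorem smul_subset_nb {P : Set M} {g h : G} {X : Set M} :
    g • X ⊆ nb P (g * h) ↔ X ⊆ nb P h := by
  constructor
  · exact fun H m hm => smul_mem_nb.1 (H (Set.smul_mem_smul_set hm))
  · rintro H _ ⟨m, hm, rfl⟩
    exact smul_mem_nb.2 (H hm)

theorem smul_disjoint_nb {P : Set M} {g h : G} {X : Set M} :
    Disjoint (g • X) (nb P (g * h)) ↔ Disjoint X (nb P h) := by
  rw [Set.disjoint_left, Set.disjoint_left]
  constructor
  · exact fun H m hm hm' => H (Set.smul_mem_smul_set hm) (smul_mem_nb.2 hm')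
  · rintro H _ ⟨m, hm, rfl⟩ hm'
    exact H hm (smul_mem_nb.1 hm')

/-- The walls along the axis with endpoints `Y` that separate `X` from `Z`. -/
def sepSet (t : G) (P : Set M) (x y : M) (Y X Z : Set M) : Set G :=
  {h | h • ({x, y} : Set M) = Y ∧ ((X ⊆ nb P h ∧ Disjoint Z (nb P (h * t))) ∨
    (Z ⊆ nb P h ∧ Disjoint X (nb P (h * t))))}

/-- The walls along the axis with endpoints `Y` that have `W` on neither side. -/
def amb (t : G) (P : Set M) (x y : M) (Y W : Set M) : Set G :=
  {h | h • ({x, y} : Set M) = Y ∧ ¬ W ⊆ nb P h ∧ ¬ Disjoint W (nb P (h * t))}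

namespace WallData

variable {t : G} {P : Set M} {x y : M}

theorem ne (w : WallData t P x y) : x ≠ y := fun e => w.hy (e ▸ w.hx)

theorem t_pair (w : WallData t P x y) (j : ℤ) : t ^ j • ({x, y} : Set M) = {x, y} := by
  rw [smul_pair', w.zx, w.zy]

theorem stab_of (w : WallData t P x y) {k : G} (h1 : k • x = x ∨ k • x = y)
    (h2 : k • y = x ∨ k • y = y) : k • ({x, y} : Set M) = {x, y} := by
  rw [smul_pair']
  have hne : k • x ≠ k • y := fun e => w.ne (smul_left_cancel k e)
  rcases h1 with h1 | h1 <;> rcases h2 with h2 | h2 <;> rw [h1, h2] at hne ⊢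
  · exact absurd rfl hne
  · exact Set.pair_comm _ _
  · exact absurd rfl hne

/-- The stabilizer of the axis of `t` is contained in a finite union of cosets of the group
generated by `t`. -/
theorem exists_cosets (w : WallData t P x y) : ∃ F : Set G, F.Finite ∧ ∀ k : G,
    k • ({x, y} : Set M) = {x, y} → ∃ j : ℤ, k * t ^ j ∈ F := by
  obtain ⟨F, hF, hk⟩ := w.follow
  refine ⟨F, hF, fun k h => hk k ?_⟩
  have hy : y ∉ nb P (t ^ (3 : ℤ)) := by simpa using w.y_notMem 1 3
  have h1 : k • x ∈ ({x, y} : Set M) := h ▸ Set.smul_mem_smul_set (by simp)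
  have h2 : k • y ∈ ({x, y} : Set M) := h ▸ Set.smul_mem_smul_set (by simp)
  have hne : k • x ≠ k • y := fun e => w.ne (smul_left_cancel k e)
  rcases h1 with h1 | h1 <;> rcases h2 with h2 | h2 <;> rw [h1, h2] at hne ⊢
  · exact absurd rfl hne
  · exact Or.inl ⟨w.hx, hy⟩
  · exact Or.inr ⟨w.hx, hy⟩
  · exact absurd rfl hne

/-- Only boundedly many walls along an axis have another axis on neither side: otherwise the second
axis would follow the first one for a long time. -/
theorem amb_bound (w : WallData t P x y) : ∃ C : ℕ, ∀ g k : G,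
    g • ({x, y} : Set M) ≠ k • ({x, y} : Set M) →
    (amb t P x y (g • {x, y}) (k • {x, y})).Finite ∧
      (amb t P x y (g • {x, y}) (k • {x, y})).ncard ≤ C := by
  obtain ⟨F, hF, hk⟩ := w.exists_cosets
  obtain ⟨L, hL⟩ := w.follow_long
  refine ⟨(F ×ˢ Set.Icc (-(L : ℤ)) L).ncard, fun g k hne => ?_⟩
  -- two ambiguous walls in the same coset of `⟨t⟩` are at bounded distance
  have close : ∀ (c : G) (j j' : ℤ), c * t ^ j ∈ amb t P x y (g • {x, y}) (k • {x, y}) →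
      c * t ^ j' ∈ amb t P x y (g • {x, y}) (k • {x, y}) → j' ≤ j + L := by
    intro c j j' h h'
    by_contra hlt
    obtain ⟨h1, -, h3⟩ := h
    obtain ⟨-, h2, -⟩ := h'
    rw [Set.not_disjoint_iff] at h3
    rw [Set.not_subset] at h2
    obtain ⟨a, ha, ha'⟩ := h3
    obtain ⟨b, hb, hb'⟩ := h2
    rw [mul_assoc, ← zpow_add_one] at ha'
    have ha2 : (c * t ^ (j + 1))⁻¹ • a ∈ P := ha'
    have hb2 : (c * t ^ (j + 1))⁻¹ • b ∉ nb P (t ^ (L : ℤ)) := by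
      rw [← mem_nb_mul, mul_assoc, ← zpow_add]
      exact fun h => hb' (w.mono c (by omega) h)
    have hab : a ≠ b := fun e => hb' (e ▸ w.mono c (by omega) ha')
    have key := hL ((c * t ^ (j + 1))⁻¹ * k) (by
      rw [smul_pair'] at ha hb
      rw [mul_smul, mul_smul]
      rcases ha with rfl | rfl <;> rcases hb with rfl | rfl
      · exact absurd rfl hab
      · exact Or.inl ⟨ha2, hb2⟩
      · exact Or.inr ⟨ha2, hb2⟩
      · exact absurd rfl hab)
    have e := w.stab_of key.1 key.2
    rw [mul_smul, inv_smul_eq_iff, mul_smul, w.t_pair] at e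
    rw [mul_smul, w.t_pair] at h1
    exact hne (h1.symm.trans e.symm)
  have base : ∀ f : G, ∃ b : ℤ, ∀ j : ℤ,
      g * f * t ^ j ∈ amb t P x y (g • {x, y}) (k • {x, y}) → j - b ∈ Set.Icc (-(L : ℤ)) L := by
    intro f
    by_cases hb : ∃ b : ℤ, g * f * t ^ b ∈ amb t P x y (g • {x, y}) (k • {x, y})
    · obtain ⟨b, hb⟩ := hb
      refine ⟨b, fun j hj => ?_⟩
      have h1 := close _ _ _ hj hb
      have h2 := close _ _ _ hb hj
      exact ⟨by omega, by omega⟩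
    · exact ⟨0, fun j hj => absurd ⟨j, hj⟩ hb⟩
  choose b hb using base
  have hfin : (F ×ˢ Set.Icc (-(L : ℤ)) L).Finite := hF.prod (Set.finite_Icc _ _)
  have hsub : amb t P x y (g • {x, y}) (k • {x, y}) ⊆
      (fun p : G × ℤ => g * p.1 * t ^ (b p.1 + p.2)) '' (F ×ˢ Set.Icc (-(L : ℤ)) L) := by
    intro h hh
    obtain ⟨j, hj⟩ := hk (g⁻¹ * h) (by rw [mul_smul, hh.1, inv_smul_smul])
    have e : h = g * (g⁻¹ * h * t ^ j) * t ^ (-j) := by group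
    refine ⟨(g⁻¹ * h * t ^ j, -j - b (g⁻¹ * h * t ^ j)), ⟨hj, hb _ _ (by rw [← e]; exact hh)⟩, ?_⟩
    simp only [add_sub_cancel]
    exact e.symm
  exact ⟨(hfin.image _).subset hsub, (Set.ncard_le_ncard hsub (hfin.image _)).trans
    (Set.ncard_image_le hfin)⟩

theorem sep_fin (w : WallData t P x y) (g k : G) :
    {h : G | (g • ({x, y} : Set M) ⊆ nb P h ∧ Disjoint (k • ({x, y} : Set M)) (nb P (h * t))) ∨
      (k • ({x, y} : Set M) ⊆ nb P h ∧ Disjoint (g • ({x, y} : Set M)) (nb P (h * t)))}.Finite := by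
  have hne : ∀ g : G, g • x ≠ g • y := fun g e => w.ne (smul_left_cancel g e)
  refine ((w.fin' (hne g) (hne k)).union (w.fin' (hne k) (hne g))).subset ?_
  have aux : ∀ g k h : G, g • ({x, y} : Set M) ⊆ nb P h →
      Disjoint (k • ({x, y} : Set M)) (nb P (h * t)) →
      g • x ∈ nb P h ∧ g • y ∈ nb P h ∧ k • x ∉ nb P (h * t) ∧ k • y ∉ nb P (h * t) := by
    intro g k h h1 h2
    rw [smul_pair'] at h1 h2
    rw [Set.disjoint_left] at h2
    exact ⟨h1 (by simp), h1 (by simp), h2 (by simp), h2 (by simp)⟩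
  rintro h (⟨h1, h2⟩ | ⟨h1, h2⟩)
  · exact Or.inl (aux _ _ _ h1 h2)
  · exact Or.inr (aux _ _ _ h1 h2)

end WallData

end Count

end AHProof

namespace AHProof

/-! ### Acylindrical hyperbolicity from walls -/

section Assemble

open scoped Pointwise

variable {G : Type*} {M : Type} [Group G] [MulAction G M]

namespace WallData

variable {t : G} {P : Set M} {x y : M}

theorem zinj (w : WallData t P x y) : Function.Injective fun j : ℤ => t ^ j := by
  intro a b hab
  by_contra hne
  obtain ⟨z, hzx, hzy⟩ := w.third
  have e : t ^ (a - b) = 1 := by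
    simp only at hab
    rw [zpow_sub, hab, mul_inv_cancel]
  rcases w.fix_zpow (sub_ne_zero.2 hne) (m := z) (by rw [e, one_smul]) with h | h
  · exact hzx h
  · exact hzy h

/-- Distinct axes have no endpoint in common: otherwise infinitely many walls of one of them would
be ambiguous for the other. -/
theorem disj (w : WallData t P x y) {k : G} (hk : k • ({x, y} : Set M) ≠ {x, y}) {a b : M}
    (hab : k • ({x, y} : Set M) = {a, b}) (hne : a ≠ b) : a ≠ x ∧ a ≠ y := by
  obtain ⟨C, hC⟩ := w.amb_bound
  have hfin := (hC 1 k (by rw [one_smul]; exact hk.symm)).1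
  rw [one_smul, hab] at hfin
  rw [hab] at hk
  constructor
  · rintro rfl
    have hb : b ≠ y := by rintro rfl; exact hk rfl
    obtain ⟨j₀, hj₀⟩ := w.esc_lo 1 (m := b) (by rw [one_smul]; exact hne.symm)
    refine Set.infinite_of_injective_forall_mem (f := fun n : ℕ => t ^ (j₀ - (n : ℤ))) ?_ ?_ hfin
    · intro n m hnm
      have := w.zinj hnm
      omega
    · intro n
      refine ⟨w.t_pair _, fun h => hj₀ ?_, ?_⟩
      · have := h (show b ∈ ({a, b} : Set M) by simp)
        exact w.mono 1 (by omega : j₀ - n ≤ j₀) (by simpa using this)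
      · rw [Set.not_disjoint_iff]
        refine ⟨a, by simp, ?_⟩
        have := w.x_mem 1 (j₀ - n + 1)
        rwa [one_smul, one_mul, zpow_add_one] at this
  · rintro rfl
    have hb : b ≠ x := by rintro rfl; exact hk (Set.pair_comm _ _)
    obtain ⟨j₀, hj₀⟩ := w.esc_hi 1 (m := b) (by rw [one_smul]; exact hne.symm)
    refine Set.infinite_of_injective_forall_mem (f := fun n : ℕ => t ^ (j₀ + (n : ℤ))) ?_ ?_ hfin
    · intro n m hnm
      have := w.zinj hnm
      omega
    · intro n
      refine ⟨w.t_pair _, fun h => ?_, ?_⟩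
      · have := h (show a ∈ ({a, b} : Set M) by simp)
        have h2 := w.y_notMem 1 (j₀ + n)
        rw [one_smul, one_mul] at h2
        exact h2 this
      · rw [Set.not_disjoint_iff]
        refine ⟨b, by simp, ?_⟩
        have := w.mono 1 (by omega : j₀ ≤ j₀ + n + 1) hj₀
        simp only [one_mul] at this
        rwa [zpow_add_one] at this

theorem disj' (w : WallData t P x y) {k : G} (hk : k • ({x, y} : Set M) ≠ {x, y}) :
    (k • x ≠ x ∧ k • x ≠ y) ∧ (k • y ≠ x ∧ k • y ≠ y) := by
  have hne : k • x ≠ k • y := fun e => w.ne (smul_left_cancel k e)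
  exact ⟨w.disj hk (smul_pair' _ _ _) hne,
    w.disj hk ((smul_pair' _ _ _).trans (Set.pair_comm _ _)) hne.symm⟩

/-- Seen from the axis of `t`, the translates of another axis by the powers of `t` move away. -/
theorem growth (w : WallData t P x y) {k : G} (hk : k • ({x, y} : Set M) ≠ {x, y}) (N : ℕ) :
    ∃ n₀ : ℕ, ∀ n : ℕ, n₀ ≤ n →
      N ≤ (sepSet t P x y {x, y} (k • {x, y}) (t ^ n • k • {x, y})).ncard := by
  obtain ⟨⟨h1, h2⟩, h3, h4⟩ := w.disj' hk
  obtain ⟨a, ha⟩ := w.esc_lo 1 (m := k • x) (by rwa [one_smul])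
  obtain ⟨a', ha'⟩ := w.esc_lo 1 (m := k • y) (by rwa [one_smul])
  obtain ⟨b, hb⟩ := w.esc_hi 1 (m := k • x) (by rwa [one_smul])
  obtain ⟨b', hb'⟩ := w.esc_hi 1 (m := k • y) (by rwa [one_smul])
  set lo := min a a'
  set hi := max b b'
  have lo1 : k • x ∉ nb P (1 * t ^ lo) := fun h => ha (w.mono 1 (min_le_left _ _) h)
  have lo2 : k • y ∉ nb P (1 * t ^ lo) := fun h => ha' (w.mono 1 (min_le_right _ _) h)
  have hi1 : k • x ∈ nb P (1 * t ^ hi) := w.mono 1 (le_max_left _ _) hb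
  have hi2 : k • y ∈ nb P (1 * t ^ hi) := w.mono 1 (le_max_right _ _) hb'
  refine ⟨(N + (hi - lo)).toNat, fun n hn => ?_⟩
  have hfin : (sepSet t P x y {x, y} (k • {x, y}) (t ^ n • k • {x, y})).Finite := by
    rw [← mul_smul]
    exact (w.sep_fin k (t ^ n * k)).subset fun h hh => hh.2
  -- the walls `t ^ j` with `hi ≤ j < hi + N` separate
  have hsub : (fun j : ℤ => t ^ j) '' (Set.Ico hi (hi + N)) ⊆
      sepSet t P x y {x, y} (k • {x, y}) (t ^ n • k • {x, y}) := by
    rintro _ ⟨j, ⟨hj1, hj2⟩, rfl⟩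
    have up := w.mono 1 hj1
    have down : ∀ m, m ∉ nb P (1 * t ^ lo) → t ^ n • m ∉ nb P (t ^ j * t) := by
      intro m hm h
      rw [show t ^ j * t = t ^ n * (1 * t ^ (j + 1 - n)) by
        rw [one_mul, ← zpow_natCast, ← zpow_add, ← zpow_add_one]; congr 1; ring, smul_mem_nb] at h
      exact hm (w.mono 1 (by omega) h)
    refine ⟨w.t_pair j, Or.inl ⟨?_, ?_⟩⟩
    · rw [smul_pair']
      rintro m (rfl | rfl)
      · simpa using up hi1
      · simpa using up hi2
    · rw [smul_pair', smul_pair', Set.disjoint_left]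
      rintro m (rfl | rfl)
      · exact down _ lo1
      · exact down _ lo2
  calc N = ((fun j : ℤ => t ^ j) '' (Set.Ico hi (hi + N))).ncard := by
        rw [Set.ncard_image_of_injective _ w.zinj, ← Finset.coe_Ico, Set.ncard_coe_finset]
        simp
    _ ≤ _ := Set.ncard_le_ncard hsub hfin

theorem orb (Y : MulAction.orbit G ({x, y} : Set M)) : ∃ g : G, (Y : Set M) = g • {x, y} := by
  obtain ⟨g, hg⟩ := Y.2
  exact ⟨g, hg.symm⟩

theorem sepSet_finite (w : WallData t P x y) (Y X Z : MulAction.orbit G ({x, y} : Set M)) :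
    (sepSet t P x y (Y : Set M) X Z).Finite := by
  obtain ⟨g, hg⟩ := orb X
  obtain ⟨k, hk⟩ := orb Z
  rw [hg, hk]
  exact (w.sep_fin g k).subset fun h hh => hh.2

theorem sepSet_symm (Y X Z : Set M) : sepSet t P x y Y X Z = sepSet t P x y Y Z X := by
  ext h
  exact and_congr_right fun _ => Or.comm

/-- If a wall along the axis `Y` separates `X` from `Z`, then no wall along the axis `X` separates
`Y` from `Z`: all four intersections of the sides of two such walls would be non-empty. -/
theorem behr_aux (w : WallData t P x y) {Z : Set M} (hZ : Z.Nonempty) {Y X : Set M} {h k : G}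
    (hh : h ∈ sepSet t P x y Y X Z) (hk : k ∈ sepSet t P x y X Y Z) : False := by
  obtain ⟨z, hz⟩ := hZ
  obtain ⟨rfl, hh⟩ := hh
  obtain ⟨rfl, hk⟩ := hk
  simp only [smul_pair', Set.disjoint_left] at hh hk
  have a1 := w.x_mem' h
  have a2 := w.y_notMem' h
  have b1 := w.x_mem' k
  have b2 := w.y_notMem' k
  have hx1 : h • x ∈ ({h • x, h • y} : Set M) := by simp
  have hy1 : h • y ∈ ({h • x, h • y} : Set M) := by simp
  have kx1 : k • x ∈ ({k • x, k • y} : Set M) := by simp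
  have ky1 : k • y ∈ ({k • x, k • y} : Set M) := by simp
  rcases hh with ⟨h1, h2⟩ | ⟨h1, h2⟩ <;> rcases hk with ⟨k1, k2⟩ | ⟨k1, k2⟩
  · exact w.four' h k (h1 kx1) b1 (h1 ky1) b2 a2 (k1 hy1) (h2 hz) (k2 hz)
  · exact w.four' h k (h1 kx1) b1 (h1 ky1) b2 (h2 hz) (k1 hz) a2 (k2 hy1)
  · exact w.four' h k a1 (k1 hx1) (h1 hz) (k2 hz) (h2 kx1) b1 (h2 ky1) b2
  · exact w.four' h k (h1 hz) (k1 hz) a1 (k2 hx1) (h2 kx1) b1 (h2 ky1) b2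

/-- Counting separating walls gives projection data on the set of axes. -/
theorem wproj (w : WallData t P x y) {C : ℕ} (hC : ∀ g k : G,
    g • ({x, y} : Set M) ≠ k • ({x, y} : Set M) →
    (amb t P x y (g • {x, y}) (k • {x, y})).Finite ∧
      (amb t P x y (g • {x, y}) (k • {x, y})).ncard ≤ C) :
    WProj G (V := MulAction.orbit G ({x, y} : Set M))
      (fun Y X Z => (sepSet t P x y (Y : Set M) X Z).ncard + C) C where
  symm Y X Z := by rw [sepSet_symm]
  tri Y X W Z hWY := by
    obtain ⟨g, hg⟩ := orb Y
    obtain ⟨k, hk⟩ := orb W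
    obtain ⟨hf, hc⟩ := hC g k (fun e => hWY (Subtype.ext (by rw [hg, hk, e])))
    rw [← hg, ← hk] at hf hc
    have hsub : sepSet t P x y (Y : Set M) X Z ⊆ sepSet t P x y (Y : Set M) X W ∪
        sepSet t P x y (Y : Set M) W Z ∪ amb t P x y (Y : Set M) W := by
      rintro h ⟨hY, hh⟩
      by_cases h1 : (W : Set M) ⊆ nb P h
      · left
        rcases hh with ⟨h2, h3⟩ | ⟨h2, h3⟩
        · exact Or.inr ⟨hY, Or.inl ⟨h1, h3⟩⟩
        · exact Or.inl ⟨hY, Or.inr ⟨h1, h3⟩⟩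
      by_cases h4 : Disjoint (W : Set M) (nb P (h * t))
      · left
        rcases hh with ⟨h2, h3⟩ | ⟨h2, h3⟩
        · exact Or.inl ⟨hY, Or.inl ⟨h2, h4⟩⟩
        · exact Or.inr ⟨hY, Or.inr ⟨h2, h4⟩⟩
      exact Or.inr ⟨hY, h1, h4⟩
    have h1 := Set.ncard_le_ncard hsub
      (((w.sepSet_finite Y X W).union (w.sepSet_finite Y W Z)).union hf)
    have h2 := Set.ncard_union_le (sepSet t P x y (Y : Set M) X W ∪
        sepSet t P x y (Y : Set M) W Z) (amb t P x y (Y : Set M) W)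
    have h3 := Set.ncard_union_le (sepSet t P x y (Y : Set M) X W) (sepSet t P x y (Y : Set M) W Z)
    omega
  self Y X := by
    have : sepSet t P x y (Y : Set M) X X = ∅ := by
      rw [Set.eq_empty_iff_forall_notMem]
      rintro h ⟨-, hh⟩
      rw [or_self] at hh
      obtain ⟨k, hk⟩ := orb X
      have hm : k • x ∈ (X : Set M) := by rw [hk]; exact Set.smul_mem_smul_set (by simp)
      exact Set.disjoint_left.1 hh.2 hm (w.sub h (hh.1 hm))
    simp [this]
  behr Y X Z hlt := by
    have : (sepSet t P x y (Y : Set M) X Z).Nonempty := by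
      refine Set.nonempty_of_ncard_ne_zero fun e => ?_
      simp [e] at hlt
    obtain ⟨h, hh⟩ := this
    have : sepSet t P x y (X : Set M) Y Z = ∅ := by
      rw [Set.eq_empty_iff_forall_notMem]
      intro k hk
      obtain ⟨l, hl⟩ := orb Z
      exact w.behr_aux ⟨l • x, by rw [hl]; exact Set.smul_mem_smul_set (by simp)⟩ hh hk
    simp [this]
  fin X Z := by
    obtain ⟨g, hg⟩ := orb X
    obtain ⟨k, hk⟩ := orb Z
    refine ((w.sep_fin g k).image fun h => (⟨h • {x, y}, h, rfl⟩ :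
      MulAction.orbit G ({x, y} : Set M))).subset fun Y hY => ?_
    have : (sepSet t P x y (Y : Set M) X Z).Nonempty := by
      refine Set.nonempty_of_ncard_ne_zero fun e => ?_
      have : C < (sepSet t P x y (Y : Set M) X Z).ncard + C := hY
      omega
    obtain ⟨h, hh⟩ := this
    refine ⟨h, ?_, Subtype.ext hh.1⟩
    have := hh.2
    rw [hg, hk] at this
    exact this
  inv g Y X Z := by
    have : sepSet t P x y ((g • Y : MulAction.orbit G ({x, y} : Set M)) : Set M)
        (g • X : MulAction.orbit G ({x, y} : Set M)) (g • Z : MulAction.orbit G ({x, y} : Set M)) =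
        (fun h => g * h) '' sepSet t P x y (Y : Set M) X Z := by
      rw [MulAction.orbit.coe_smul, MulAction.orbit.coe_smul, MulAction.orbit.coe_smul]
      ext h
      obtain ⟨h, rfl⟩ : ∃ h', h = g * h' := ⟨g⁻¹ * h, by group⟩
      rw [(mul_right_injective g).mem_set_image]
      unfold sepSet
      simp only [Set.mem_ofPred_eq]
      rw [mul_smul, smul_left_cancel_iff, smul_subset_nb, smul_subset_nb, mul_assoc,
        smul_disjoint_nb, smul_disjoint_nb]
    simp only [this]
    rw [Set.ncard_image_of_injective _ (mul_right_injective g)]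
  base Y Z := by
    have : sepSet t P x y (Y : Set M) Y Z = ∅ := by
      rw [Set.eq_empty_iff_forall_notMem]
      rintro h ⟨hY, hh⟩
      rw [← hY, smul_pair'] at hh
      rcases hh with ⟨h1, -⟩ | ⟨-, h1⟩
      · exact w.y_notMem' h (w.sub h (h1 (by simp)))
      · exact Set.disjoint_left.1 h1 (by simp) (w.sub h (w.x_mem' h))
    simp [this]

/-- Two distinct axes have boundedly large common stabilizer. -/
theorem stab_bound (w : WallData t P x y) {C : ℕ} (hC : ∀ g k : G,
    g • ({x, y} : Set M) ≠ k • ({x, y} : Set M) →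
    (amb t P x y (g • {x, y}) (k • {x, y})).Finite ∧
      (amb t P x y (g • {x, y}) (k • {x, y})).ncard ≤ C)
    (X Z : MulAction.orbit G ({x, y} : Set M)) (hXZ : X ≠ Z) (F : Finset G)
    (hF : ∀ g ∈ F, g • X = X ∧ g • Z = Z) : F.card ≤ C := by
  obtain ⟨g, hg⟩ := orb X
  obtain ⟨k, hk⟩ := orb Z
  have hne : g • ({x, y} : Set M) ≠ k • ({x, y} : Set M) :=
    fun e => hXZ (Subtype.ext (by rw [hg, hk, e]))
  obtain ⟨hf, hc⟩ := hC g k hne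
  -- an ambiguous wall exists
  have hd := (w.disj' (k := g⁻¹ * k) (fun e => hne (by
    rw [mul_smul, inv_smul_eq_iff] at e; exact e.symm))).1
  rw [mul_smul] at hd
  obtain ⟨j, hj1, hj2⟩ := w.gap g (m := k • x) (fun e => hd.1 (by rw [e, inv_smul_smul]))
    (fun e => hd.2 (by rw [e, inv_smul_smul]))
  have hmem : k • x ∈ k • ({x, y} : Set M) := Set.smul_mem_smul_set (by simp)
  have h0 : g * t ^ j ∈ amb t P x y (g • {x, y}) (k • {x, y}) := by
    refine ⟨by rw [mul_smul, w.t_pair], fun h => hj1 (h hmem), ?_⟩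
    rw [Set.not_disjoint_iff]
    exact ⟨_, hmem, by rwa [mul_assoc, ← zpow_add_one]⟩
  -- the stabilizer acts freely on the ambiguous walls
  have hsub : (fun f => f * (g * t ^ j)) '' (F : Set G) ⊆
      amb t P x y (g • {x, y}) (k • {x, y}) := by
    rintro _ ⟨f, hfF, rfl⟩
    obtain ⟨h1, h2⟩ := hF f hfF
    have h1 := congrArg Subtype.val h1
    have h2 := congrArg Subtype.val h2
    rw [MulAction.orbit.coe_smul] at h1 h2
    rw [hg] at h1
    rw [hk] at h2
    refine ⟨by rw [mul_smul, h0.1, h1], ?_, ?_⟩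
    · rw [← h2, smul_subset_nb]; exact h0.2.1
    · rw [← h2, mul_assoc, smul_disjoint_nb]; exact h0.2.2
  calc F.card = (F : Set G).ncard := (Set.ncard_coe_finset F).symm
    _ = ((fun f => f * (g * t ^ j)) '' (F : Set G)).ncard :=
      (Set.ncard_image_of_injective _ (mul_left_injective _)).symm
    _ ≤ _ := Set.ncard_le_ncard hsub hf
    _ ≤ C := hc

/-- Since `G` is not virtually cyclic, some element moves the axis of `t`; large powers of `t` and of
its conjugate then rotate by a large amount about two distinct axes. -/
theorem acylHyp (w : WallData t P x y) (hG : ¬ VirtuallyCyclic G) :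
    AcylindricallyHyperbolic G := by
  -- some element moves the axis of `t`
  obtain ⟨f, hf⟩ : ∃ f : G, f • ({x, y} : Set M) ≠ {x, y} := by
    by_contra hall
    push Not at hall
    obtain ⟨F, hF, hk⟩ := w.exists_cosets
    refine hG ⟨Subgroup.zpowers t, inferInstance, ?_⟩
    have : Finite (G ⧸ Subgroup.zpowers t) := by
      have := hF.to_subtype
      refine Finite.of_surjective (fun f : F => (QuotientGroup.mk f.1 : G ⧸ Subgroup.zpowers t)) ?_
      intro q
      induction q using QuotientGroup.induction_on with
      | H k =>
        obtain ⟨j, hj⟩ := hk k (hall k)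
        refine ⟨⟨_, hj⟩, ?_⟩
        rw [QuotientGroup.eq]
        exact ⟨-j, by simp only; group⟩
    exact (Subgroup.finiteIndex_of_finite_quotient (H := Subgroup.zpowers t)).index_ne_zero
  have hf' : f⁻¹ • ({x, y} : Set M) ≠ {x, y} := fun e => hf (by
    rw [inv_smul_eq_iff] at e; exact e.symm)
  obtain ⟨C, hC⟩ := w.amb_bound
  have hW := w.wproj hC
  obtain ⟨n₁, h1⟩ := w.growth hf (42 * C + 1)
  obtain ⟨n₂, h2⟩ := w.growth hf' (42 * C + 1)
  set n := max n₁ n₂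
  let Y₀ : MulAction.orbit G ({x, y} : Set M) := ⟨{x, y}, MulAction.mem_orbit_self _⟩
  have hY₀ : (Y₀ : Set M) = {x, y} := rfl
  have ht : t ^ n • Y₀ = Y₀ := Subtype.ext (by
    rw [MulAction.orbit.coe_smul]; simpa using w.t_pair n)
  refine acylHyp_of_proj hW (w.stab_bound hC) (a := t ^ n) (b := f * t ^ n * f⁻¹) (Y₀ := Y₀)
    (Y₁ := f • Y₀) ht ?_ ?_ ?_ ?_
  · rw [mul_smul, mul_smul, inv_smul_smul, ht]
  · have := h1 n (le_max_left _ _)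
    simp only [MulAction.orbit.coe_smul, hY₀]
    omega
  · have := h1 (n + n) (by have := le_max_left n₁ n₂; omega)
    simp only [MulAction.orbit.coe_smul, hY₀]
    rw [pow_add, mul_smul] at this
    omega
  · have := h2 n (le_max_right _ _)
    have e := hW.inv f⁻¹ (f • Y₀) Y₀ ((f * t ^ n * f⁻¹) • Y₀)
    rw [← e, inv_smul_smul, mul_assoc, mul_smul, inv_smul_smul, mul_smul]
    simp only [MulAction.orbit.coe_smul, hY₀]
    omega

end WallData

end Assemble

end AHProof

namespace AHProof

/-! ### From north–south dynamics to walls -/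

section Dynamics

variable {G : Type*} {M : Type} [Group G] [TopologicalSpace M] {act : G → M → M}

theorem t2_of_completelyHausdorff (h : CompletelyHausdorff M) : T2Space M :=
  ⟨fun u v huv => by
    obtain ⟨U, V, hU, hV, hu, hv, hd⟩ := h u v huv
    refine ⟨U, V, hU, hV, hu, hv, Set.disjoint_left.2 fun m h1 h2 => ?_⟩
    have : m ∈ closure U ∩ closure V := ⟨subset_closure h1, subset_closure h2⟩
    rw [hd] at this
    exact this⟩

theorem exists_third {N : Type*} (h : ∃ a b c : N, a ≠ b ∧ b ≠ c ∧ a ≠ c) (x y : N) :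
    ∃ z, z ≠ x ∧ z ≠ y := by
  obtain ⟨a, b, c, hab, hbc, hac⟩ := h
  by_contra hne
  push Not at hne
  by_cases ha : a = x
  · exact hbc ((hne b fun h => hab (ha.trans h.symm)).trans
      (hne c fun h => hac (ha.trans h.symm)).symm)
  · by_cases hb : b = x
    · exact hac ((hne a ha).trans (hne c fun h => hbc (hb.trans h.symm)).symm)
    · exact hab ((hne a ha).trans (hne b hb).symm)

theorem exists_open_prod {U : Set (M × M)} (hU : IsOpen U) {a b : M} (h : (a, b) ∈ U) :
    ∃ A B : Set M, IsOpen A ∧ IsOpen B ∧ a ∈ A ∧ b ∈ B ∧ ∀ p ∈ A, ∀ q ∈ B, (p, q) ∈ U := by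
  obtain ⟨A, B, hA, hB, ha, hb, hs⟩ := isOpen_prod_iff.1 hU a b h
  exact ⟨A, B, hA, hB, ha, hb, fun p hp q hq => hs ⟨hp, hq⟩⟩

/-- For small enough neighbourhoods `A` of `x` and `B` of `y`, the image `f A` misses `A` or `B`. -/
theorem shrink_one [T2Space M] {f : M → M} (hf : Continuous f) {x y : M} (hxy : x ≠ y) :
    ∃ A B : Set M, IsOpen A ∧ IsOpen B ∧ x ∈ A ∧ y ∈ B ∧
      ((∀ m ∈ A, f m ∉ A) ∨ (∀ m ∈ A, f m ∉ B)) := by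
  by_cases hx : f x = x
  · obtain ⟨U, V, hU, hV, hxU, hyV, hd⟩ := t2_separation hxy
    refine ⟨f ⁻¹' U, V, hU.preimage hf, hV, by simpa [hx] using hxU, hyV,
      Or.inr fun m hm hm' => Set.disjoint_left.1 hd hm hm'⟩
  · obtain ⟨U, V, hU, hV, hxU, hyV, hd⟩ := t2_separation hx
    refine ⟨f ⁻¹' U ∩ V, Set.univ, (hU.preimage hf).inter hV, isOpen_univ, ⟨hxU, hyV⟩,
      trivial, Or.inl fun m hm hm' => Set.disjoint_left.1 hd hm.1 hm'.2⟩

theorem shrink_finite {G : Type*} {act : G → M → M} [T2Space M] (hc : ∀ g, Continuous (act g)) {x y : M} (hxy : x ≠ y)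
    {F : Set G} (hF : F.Finite) : ∃ A B : Set M, IsOpen A ∧ IsOpen B ∧ x ∈ A ∧ y ∈ B ∧
      ∀ h ∈ F, (∀ m ∈ A, act h m ∉ A) ∨ (∀ m ∈ A, act h m ∉ B) := by
  choose A B hA hB hxA hyB hAB using fun h => shrink_one (hc h) hxy
  refine ⟨⋂ h ∈ F, A h, ⋂ h ∈ F, B h, hF.isOpen_biInter fun h _ => hA h,
    hF.isOpen_biInter fun h _ => hB h, Set.mem_iInter₂.2 fun h _ => hxA h,
    Set.mem_iInter₂.2 fun h _ => hyB h, fun h hh => ?_⟩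
  rcases hAB h with h1 | h1
  · exact Or.inl fun m hm hm' => h1 m (Set.mem_iInter₂.1 hm h hh) (Set.mem_iInter₂.1 hm' h hh)
  · exact Or.inr fun m hm hm' => h1 m (Set.mem_iInter₂.1 hm h hh) (Set.mem_iInter₂.1 hm' h hh)

/-- Small neighbourhoods of the two fixed points and a large power of the given element form
`WallData`: condition (C) at the pairs `(x, x)` and `(y, y)` gives `fin`, and applied to
`(x, y)` and `(y, x)` it gives `four` up to finitely many elements, which are excluded by shrinking. -/
theorem acylHyp_of_dynamics (hact : IsActionByHomeos act) (hCH : CompletelyHausdorff M)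
    (h3 : ∃ a b c : M, a ≠ b ∧ b ≠ c ∧ a ≠ c) (hC : ConditionC act) {g : G}
    (hg : NorthSouth act g) (hG : ¬ VirtuallyCyclic G) : AcylindricallyHyperbolic G := by
  have := t2_of_completelyHausdorff hCH
  obtain ⟨⟨act1, actm⟩, hc⟩ := hact
  let _ : MulAction G M :=
    { smul := act
      one_smul := act1
      mul_smul := actm }
  have hsm : ∀ (g : G) (m : M), g • m = act g m := fun _ _ => rfl
  obtain ⟨x, y, hxy, hfix, hns⟩ := hg
  have gx : g • x = x := (hfix x).2 (Or.inl rfl)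
  have gy : g • y = y := (hfix y).2 (Or.inr rfl)
  have gnx : ∀ n : ℕ, g ^ n • x = x := fun n => by
    induction n with
    | zero => simp
    | succ n ih => rw [pow_succ, mul_smul, gx, ih]
  have gny : ∀ n : ℕ, g ^ n • y = y := fun n => by
    induction n with
    | zero => simp
    | succ n ih => rw [pow_succ, mul_smul, gy, ih]
  obtain ⟨U', V', hU', hV', hxU', hyV', hUV⟩ := hC (x, x) (y, y) rfl rfl (by simp [hxy])
  -- disjoint neighbourhoods `U`, `V` of `x`, `y` with `U × U ⊆ U'` and `V × V ⊆ V'`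
  obtain ⟨U, V, hU, hV, hxU, hyV, hd, hUU, hVV⟩ : ∃ U V : Set M, IsOpen U ∧ IsOpen V ∧ x ∈ U ∧
      y ∈ V ∧ Disjoint U V ∧ (∀ p ∈ U, ∀ q ∈ U, (p, q) ∈ U') ∧
      (∀ p ∈ V, ∀ q ∈ V, (p, q) ∈ V') := by
    obtain ⟨U, V, hU, hV, hxU, hyV, hd⟩ := t2_separation hxy
    obtain ⟨U₁, U₂, a1, a2, a3, a4, a5⟩ := exists_open_prod hU' hxU'
    obtain ⟨V₁, V₂, b1, b2, b3, b4, b5⟩ := exists_open_prod hV' hyV'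
    exact ⟨U ∩ (U₁ ∩ U₂), V ∩ (V₁ ∩ V₂), hU.inter (a1.inter a2), hV.inter (b1.inter b2),
      ⟨hxU, a3, a4⟩, ⟨hyV, b3, b4⟩, hd.mono Set.inter_subset_left Set.inter_subset_left,
      fun p hp q hq => a5 p hp.2.1 q hq.2.2, fun p hp q hq => b5 p hp.2.1 q hq.2.2⟩
  have fin : ∀ p q r s : M, p ≠ q → r ≠ s →
      {h : G | h • p ∈ U ∧ h • q ∈ U ∧ h • r ∈ V ∧ h • s ∈ V}.Finite := by
    intro p q r s hpq hrs
    by_cases e : ((p, q) : M × M) = (r, s)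
    · obtain ⟨rfl, rfl⟩ := Prod.mk.inj e
      convert Set.finite_empty
      rw [Set.eq_empty_iff_forall_notMem]
      exact fun h hh => Set.disjoint_left.1 hd hh.1 hh.2.2.1
    · obtain ⟨A, B, -, -, hA, hB, hfin⟩ := hUV (p, q) (r, s) hpq hrs e
      refine hfin.subset fun h hh => ⟨⟨_, ⟨_, hA, rfl⟩, hUU _ hh.1 _ hh.2.1⟩,
        ⟨_, ⟨_, hB, rfl⟩, hVV _ hh.2.2.1 _ hh.2.2.2⟩⟩
  -- neighbourhoods of `x`, `y` satisfying the condition on four intersections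
  obtain ⟨A, B, hA, hB, hxA, hyB, hF⟩ : ∃ A B : Set M, IsOpen A ∧ IsOpen B ∧ x ∈ A ∧ y ∈ B ∧
      {h : G | (∃ m ∈ A, h • m ∈ U) ∧ (∃ m ∈ A, h • m ∈ V) ∧ (∃ m ∈ B, h • m ∈ U) ∧
        (∃ m ∈ B, h • m ∈ V)}.Finite := by
    obtain ⟨A', B', hA', hB', hx, hy, hfin⟩ := hUV (x, y) (y, x) hxy hxy.symm
      (fun e => hxy (Prod.mk.inj e).1)
    obtain ⟨A₁, B₁, a1, a2, a3, a4, a5⟩ := exists_open_prod hA' hx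
    obtain ⟨B₂, A₂, b1, b2, b3, b4, b5⟩ := exists_open_prod hB' hy
    refine ⟨A₁ ∩ A₂, B₁ ∩ B₂, a1.inter b2, a2.inter b1, ⟨a3, b4⟩, ⟨a4, b3⟩, hfin.subset ?_⟩
    rintro h ⟨⟨m₁, c1, d1⟩, ⟨m₂, c2, d2⟩, ⟨m₃, c3, d3⟩, ⟨m₄, c4, d4⟩⟩
    exact ⟨⟨_, ⟨(m₁, m₃), a5 _ c1.1 _ c3.1, rfl⟩, hUU _ d1 _ d3⟩,
      ⟨_, ⟨(m₄, m₂), b5 _ c4.2 _ c2.2, rfl⟩, hVV _ d4 _ d2⟩⟩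
  obtain ⟨A₁, B₁, hA₁, hB₁, hxA₁, hyB₁, hF₁⟩ := shrink_finite hc hxy hF
  set P := U ∩ (A ∩ A₁) with hP
  set B₀ := V ∩ (B ∩ B₁) with hB₀
  have hPo : IsOpen P := hU.inter (hA.inter hA₁)
  have hBo : IsOpen B₀ := hV.inter (hB.inter hB₁)
  have hxP : x ∈ P := ⟨hxU, hxA, hxA₁⟩
  have hyB₀ : y ∈ B₀ := ⟨hyV, hyB, hyB₁⟩
  have hPB : ∀ m ∈ B₀, m ∉ P := fun m h1 h2 => Set.disjoint_left.1 hd h2.1 h1.1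
  obtain ⟨N, hN⟩ := hns P B₀ hPo hBo hxP hyB₀
  set t := g ^ (N + 1) with ht
  have tP : ∀ m, m ∉ P → t • m ∈ B₀ := fun m hm => hN (N + 1) (by omega) ⟨m, hm, rfl⟩
  have tQ : ∀ m, t⁻¹ • m ∉ P → m ∈ B₀ := fun m hm => by simpa using tP _ hm
  have w : WallData t P x y :=
    { tx := gnx _
      ty := gny _
      hx := hxP
      hy := hPB y hyB₀
      nest := fun m hm => by
        by_contra h
        exact hPB m (tQ m h) hm
      four := by
        intro h m₁ m₂ m₃ m₄ h1 h1' h2 h2' h3 h3' h4 h4'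
        have q2 := tQ _ h2'
        have q3 := tQ _ h3
        have q4 := tQ _ h4
        have q4' := tQ _ h4'
        have hmem := hF₁ h ⟨⟨m₁, h1.2.1, h1'.1⟩, ⟨m₂, h2.2.1, q2.1⟩, ⟨m₃, q3.2.1, h3'.1⟩,
          ⟨m₄, q4.2.1, q4'.1⟩⟩
        rcases hmem with h5 | h5
        · exact h5 m₁ h1.2.2 h1'.2.2
        · exact h5 m₂ h2.2.2 q2.2.2
      esc_x := by
        intro m hm
        obtain ⟨k, hk⟩ := hns {m}ᶜ B₀ isOpen_compl_singleton hBo hm.symm hyB₀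
        refine ⟨k + 1, hPB _ ?_⟩
        rw [ht, ← pow_mul]
        exact hk _ (by nlinarith) ⟨m, by simp, rfl⟩
      esc_y := by
        intro m hm
        obtain ⟨k, hk⟩ := hns P {m}ᶜ hPo isOpen_compl_singleton hxP hm.symm
        refine ⟨k + 1, ?_⟩
        by_contra h
        rw [ht, ← pow_mul] at h
        refine hk ((N + 1) * (k + 1)) (by nlinarith) ⟨_, h, rfl⟩ ?_
        rw [← hsm, smul_inv_smul]
        rfl
      fin := by
        intro p q r s hpq hrs
        exact (fin p q r s hpq hrs).subset fun h hh =>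
          ⟨hh.1.1, hh.2.1.1, (tQ _ hh.2.2.1).1, (tQ _ hh.2.2.2).1⟩
      third := exists_third h3 x y }
  exact w.acylHyp hG

end Dynamics

end AHProof

/-- A non-virtually-cyclic group is acylindrically hyperbolic iff it
admits an action by homeomorphisms on a completely Hausdorff space with at least 3
points satisfying condition (C), with an element having north–south dynamics. -/
theorem statement0 {G : Type*} [Group G] (hG : ¬ VirtuallyCyclic G) :
    AcylindricallyHyperbolic G ↔
      ∃ (M : Type) (_i : TopologicalSpace M) (act : G → M → M),
        IsActionByHomeos act ∧ CompletelyHausdorff M ∧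
        (∃ a b c : M, a ≠ b ∧ b ≠ c ∧ a ≠ c) ∧
        ConditionC act ∧ ∃ g : G, NorthSouth act g := by
  constructor
  · rintro ⟨S, _, act, δ, hδ, hgeo, hhyp, hact, hacyl, e, hne⟩
    exact AHProof.forward hδ hgeo hhyp hact hacyl hne
  · rintro ⟨M, _, act, hact, hCH, h3, hC, g, hg⟩
    exact AHProof.acylHyp_of_dynamics hact hCH h3 hC hg hG
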